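/- There exists ε₀ > 0 such that for every 0 < ε ≤ ε₀ the Milnor map φ : S(0,ε) \ V → S¹ (the unit circle in ℂ) given by φ(x) = f(x)/‖f(x)‖ is a locally trivial fibration. -/

import Mathlib

/-!
The proof follows Milnor: the fibration is trivialized by the flow of a vector field on
the sphere `S(0, ε)` minus `V` along which the phase of `f` turns at unit speed.

*Milnor's lemma.* By Osgood's lemma (`analyticAt_of_differentiableOn`) `f` is analytic near `0`.
The key fact (`milnor_lemma`) is that, for `z` near `0` with `f z ≠ 0`, if `∇f` is a complex multiple
of `z` then the logarithmic radial derivative `Df(z) z / f(z)` has argument in `(-π/4, π/4)`. If this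
failed at points arbitrarily close to `0`, the curve selection lemma would give a real analytic arc
`γ` at `0` along which it fails. With `f (γ t) ~ A t ^ (p + 1)` and `γ t ~ a t ^ (q + 1)`, the
logarithmic radial derivative along `γ` tends to `(p + 1) / (q + 1) > 0`, a contradiction.

*Curve selection.* The curve selection lemma (`curve_selection`) is deduced from local
uniformization along an ultrafilter (`unif_all`): given points tending to `0` along an ultrafilter
and a nonzero real analytic germ, some analytic substitution, through which the points lift to points
still tending to `0`, turns the germ into a monomial times a unit. Once this holds for the product of
the functions whose signs matter, an arc is the image of a half-line in an orthant. Uniformization is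
proved by induction on the dimension and, for a germ of order `d` in the last variable `z`, by
induction on `d`. A Tschirnhaus translation kills the coefficient of `z ^ (d - 1)`, and the remaining
coefficients are uniformized by the inductive hypothesis and made divisible by powers of one
monomial `mon β` (`exists_prep`). Along the ultrafilter either `z = O(mon β)`, and after rescaling `z`
by `mon β` the order drops, since a polynomial without term of degree `d - 1` which is not a pure
power has no root of multiplicity `d`; or `mon β = o(z)`, and blow-up charts (`exists_toric`) turn the
germ into a unit times `z ^ d`. No global resolution of singularities is needed.

*The flow.* Milnor's lemma makes the denominator `den f` positive near `0` off `V`, and the field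
`fld f` is then smooth there, tangent to the spheres (`inner_fld`), and satisfies
`Df (fld) = f (i + r)` with `r` real and `|r| ≤ 1` (`fderiv_fld`, `abs_cone_im_div_den_le`). Hence
`|f|` decreases at most by the factor `e ^ (-8)` in time `8 > 2 π`, so trajectories do not reach `V`
in that time (`exists_milnor_flow`), while the phase of `f` is multiplied by `e ^ (i t)`. Following
the flow back along a branch of the argument trivializes the Milnor map over the circle minus a
point (`isLocTrivFib_of_flow`).
-/

/-- `p : Z → B` is a locally trivial fibration (with some fibre `F`). -/
def IsLocTrivFib {Z B : Type} [TopologicalSpace Z] [TopologicalSpace B] (p : Z → B) : Prop :=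
  ∃ (F : Type) (_ : TopologicalSpace F), Continuous p ∧
    ∀ b : B, ∃ W : Set B, IsOpen W ∧ b ∈ W ∧
      ∃ e : (p ⁻¹' W) ≃ₜ (W × F), ∀ z : (p ⁻¹' W), ((e z).1 : B) = p (z : Z)

namespace Milnor
open Topology Filter Set

/-! ### Division and cancellation of analytic germs -/

section Analytic
variable {E : Type*} [NormedAddCommGroup E] [NormedSpace ℝ E]

/-- Averages of an analytic germ over a bounded family of linear substitutions are analytic: its
power series is integrated term by term. -/
theorem analyticAt_integral_comp {k : E → ℝ} (hk : AnalyticAt ℝ k 0) {T : ℝ → E →L[ℝ] E}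
    (hT : Continuous T) {C : ℝ} (hC : ∀ s ∈ Icc (0 : ℝ) 1, ‖T s‖ ≤ C) :
    AnalyticAt ℝ (fun v => ∫ s in (0 : ℝ)..1, k (T s v)) 0 := by
  obtain ⟨p, r, hp⟩ := hk
  have hC0 : 0 ≤ C := (norm_nonneg _).trans (hC 0 (by simp))
  obtain ⟨r₁, hr₁0, hr₁⟩ := ENNReal.lt_iff_exists_nnreal_btwn.1 hp.r_pos
  have hr₁pos : (0 : ℝ) < r₁ := by exact_mod_cast hr₁0
  set ρ : ℝ := r₁ / (C + 1) with hρ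
  have hρpos : 0 < ρ := by positivity
  have hCρ : C * ρ ≤ r₁ := by
    rw [hρ, mul_div_assoc', div_le_iff₀ (by positivity)]
    nlinarith
  obtain ⟨M, hM0, hM⟩ := p.norm_mul_pow_le_of_lt_radius (hr₁.trans_le hp.r_le)
  have hcont : ∀ n, Continuous fun s => (p n).compContinuousLinearMap (fun _ => T s) := by
    intro n
    have h1 := (ContinuousMultilinearMap.compContinuousLinearMapContinuousMultilinear ℝ
      (fun _ : Fin n => E) (fun _ : Fin n => E) ℝ).cont
    have h2 : Continuous fun s => (fun _ : Fin n => T s) := continuous_pi fun _ => hT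
    exact (h1.comp h2).clm_apply continuous_const
  let Q : FormalMultilinearSeries ℝ E ℝ := fun n =>
    ∫ s in (0 : ℝ)..1, (p n).compContinuousLinearMap (fun _ => T s)
  have hQn : ∀ n, ‖Q n‖ ≤ ‖p n‖ * C ^ n := by
    intro n
    have := intervalIntegral.norm_integral_le_of_norm_le_const (a := (0 : ℝ)) (b := 1)
      (f := fun s => (p n).compContinuousLinearMap (fun _ => T s)) (C := ‖p n‖ * C ^ n) (by
        intro s hs
        refine (ContinuousMultilinearMap.norm_compContinuousLinearMap_le _ _).trans ?_
        rw [uIoc_of_le zero_le_one] at hs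
        simp only [Finset.prod_const, Finset.card_univ, Fintype.card_fin]
        gcongr
        exact hC s ⟨hs.1.le, hs.2⟩)
    simpa using this
  have hQy : ∀ n y, Q n (fun _ => y) = ∫ s in (0 : ℝ)..1, p n (fun _ => T s y) := by
    intro n y
    have := (ContinuousMultilinearMap.apply ℝ (fun _ : Fin n => E) ℝ
      (fun _ => y)).intervalIntegral_comp_comm ((hcont n).intervalIntegrable
        (μ := MeasureTheory.volume) 0 1)
    simpa using this.symm
  refine ⟨Q, ENNReal.ofReal ρ, ?_, by simpa using hρpos, ?_⟩
  · rw [ENNReal.ofReal]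
    refine Q.le_radius_of_bound M fun n => ?_
    rw [Real.coe_toNNReal _ hρpos.le]
    calc ‖Q n‖ * ρ ^ n ≤ ‖p n‖ * C ^ n * ρ ^ n := by gcongr; exact hQn n
      _ = ‖p n‖ * (C * ρ) ^ n := by ring
      _ ≤ ‖p n‖ * r₁ ^ n := by gcongr
      _ ≤ M := hM n
  · intro y hy
    have hy' : ‖y‖ < ρ := by
      simpa [Metric.eball_ofReal] using hy
    simp only [hQy, zero_add]
    have hTy : ∀ s ∈ Icc (0 : ℝ) 1, ‖T s y‖ ≤ C * ‖y‖ := fun s hs =>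
      ((T s).le_opNorm y).trans (by gcongr; exact hC s hs)
    have hCy : C * ‖y‖ < r₁ := by
      rcases hC0.eq_or_lt with h | h
      · rw [← h, zero_mul]; exact hr₁pos
      · exact (mul_lt_mul_of_pos_left hy' h).trans_le hCρ
    refine intervalIntegral.hasSum_integral_of_dominated_convergence
      (fun n _ => ‖p n‖ * (C * ‖y‖) ^ n) ?_ ?_ ?_ ?_ ?_
    · intro n
      have h1 := (p n).cont
      have h2 : Continuous fun s => (fun _ : Fin n => T s y) :=
        continuous_pi fun _ => hT.clm_apply continuous_const
      exact (h1.comp h2).aestronglyMeasurable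
    · intro n
      refine Filter.Eventually.of_forall fun s hs => ?_
      rw [uIoc_of_le zero_le_one] at hs
      refine ((p n).le_opNorm _).trans ?_
      simp only [Finset.prod_const, Finset.card_univ, Fintype.card_fin]
      gcongr
      exact hTy s ⟨hs.1.le, hs.2⟩
    · refine Filter.Eventually.of_forall fun s hs => ?_
      refine p.summable_norm_mul_pow (r := ⟨C * ‖y‖, by positivity⟩) ?_
      refine lt_of_lt_of_le ?_ (hr₁.le.trans hp.r_le)
      exact ENNReal.coe_lt_coe.2 (NNReal.coe_lt_coe.1 hCy)
    · simp
    · refine Filter.Eventually.of_forall fun s hs => ?_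
      rw [uIoc_of_le zero_le_one] at hs
      have := hp.hasSum (y := T s y) (by
        simp only [Metric.mem_eball, edist_zero_right]
        refine lt_of_lt_of_le ?_ hr₁.le
        rw [enorm_eq_nnnorm]
        have := (hTy s ⟨hs.1.le, hs.2⟩).trans_lt hCy
        exact_mod_cast this)
      simpa using this

/-- Division with remainder: `h v - h (v - ℓ v • e)` is `ℓ v` times an analytic germ, namely the
average of the derivative of `h` in the direction `e` along the segment. For `ℓ e = 1` the point
`v - ℓ v • e` is the projection of `v` to the hyperplane `ℓ = 0`, so a germ vanishing on that
hyperplane is a multiple of `ℓ`. -/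
theorem exists_eq_mul_of_vanish {h : E → ℝ} (hh : AnalyticAt ℝ h 0) (ℓ : E →L[ℝ] ℝ) (e : E) :
    ∃ q : E → ℝ, AnalyticAt ℝ q 0 ∧
      ∀ᶠ v in 𝓝 (0 : E), h v = h (v - ℓ v • e) + ℓ v * q v := by
  have hD : AnalyticAt ℝ (fun v => fderiv ℝ h v e) 0 :=
    ((ContinuousLinearMap.apply ℝ ℝ e).analyticAt _).comp hh.fderiv
  let T : ℝ → E →L[ℝ] E := fun s => ContinuousLinearMap.id ℝ E - (1 - s) • ℓ.smulRight e
  have hT : Continuous T := by fun_prop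
  have hTv : ∀ s v, T s v = v - ((1 - s) * ℓ v) • e := by
    intro s v; simp [T, smul_smul]
  obtain ⟨C, hC⟩ := (isCompact_Icc (a := (0 : ℝ)) (b := 1)).exists_bound_of_continuousOn
    hT.continuousOn
  refine ⟨_, analyticAt_integral_comp hD hT hC, ?_⟩
  obtain ⟨ρ, hρ, hball⟩ := Metric.eventually_nhds_iff.1 hh.eventually_analyticAt
  have hC0 : 0 ≤ C := (norm_nonneg _).trans (hC 0 (by simp))
  have : ∀ᶠ v in 𝓝 (0 : E), ‖v‖ < ρ / (C + 1) := by
    have := Metric.ball_mem_nhds (0 : E) (show 0 < ρ / (C + 1) by positivity)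
    filter_upwards [this] with v hv
    simpa using hv
  filter_upwards [this] with v hv
  have hmem : ∀ s ∈ Icc (0 : ℝ) 1, AnalyticAt ℝ h (T s v) := by
    intro s hs
    apply hball
    rw [dist_zero_right]
    calc ‖T s v‖ ≤ C * ‖v‖ := ((T s).le_opNorm v).trans (by gcongr; exact hC s hs)
      _ ≤ (C + 1) * ‖v‖ := by gcongr; linarith
      _ < ρ := by rw [lt_div_iff₀ (by positivity)] at hv; linarith
  have hder : ∀ s ∈ uIcc (0 : ℝ) 1, HasDerivAt (fun s => h (T s v)) (ℓ v * fderiv ℝ h (T s v) e) s := by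
    intro s hs
    rw [uIcc_of_le zero_le_one] at hs
    have h1 := (hmem s hs).differentiableAt.hasFDerivAt
    have h2 : HasDerivAt (fun s => T s v) (ℓ v • e) s := by
      simp only [hTv]
      have : HasDerivAt (fun s : ℝ => (1 - s) * ℓ v) (-ℓ v) s := by
        simpa using ((hasDerivAt_id s).const_sub 1).mul_const (ℓ v)
      simpa using (this.smul_const e).const_sub v
    have h3 := h1.comp_hasDerivAt s h2
    rw [map_smul, smul_eq_mul] at h3
    exact h3
  have hInt := intervalIntegral.integral_eq_sub_of_hasDerivAt hder (by
    refine ContinuousOn.intervalIntegrable ?_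
    intro s hs
    rw [uIcc_of_le zero_le_one] at hs
    have h1 : ContinuousAt (fun v => fderiv ℝ h v e) (T s v) :=
      (((ContinuousLinearMap.apply ℝ ℝ e).analyticAt _).comp (hmem s hs).fderiv).continuousAt
    have h2 : ContinuousAt (fun s => T s v) s := (hT.clm_apply continuous_const).continuousAt
    exact (continuousAt_const.mul (ContinuousAt.comp (f := fun s => T s v) h1 h2)).continuousWithinAt)
  rw [intervalIntegral.integral_const_mul] at hInt
  rw [hInt, hTv, hTv]
  simp

/-- Analytic germs at a point form an integral domain. -/
theorem eventually_zero_of_mul {a b : E → ℝ} (ha : AnalyticAt ℝ a 0) (hb : AnalyticAt ℝ b 0)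
    (hab : ∀ᶠ v in 𝓝 (0 : E), a v * b v = 0) :
    (∀ᶠ v in 𝓝 (0 : E), a v = 0) ∨ ∀ᶠ v in 𝓝 (0 : E), b v = 0 := by
  by_contra hcon
  obtain ⟨h1, h2⟩ := not_or.1 hcon
  obtain ⟨ρ, hρ, hball⟩ := Metric.eventually_nhds_iff_ball.1
    (ha.eventually_analyticAt.and (hb.eventually_analyticAt.and hab))
  have hex : ∃ w ∈ Metric.ball (0 : E) ρ, a w ≠ 0 := by
    by_contra hc
    push Not at hc
    exact h1 (Metric.eventually_nhds_iff_ball.2 ⟨ρ, hρ, hc⟩)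
  obtain ⟨w, hw, haw⟩ := hex
  have hev : ∀ᶠ v in 𝓝 w, b v = 0 := by
    have hne := (hball w hw).1.continuousAt.eventually_ne haw
    filter_upwards [hne, Metric.isOpen_ball.mem_nhds hw] with v hv hvb
    exact (mul_eq_zero.1 (hball v hvb).2.2).resolve_left hv
  have hb0 : AnalyticOnNhd ℝ b (Metric.ball 0 ρ) := fun v hv => (hball v hv).2.1
  have := hb0.eqOn_of_preconnected_of_eventuallyEq (g := fun _ => 0)
    (fun v _ => analyticAt_const) (convex_ball _ _).isPreconnected hw hev
  exact h2 (Metric.eventually_nhds_iff_ball.2 ⟨ρ, hρ, fun v hv => this hv⟩)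

end Analytic
end Milnor

namespace Milnor
open Topology Filter Set

/-! ### Monomials and normal crossings -/

/-- The monomial `x ^ α` on `ℝ ^ m`. -/
def mon {m : ℕ} (α : Fin m → ℕ) (x : Fin m → ℝ) : ℝ := ∏ i, x i ^ α i

/-- `h` has normal crossings at `0`: it is a monomial times a unit. -/
def NC {m : ℕ} (h : (Fin m → ℝ) → ℝ) : Prop :=
  ∃ (α : Fin m → ℕ) (u : (Fin m → ℝ) → ℝ), AnalyticAt ℝ u 0 ∧ u 0 ≠ 0 ∧
    ∀ᶠ x in 𝓝 (0 : Fin m → ℝ), h x = mon α x * u x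

section mon
variable {m : ℕ}

theorem analyticAt_coord (i : Fin m) (x : Fin m → ℝ) : AnalyticAt ℝ (fun x : Fin m → ℝ => x i) x :=
  (ContinuousLinearMap.proj (R := ℝ) (φ := fun _ : Fin m => ℝ) i).analyticAt x

theorem analyticAt_mon (α : Fin m → ℕ) (x : Fin m → ℝ) : AnalyticAt ℝ (mon α) x := by
  unfold mon
  exact Finset.analyticAt_fun_prod _ fun i _ => (analyticAt_coord i x).pow _

theorem mon_zero (x : Fin m → ℝ) : mon 0 x = 1 := by simp [mon]

theorem mon_add (α β : Fin m → ℕ) (x : Fin m → ℝ) : mon (α + β) x = mon α x * mon β x := by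
  simp [mon, pow_add, Finset.prod_mul_distrib]

theorem mon_smul (k : ℕ) (α : Fin m → ℕ) (x : Fin m → ℝ) : mon (k • α) x = mon α x ^ k := by
  simp [mon, mul_comm k, pow_mul, Finset.prod_pow]

theorem mon_single (j : Fin m) (x : Fin m → ℝ) : mon (Pi.single j 1) x = x j := by
  unfold mon
  rw [Finset.prod_eq_single j]
  · simp
  · intro b _ hb; simp [Pi.single_eq_of_ne hb]
  · simp

theorem mon_at_zero {α : Fin m → ℕ} (hα : α ≠ 0) : mon α 0 = 0 := by
  obtain ⟨j, hj⟩ := Function.ne_iff.1 hα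
  exact Finset.prod_eq_zero (Finset.mem_univ j) (by simpa using hj)

theorem exists_single_add {α : Fin m → ℕ} {j : Fin m} (hj : α j ≠ 0) :
    ∃ α' : Fin m → ℕ, α = Pi.single j 1 + α' := by
  refine ⟨α - Pi.single j 1, ?_⟩
  have : Pi.single j 1 ≤ α := by
    intro i
    by_cases h : i = j
    · subst h; simp; omega
    · simp [Pi.single_eq_of_ne h]
  exact (add_tsub_cancel_of_le this).symm

theorem not_eventually_coord_zero (j : Fin m) : ¬ ∀ᶠ x in 𝓝 (0 : Fin m → ℝ), x j = 0 := by
  intro h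
  have ht : Tendsto (fun t : ℝ => (fun _ : Fin m => t)) (𝓝 0) (𝓝 (0 : Fin m → ℝ)) := by
    have : Continuous (fun t : ℝ => (fun _ : Fin m => t)) := by fun_prop
    simpa [Pi.zero_def] using this.tendsto 0
  have h1 : ∀ᶠ t : ℝ in 𝓝[≠] 0, t = 0 := (ht.eventually h).filter_mono nhdsWithin_le_nhds
  have h2 : ∀ᶠ t : ℝ in 𝓝[≠] 0, t ≠ 0 := eventually_mem_nhdsWithin
  obtain ⟨t, h1, h2⟩ := (h1.and h2).exists
  exact h2 h1

theorem eventually_cancel {E : Type*} [NormedAddCommGroup E] [NormedSpace ℝ E]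
    {c a b : E → ℝ} (hc : AnalyticAt ℝ c 0) (ha : AnalyticAt ℝ a 0) (hb : AnalyticAt ℝ b 0)
    (hc0 : ¬ ∀ᶠ x in 𝓝 (0 : E), c x = 0) (h : ∀ᶠ x in 𝓝 (0 : E), c x * a x = c x * b x) :
    ∀ᶠ x in 𝓝 (0 : E), a x = b x := by
  have := eventually_zero_of_mul hc (ha.sub hb) (by
    filter_upwards [h] with x hx; simp [mul_sub, hx])
  filter_upwards [this.resolve_left hc0] with x hx
  simpa [sub_eq_zero] using hx

theorem not_eventually_mul_zero {E : Type*} [NormedAddCommGroup E] [NormedSpace ℝ E]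
    {a b : E → ℝ} (ha : AnalyticAt ℝ a 0) (hb : AnalyticAt ℝ b 0)
    (ha0 : ¬ ∀ᶠ x in 𝓝 (0 : E), a x = 0) (hb0 : ¬ ∀ᶠ x in 𝓝 (0 : E), b x = 0) :
    ¬ ∀ᶠ x in 𝓝 (0 : E), a x * b x = 0 := fun h =>
  (eventually_zero_of_mul ha hb h).elim ha0 hb0

theorem not_eventually_zero_of_ne {E : Type*} [TopologicalSpace E] {u : E → ℝ} {x₀ : E}
    (h : u x₀ ≠ 0) : ¬ ∀ᶠ x in 𝓝 x₀, u x = 0 := fun h' => h h'.self_of_nhds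

theorem not_eventually_prod_zero {E ι : Type*} [NormedAddCommGroup E] [NormedSpace ℝ E]
    (s : Finset ι) {a : ι → E → ℝ} (ha : ∀ i ∈ s, AnalyticAt ℝ (a i) 0)
    (ha0 : ∀ i ∈ s, ¬ ∀ᶠ x in 𝓝 (0 : E), a i x = 0) :
    ¬ ∀ᶠ x in 𝓝 (0 : E), ∏ i ∈ s, a i x = 0 := by
  classical
  induction s using Finset.induction_on with
  | empty => exact not_eventually_zero_of_ne (by simp)
  | insert i s hi ih =>
    simp only [Finset.prod_insert hi]
    refine not_eventually_mul_zero (ha i (by simp))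
      (Finset.analyticAt_fun_prod _ fun j hj => ha j (by simp [hj])) (ha0 i (by simp)) ?_
    exact ih (fun j hj => ha j (by simp [hj])) (fun j hj => ha0 j (by simp [hj]))

theorem not_eventually_mon_zero (α : Fin m → ℕ) : ¬ ∀ᶠ x in 𝓝 (0 : Fin m → ℝ), mon α x = 0 := by
  refine not_eventually_prod_zero _ (fun i _ => (analyticAt_coord i 0).pow _) fun i _ h => ?_
  refine not_eventually_coord_zero i ?_
  filter_upwards [h] with x hx
  exact by_contra fun hne => pow_ne_zero _ hne hx

theorem NC.analyticAt_of {h : (Fin m → ℝ) → ℝ} (hh : NC h) : AnalyticAt ℝ h 0 := by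
  obtain ⟨α, u, hu, -, he⟩ := hh
  exact ((analyticAt_mon α 0).mul hu).congr (by filter_upwards [he] with x hx; simp [hx])

theorem NC.mul {g h : (Fin m → ℝ) → ℝ} (hg : NC g) (hh : NC h) : NC (fun x => g x * h x) := by
  obtain ⟨α, u, hu, hu0, he⟩ := hg
  obtain ⟨β, v, hv, hv0, he'⟩ := hh
  refine ⟨α + β, fun x => u x * v x, hu.mul hv, mul_ne_zero hu0 hv0, ?_⟩
  filter_upwards [he, he'] with x h1 h2
  rw [h1, h2, mon_add]; ring

theorem NC.congr {g h : (Fin m → ℝ) → ℝ} (hg : NC g) (h' : ∀ᶠ x in 𝓝 0, h x = g x) : NC h := by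
  obtain ⟨α, u, hu, hu0, he⟩ := hg
  refine ⟨α, u, hu, hu0, ?_⟩
  filter_upwards [he, h'] with x h1 h2
  rw [h2, h1]

/-- Factors of a normal crossings germ have normal crossings: each coordinate dividing the product
divides one of the two factors. -/
theorem NC.of_mul_aux (N : ℕ) : ∀ (α : Fin m → ℕ), ∑ i, α i = N → ∀ a b u : (Fin m → ℝ) → ℝ,
    AnalyticAt ℝ a 0 → AnalyticAt ℝ b 0 → AnalyticAt ℝ u 0 → u 0 ≠ 0 →
    (∀ᶠ x in 𝓝 0, a x * b x = mon α x * u x) → NC a := by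
  induction N with
  | zero =>
    intro α hα a b u ha hb hu hu0 h
    have hα0 : α = 0 := by
      funext i; simpa using (Finset.sum_eq_zero_iff.1 hα) i (Finset.mem_univ i)
    subst hα0
    refine ⟨0, a, ha, ?_, Eventually.of_forall fun x => by simp [mon_zero]⟩
    intro h0
    have := h.self_of_nhds
    simp [mon_zero, h0] at this
    exact hu0 this.symm
  | succ N ih =>
    intro α hα a b u ha hb hu hu0 h
    obtain ⟨j, -, hj⟩ : ∃ j ∈ Finset.univ, α j ≠ 0 := by
      by_contra hc
      push Not at hc
      rw [Finset.sum_eq_zero hc] at hα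
      omega
    obtain ⟨α', rfl⟩ := exists_single_add hj
    have hα' : ∑ i, α' i = N := by
      simp [Finset.sum_add_distrib] at hα; omega
    let ℓ := ContinuousLinearMap.proj (R := ℝ) (φ := fun _ : Fin m => ℝ) j
    let P : (Fin m → ℝ) → (Fin m → ℝ) := fun v => v - ℓ v • Pi.single j (1 : ℝ)
    have hPa : ∀ v, AnalyticAt ℝ P v := fun v =>
      analyticAt_id.sub ((ℓ.analyticAt v).smul analyticAt_const)
    have hP0 : P 0 = 0 := by simp [P]
    have hPt : Tendsto P (𝓝 0) (𝓝 0) := by simpa [hP0] using (hPa 0).continuousAt.tendsto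
    have hPj : ∀ v, P v j = 0 := fun v => by simp [P, ℓ]
    have hprod : ∀ᶠ v in 𝓝 (0 : Fin m → ℝ), a (P v) * b (P v) = 0 := by
      filter_upwards [hPt.eventually h] with v hv
      rw [hv, mon_add, mon_single, hPj]; simp
    have key : ∀ c d : (Fin m → ℝ) → ℝ, AnalyticAt ℝ c 0 → AnalyticAt ℝ d 0 →
        (∀ᶠ x in 𝓝 0, c x * d x = mon (Pi.single j 1 + α') x * u x) →
        (∀ᶠ v in 𝓝 (0 : Fin m → ℝ), c (P v) = 0) →
        ∃ q, AnalyticAt ℝ q 0 ∧ (∀ᶠ x in 𝓝 0, c x = x j * q x) ∧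
          ∀ᶠ x in 𝓝 0, q x * d x = mon α' x * u x := by
      intro c d hc hd hcd h0
      obtain ⟨q, hq, hcq⟩ := exists_eq_mul_of_vanish hc ℓ (Pi.single j (1 : ℝ))
      have hcq' : ∀ᶠ x in 𝓝 0, c x = x j * q x := by
        filter_upwards [hcq, h0] with v h1 h2
        rw [h1]; change c (P v) + _ = _; rw [h2, zero_add]; rfl
      refine ⟨q, hq, hcq', ?_⟩
      refine eventually_cancel (analyticAt_coord j 0) (hq.mul hd)
        ((analyticAt_mon α' 0).mul hu) (not_eventually_coord_zero j) ?_
      filter_upwards [hcq', hcd] with x h1 h2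
      rw [h1, mon_add, mon_single] at h2
      linarith
    have haP : AnalyticAt ℝ (fun v => a (P v)) 0 :=
      AnalyticAt.fun_comp (by rwa [hP0]) (hPa 0)
    have hbP : AnalyticAt ℝ (fun v => b (P v)) 0 :=
      AnalyticAt.fun_comp (by rwa [hP0]) (hPa 0)
    rcases eventually_zero_of_mul haP hbP hprod with h0 | h0
    · obtain ⟨q, hq, h1, h2⟩ := key a b ha hb h h0
      have := ih α' hα' q b u hq hb hu hu0 h2
      refine NC.congr (NC.mul ?_ this) h1
      exact ⟨Pi.single j 1, fun _ => 1, analyticAt_const, one_ne_zero,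
        Eventually.of_forall fun x => by simp [mon_single]⟩
    · obtain ⟨q, hq, h1, h2⟩ := key b a hb ha (by
        filter_upwards [h] with x hx; rw [mul_comm, hx]) h0
      refine ih α' hα' a q u ha hq hu hu0 ?_
      filter_upwards [h2] with x hx; rw [mul_comm, hx]

/-- Any factor of a normal crossings germ has normal crossings. -/
theorem NC.of_mul {a b : (Fin m → ℝ) → ℝ} (ha : AnalyticAt ℝ a 0) (hb : AnalyticAt ℝ b 0)
    (h : NC fun x => a x * b x) : NC a := by
  obtain ⟨α, u, hu, hu0, he⟩ := h
  exact NC.of_mul_aux _ α rfl a b u ha hb hu hu0 he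

theorem NC.of_prod {ι : Type*} (s : Finset ι) {a : ι → (Fin m → ℝ) → ℝ}
    (ha : ∀ i ∈ s, AnalyticAt ℝ (a i) 0) (h : NC fun x => ∏ i ∈ s, a i x) {i : ι} (hi : i ∈ s) :
    NC (a i) := by
  classical
  refine NC.of_mul (b := fun x => ∏ j ∈ s.erase i, a j x) (ha i hi)
    (Finset.analyticAt_fun_prod _ fun j hj => ha j (Finset.mem_of_mem_erase hj)) ?_
  have : (fun x => a i x * ∏ j ∈ s.erase i, a j x) = fun x => ∏ i ∈ s, a i x := by
    funext x
    exact Finset.mul_prod_erase s (fun j => a j x) hi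
  rwa [this]

/-- The order of vanishing at `0⁺` of a power of `t` times a unit is well defined. -/
theorem pow_order_unique {p q : ℕ} {c d : ℝ → ℝ} {c₀ d₀ : ℝ} (hc : Tendsto c (𝓝[>] 0) (𝓝 c₀))
    (hd : Tendsto d (𝓝[>] 0) (𝓝 d₀)) (hc0 : c₀ ≠ 0) (hd0 : d₀ ≠ 0)
    (h : ∀ᶠ t in 𝓝[>] (0 : ℝ), t ^ p * c t = t ^ q * d t) : p = q := by
  have key : ∀ {p q : ℕ} {c d : ℝ → ℝ} {c₀ d₀ : ℝ}, Tendsto c (𝓝[>] 0) (𝓝 c₀) →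
      Tendsto d (𝓝[>] 0) (𝓝 d₀) → c₀ ≠ 0 →
      (∀ᶠ t in 𝓝[>] (0 : ℝ), t ^ p * c t = t ^ q * d t) → ¬ p < q := by
    intro p q c d c₀ d₀ hc hd hc0 h hpq
    have h1 : ∀ᶠ t in 𝓝[>] (0 : ℝ), t ^ (q - p) * d t = c t := by
      filter_upwards [h, self_mem_nhdsWithin] with t ht htp
      have : (t : ℝ) ^ p ≠ 0 := pow_ne_zero _ (ne_of_gt htp)
      apply mul_left_cancel₀ this
      rw [ht, ← mul_assoc, ← pow_add]; congr 2; omega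
    have h2 : Tendsto (fun t : ℝ => t ^ (q - p)) (𝓝[>] 0) (𝓝 0) := by
      have := (continuous_pow (M := ℝ) (q - p)).tendsto 0
      rw [zero_pow (by omega)] at this
      exact this.mono_left nhdsWithin_le_nhds
    have h3 := (h2.mul hd).congr' h1
    rw [zero_mul] at h3
    exact hc0 (tendsto_nhds_unique hc h3)
  have h1 := key hc hd hc0 h
  have h2 := key hd hc hd0 (h.mono fun t ht => ht.symm)
  omega

/-- If the difference of two germs `monomial * unit` vanishes identically or has normal crossings,
the two exponents are comparable. This is tested on the curves `t ↦ (t ^ k₁, …, t ^ kₘ)`: when the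
weights `k · α` and `k · β` differ, the exponent `γ` of the difference has the smaller one as weight. -/
theorem NC.comparable {α β : Fin m → ℕ} {u v : (Fin m → ℝ) → ℝ} (hu : AnalyticAt ℝ u 0)
    (hv : AnalyticAt ℝ v 0) (hu0 : u 0 ≠ 0) (hv0 : v 0 ≠ 0)
    (h : (∀ᶠ x in 𝓝 (0 : Fin m → ℝ), mon α x * u x - mon β x * v x = 0) ∨
      NC fun x => mon α x * u x - mon β x * v x) : α ≤ β ∨ β ≤ α := by
  let dot : (Fin m → ℕ) → (Fin m → ℕ) → ℕ := fun k α => ∑ i, k i * α i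
  let cv : (Fin m → ℕ) → ℝ → (Fin m → ℝ) := fun k t i => t ^ k i
  have hmon : ∀ k α t, mon α (cv k t) = t ^ dot k α := by
    intro k α t
    simp [mon, cv, dot, ← pow_mul, Finset.prod_pow_eq_pow_sum]
  have hcv : ∀ k : Fin m → ℕ, (∀ i, 0 < k i) → Tendsto (cv k) (𝓝[>] 0) (𝓝 0) := by
    intro k hk
    have : Continuous (cv k) := by fun_prop
    have h0 : cv k 0 = 0 := by funext i; simp [cv, (hk i).ne']
    have := this.tendsto 0
    rw [h0] at this
    exact this.mono_left nhdsWithin_le_nhds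
  have hlim : ∀ k : Fin m → ℕ, (∀ i, 0 < k i) → ∀ w : (Fin m → ℝ) → ℝ, AnalyticAt ℝ w 0 →
      Tendsto (fun t => w (cv k t)) (𝓝[>] 0) (𝓝 (w 0)) := fun k hk w hw =>
    hw.continuousAt.tendsto.comp (hcv k hk)
  have hdot : ∀ k k' α, dot (k + k') α = dot k α + dot k' α := by
    intro k k' α; simp [dot, add_mul, Finset.sum_add_distrib]
  have hdots : ∀ l α, dot (Pi.single l 1) α = α l := by
    intro l α; simp [dot, Pi.single_apply]
  rcases h with h | ⟨γ, w, hw, hw0, h⟩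
  · left
    have hd : ∀ k : Fin m → ℕ, (∀ i, 0 < k i) → dot k α = dot k β := by
      intro k hk
      refine pow_order_unique (hlim k hk u hu) (hlim k hk v hv) hu0 hv0 ?_
      filter_upwards [(hcv k hk).eventually h] with t ht
      rw [hmon, hmon] at ht; linarith
    intro i
    have h1 := hd (fun _ => 1) (fun _ => one_pos)
    have h2 := hd ((fun _ => 1) + Pi.single i 1) (fun j => by simp)
    rw [hdot, hdot, hdots, hdots, h1] at h2
    change α i ≤ β i
    omega
  · by_contra hcon
    obtain ⟨hc1, hc2⟩ := not_or.1 hcon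
    simp only [Pi.le_def, not_forall, not_le] at hc1 hc2
    obtain ⟨j, hj⟩ := hc1
    obtain ⟨i, hi⟩ := hc2
    -- the difference has the exponent of whichever of the two monomials has the smaller weight
    have key : ∀ (α β : Fin m → ℕ) (u v w : (Fin m → ℝ) → ℝ), AnalyticAt ℝ u 0 → AnalyticAt ℝ v 0 →
        AnalyticAt ℝ w 0 → u 0 ≠ 0 → w 0 ≠ 0 →
        (∀ᶠ x in 𝓝 (0 : Fin m → ℝ), mon α x * u x - mon β x * v x = mon γ x * w x) →
        (∃ i, α i < β i) → γ = α := by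
      intro α β u v w hu hv hw hu0 hw0 h ⟨i, hi⟩
      have hd : ∀ k : Fin m → ℕ, (∀ i, 0 < k i) → dot k α < dot k β → dot k γ = dot k α := by
        intro k hk hlt
        have hz : Tendsto (fun t : ℝ => t ^ (dot k β - dot k α)) (𝓝[>] 0) (𝓝 0) := by
          have := (continuous_pow (M := ℝ) (dot k β - dot k α)).tendsto 0
          rw [zero_pow (by omega)] at this
          exact this.mono_left nhdsWithin_le_nhds
        have hl := (hlim k hk u hu).sub (hz.mul (hlim k hk v hv))
        rw [zero_mul, sub_zero] at hl
        refine pow_order_unique (hlim k hk w hw) hl hw0 hu0 ?_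
        filter_upwards [(hcv k hk).eventually h] with t ht
        rw [hmon, hmon, hmon] at ht
        have : t ^ dot k β = t ^ dot k α * t ^ (dot k β - dot k α) := by
          rw [← pow_add]; congr 1; omega
        rw [← ht, this]; ring
      have hdots' : ∀ M α, dot (Pi.single i M) α = M * α i := by
        intro M α; simp [dot, Pi.single_apply]
      funext l
      set M := dot (fun _ => 1) α + α l with hM
      have hMi : M * α i + M ≤ M * β i := by nlinarith
      have h1 := hd ((fun _ => 1) + Pi.single i (M + 1)) (fun j => by simp) (by
        rw [hdot, hdot, hdots', hdots']; nlinarith)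
      have h2 := hd ((fun _ => 1) + Pi.single i (M + 1) + Pi.single l 1) (fun j => by simp) (by
        rw [hdot, hdot, hdot, hdot, hdots', hdots', hdots, hdots]; nlinarith)
      rw [hdot, hdot _ _ α, h1, hdots, hdots] at h2
      omega
    have e1 := key α β u v w hu hv hw hu0 hw0 h ⟨i, hi⟩
    have e2 := key β α v u (fun x => - w x) hv hu hw.neg hv0 (by simpa using hw0) (by
      filter_upwards [h] with x hx; linarith) ⟨j, hj⟩
    rw [← e1, ← e2] at hi
    exact lt_irrefl _ hi

end mon
end Milnor

namespace Milnor
open Topology Filter Set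

/-! ### Lifting points along an ultrafilter, and preparation of coefficients -/

section unif
variable {K : Type*} {m : ℕ}

/-- The points `p k` lift along the germ of analytic map `π` to the points `q k`, which still tend
to `0` along the ultrafilter `𝒰`. -/
structure Rel (𝒰 : Ultrafilter K) {E F : Type*} [NormedAddCommGroup E] [NormedSpace ℝ E]
    [NormedAddCommGroup F] [NormedSpace ℝ F] (p : K → F) (π : E → F) (q : K → E) : Prop where
  an : AnalyticAt ℝ π 0
  zero : π 0 = 0
  tend : Tendsto q 𝒰 (𝓝 0)
  ev : ∀ᶠ k in (𝒰 : Filter K), π (q k) = p k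

namespace Rel
variable {𝒰 : Ultrafilter K} {E F G : Type*} [NormedAddCommGroup E] [NormedSpace ℝ E]
    [NormedAddCommGroup F] [NormedSpace ℝ F] [NormedAddCommGroup G] [NormedSpace ℝ G]

theorem tendsto_map {p : K → F} {π : E → F} {q : K → E} (h : Rel 𝒰 p π q) :
    Tendsto π (𝓝 0) (𝓝 0) := by
  have := h.an.continuousAt.tendsto
  rwa [h.zero] at this

theorem refl {p : K → F} (hp : Tendsto p 𝒰 (𝓝 0)) : Rel 𝒰 p (fun x => x) p :=
  ⟨analyticAt_id, rfl, hp, Eventually.of_forall fun _ => rfl⟩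

theorem trans {p : K → F} {π : E → F} {q : K → E} {π' : G → E} {q' : K → G} (h : Rel 𝒰 p π q)
    (h' : Rel 𝒰 q π' q') : Rel 𝒰 p (fun y => π (π' y)) q' where
  an := AnalyticAt.fun_comp (by rw [h'.zero]; exact h.an) h'.an
  zero := by rw [h'.zero, h.zero]
  tend := h'.tend
  ev := by
    filter_upwards [h.ev, h'.ev] with k h1 h2
    rw [h2, h1]

theorem comp_analyticAt {p : K → F} {π : E → F} {q : K → E} (h : Rel 𝒰 p π q)
    {g : F → G} (hg : AnalyticAt ℝ g 0) : AnalyticAt ℝ (fun y => g (π y)) 0 :=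
  AnalyticAt.fun_comp (by rwa [h.zero]) h.an

theorem prodMap {p : K → F × ℝ} {π : E → F} {q : K → E} (h : Rel 𝒰 (fun k => (p k).1) π q)
    (hp : Tendsto p 𝒰 (𝓝 0)) :
    Rel 𝒰 p (fun y : E × ℝ => (π y.1, y.2)) (fun k => (q k, (p k).2)) where
  an := (AnalyticAt.fun_comp (f := fun y : E × ℝ => y.1) (by simpa using h.an)
    analyticAt_fst).prod analyticAt_snd
  zero := by simp [h.zero]
  tend := h.tend.prodMk_nhds ((continuous_snd.tendsto 0).comp hp)
  ev := by
    filter_upwards [h.ev] with k hk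
    rw [hk]

end Rel

theorem exists_tendsto_of_bounded (𝒰 : Ultrafilter K) {r : K → ℝ} {C : ℝ}
    (h : ∀ᶠ k in (𝒰 : Filter K), |r k| ≤ C) : ∃ c, Tendsto r 𝒰 (𝓝 c) := by
  have hc := isCompact_iff_ultrafilter_le_nhds.1 (isCompact_Icc (a := -C) (b := C)) (𝒰.map r) (by
    rw [le_principal_iff]
    change r ⁻¹' Icc (-C) C ∈ (𝒰 : Filter K)
    filter_upwards [h] with k hk
    exact abs_le.1 hk)
  obtain ⟨c, -, hc⟩ := hc
  exact ⟨c, hc⟩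

/-- Local uniformization on `ℝ ^ m` along `𝒰`: a nonzero analytic germ acquires normal crossings
after an analytic substitution through which the given points lift. -/
def Unif (𝒰 : Ultrafilter K) (m : ℕ) : Prop :=
  ∀ p : K → Fin m → ℝ, Tendsto p 𝒰 (𝓝 0) → ∀ h : (Fin m → ℝ) → ℝ, AnalyticAt ℝ h 0 →
    (¬ ∀ᶠ x in 𝓝 (0 : Fin m → ℝ), h x = 0) →
    ∃ (π : (Fin m → ℝ) → Fin m → ℝ) (q : K → Fin m → ℝ), Rel 𝒰 p π q ∧ NC fun y => h (π y)

/-- Extraction of `N`-th roots of the coordinates of the points. -/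
theorem exists_ramify (𝒰 : Ultrafilter K) {p : K → Fin m → ℝ} (hp : Tendsto p 𝒰 (𝓝 0))
    {N : ℕ} (hN : N ≠ 0) :
    ∃ (σ : Fin m → ℝ) (q : K → Fin m → ℝ), (∀ i, σ i ≠ 0) ∧
      Rel 𝒰 p (fun y i => σ i * y i ^ N) q := by
  have hs : ∀ i, ∃ s : ℝ, s ≠ 0 ∧ ∀ᶠ k in (𝒰 : Filter K), p k i = s * |p k i| := by
    intro i
    rcases 𝒰.em (fun k => 0 ≤ p k i) with h | h
    · exact ⟨1, one_ne_zero, h.mono fun k hk => by rw [abs_of_nonneg hk, one_mul]⟩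
    · refine ⟨-1, by norm_num, h.mono fun k hk => ?_⟩
      rw [abs_of_neg (not_le.1 hk)]; ring
  choose σ hσ hσp using hs
  refine ⟨σ, fun k i => |p k i| ^ (1 / (N : ℝ)), hσ, ?_, ?_, ?_, ?_⟩
  · exact analyticAt_pi_iff.2 fun i => analyticAt_const.mul ((analyticAt_coord i 0).pow N)
  · funext i; simp [hN]
  · rw [tendsto_pi_nhds] at hp ⊢
    intro i
    have h1 : Continuous fun x : ℝ => |x| ^ (1 / (N : ℝ)) :=
      continuous_abs.rpow_const fun x => Or.inr (by positivity)
    have h2 := (h1.tendsto 0).comp (hp i)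
    have h3 : |(0 : ℝ)| ^ (1 / (N : ℝ)) = 0 := by
      rw [abs_zero, Real.zero_rpow (by positivity)]
    rw [h3] at h2
    exact h2
  · filter_upwards [eventually_all.2 hσp] with k hk
    funext i
    rw [one_div, Real.rpow_inv_natCast_pow (abs_nonneg _) hN]
    exact (hk i).symm

theorem mon_ramify {σ : Fin m → ℝ} (N : ℕ) (α : Fin m → ℕ) (y : Fin m → ℝ) :
    mon α (fun i => σ i * y i ^ N) = mon α σ * mon (N • α) y := by
  simp only [mon, mul_pow, Finset.prod_mul_distrib, Pi.smul_apply, smul_eq_mul, ← pow_mul]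

theorem NC.comp_ramify {σ : Fin m → ℝ} {N : ℕ} (hN : N ≠ 0) (hσ : ∀ i, σ i ≠ 0)
    {α : Fin m → ℕ} {u h : (Fin m → ℝ) → ℝ} (hu : AnalyticAt ℝ u 0) (hu0 : u 0 ≠ 0)
    (he : ∀ᶠ x in 𝓝 0, h x = mon α x * u x) :
    ∃ v : (Fin m → ℝ) → ℝ, AnalyticAt ℝ v 0 ∧ v 0 ≠ 0 ∧
      ∀ᶠ y in 𝓝 (0 : Fin m → ℝ), h (fun i => σ i * y i ^ N) = mon (N • α) y * v y := by
  have han : AnalyticAt ℝ (fun (y : Fin m → ℝ) i => σ i * y i ^ N) 0 :=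
    analyticAt_pi_iff.2 fun i => analyticAt_const.mul ((analyticAt_coord i 0).pow N)
  have h0 : (fun i => σ i * (0 : Fin m → ℝ) i ^ N) = 0 := by funext i; simp [hN]
  have ht : Tendsto (fun (y : Fin m → ℝ) i => σ i * y i ^ N) (𝓝 0) (𝓝 0) := by
    have := han.continuousAt.tendsto
    rwa [h0] at this
  refine ⟨fun y => mon α σ * u (fun i => σ i * y i ^ N),
    analyticAt_const.mul (AnalyticAt.fun_comp (by rwa [h0]) han), ?_, ?_⟩
  · dsimp only
    rw [h0]
    exact mul_ne_zero (Finset.prod_ne_zero_iff.2 fun i _ => pow_ne_zero _ (hσ i)) hu0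
  · filter_upwards [ht.eventually he] with y hy
    rw [hy, mon_ramify]; ring

/-- Simultaneous preparation of the coefficients `a i` (of weight `d - i`): after a substitution,
`a i` is divisible by the monomial `mon β ^ (d - i)`, sharply so for at least one `i`. -/
theorem exists_prep {𝒰 : Ultrafilter K} (hU : Unif 𝒰 m) {p : K → Fin m → ℝ}
    (hp : Tendsto p 𝒰 (𝓝 0)) (d : ℕ) (a : ℕ → (Fin m → ℝ) → ℝ)
    (ha : ∀ i < d, AnalyticAt ℝ (a i) 0) (ha0 : ∀ i < d, a i 0 = 0)
    (hne : ∃ i < d, ¬ ∀ᶠ x in 𝓝 (0 : Fin m → ℝ), a i x = 0)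
    {b : (Fin m → ℝ) → ℝ} (hb : AnalyticAt ℝ b 0) (hb0 : ¬ ∀ᶠ x in 𝓝 (0 : Fin m → ℝ), b x = 0) :
    ∃ (π : (Fin m → ℝ) → Fin m → ℝ) (q : K → Fin m → ℝ) (β : Fin m → ℕ)
      (a' : ℕ → (Fin m → ℝ) → ℝ), Rel 𝒰 p π q ∧ NC (fun y => b (π y)) ∧ β ≠ 0 ∧
      (∀ i < d, AnalyticAt ℝ (a' i) 0) ∧
      (∀ i < d, ∀ᶠ y in 𝓝 (0 : Fin m → ℝ), a i (π y) = mon β y ^ (d - i) * a' i y) ∧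
      (∃ i < d, a' i 0 ≠ 0) ∧
      (∀ i < d, (∀ᶠ x in 𝓝 (0 : Fin m → ℝ), a i x = 0) → a' i 0 = 0) := by
  classical
  set N := d.factorial with hNdef
  have hN : N ≠ 0 := Nat.factorial_ne_zero d
  have hdvd : ∀ i < d, (d - i) * (N / (d - i)) = N := fun i hi =>
    Nat.mul_div_cancel' (Nat.dvd_factorial (by omega) (by omega))
  let I : Finset ℕ := (Finset.range d).filter fun i => ¬ ∀ᶠ x in 𝓝 (0 : Fin m → ℝ), a i x = 0
  have hI : ∀ i, i ∈ I ↔ i < d ∧ ¬ ∀ᶠ x in 𝓝 (0 : Fin m → ℝ), a i x = 0 := by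
    intro i; simp [I]
  let A : ℕ → (Fin m → ℝ) → ℝ := fun i x => a i x ^ (N / (d - i))
  have hA : ∀ i ∈ I, AnalyticAt ℝ (A i) 0 := fun i hi => (ha i ((hI i).1 hi).1).pow _
  let J : Finset (ℕ × ℕ) := (I ×ˢ I).filter fun ij =>
    ¬ ∀ᶠ x in 𝓝 (0 : Fin m → ℝ), A ij.1 x - A ij.2 x = 0
  have hJan : ∀ ij ∈ J, AnalyticAt ℝ (fun x => A ij.1 x - A ij.2 x) 0 := by
    intro ij hij
    simp only [J, Finset.mem_filter, Finset.mem_product] at hij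
    exact (hA _ hij.1.1).sub (hA _ hij.1.2)
  let H1 : (Fin m → ℝ) → ℝ := fun x => ∏ i ∈ I, a i x
  let H2 : (Fin m → ℝ) → ℝ := fun x => ∏ ij ∈ J, (A ij.1 x - A ij.2 x)
  have hH1 : AnalyticAt ℝ H1 0 :=
    Finset.analyticAt_fun_prod _ fun i hi => ha i ((hI i).1 hi).1
  have hH2 : AnalyticAt ℝ H2 0 := Finset.analyticAt_fun_prod _ hJan
  obtain ⟨π, q, hrel, hnc⟩ := hU p hp (fun x => b x * (H1 x * H2 x)) (hb.mul (hH1.mul hH2))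
    (not_eventually_mul_zero hb (hH1.mul hH2) hb0 (not_eventually_mul_zero hH1 hH2
      (not_eventually_prod_zero I (fun i hi => ha i ((hI i).1 hi).1) fun i hi => ((hI i).1 hi).2)
      (not_eventually_prod_zero J hJan fun ij hij => (Finset.mem_filter.1 hij).2)))
  have hbπ := hrel.comp_analyticAt hb
  have hH1π := hrel.comp_analyticAt hH1
  have hH2π := hrel.comp_analyticAt hH2
  have hncb : NC fun y => b (π y) := NC.of_mul hbπ (hH1π.mul hH2π) hnc
  have hnc12 : NC fun y => H1 (π y) * H2 (π y) := by
    refine NC.of_mul (hH1π.mul hH2π) hbπ (hnc.congr (Eventually.of_forall fun y => ?_))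
    ring
  have hnc1 : NC fun y => H1 (π y) := NC.of_mul hH1π hH2π hnc12
  have hnc2 : NC fun y => H2 (π y) :=
    NC.of_mul hH2π hH1π (hnc12.congr (Eventually.of_forall fun y => mul_comm _ _))
  have hnca : ∀ i ∈ I, NC fun y => a i (π y) := fun i hi =>
    NC.of_prod I (a := fun i y => a i (π y))
      (fun i hi => hrel.comp_analyticAt (ha i ((hI i).1 hi).1)) hnc1 hi
  have hncd : ∀ ij ∈ J, NC fun y => A ij.1 (π y) - A ij.2 (π y) := fun i hi =>
    NC.of_prod J (a := fun (ij : ℕ × ℕ) y => A ij.1 (π y) - A ij.2 (π y))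
      (fun ij hij => hrel.comp_analyticAt (hJan ij hij)) hnc2 hi
  choose! α u hu hu0 hau using hnca
  let γ : ℕ → Fin m → ℕ := fun i => (N / (d - i)) • α i
  have hAγ : ∀ i ∈ I, ∀ᶠ y in 𝓝 0, A i (π y) = mon (γ i) y * u i y ^ (N / (d - i)) := by
    intro i hi
    filter_upwards [hau i hi] with y hy
    simp only [A, γ, hy, mon_smul, mul_pow]
  have hcomp : ∀ i ∈ I, ∀ j ∈ I, γ i ≤ γ j ∨ γ j ≤ γ i := by
    intro i hi j hj
    refine NC.comparable ((hu i hi).pow (N / (d - i))) ((hu j hj).pow (N / (d - j)))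
      (pow_ne_zero _ (hu0 i hi)) (pow_ne_zero _ (hu0 j hj)) ?_
    by_cases hij : (i, j) ∈ J
    · right
      refine (hncd _ hij).congr ?_
      filter_upwards [hAγ i hi, hAγ j hj] with y h1 h2
      simp [h1, h2]
    · left
      have : ∀ᶠ x in 𝓝 (0 : Fin m → ℝ), A i x - A j x = 0 := by
        by_contra hc
        exact hij (Finset.mem_filter.2 ⟨Finset.mem_product.2 ⟨hi, hj⟩, hc⟩)
      filter_upwards [hAγ i hi, hAγ j hj, hrel.tendsto_map.eventually this] with y h1 h2 h3
      simpa [h1, h2] using h3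
  have hIne : I.Nonempty := by
    obtain ⟨i, hi, h⟩ := hne
    exact ⟨i, (hI i).2 ⟨hi, h⟩⟩
  obtain ⟨i₀, hi₀, hmin⟩ : ∃ i₀ ∈ I, ∀ i ∈ I, γ i₀ ≤ γ i := by
    obtain ⟨i₀, hi₀, hmin⟩ := Finset.exists_min_image I (fun i => ∑ l, γ i l) hIne
    refine ⟨i₀, hi₀, fun i hi => ?_⟩
    rcases hcomp i₀ hi₀ i hi with h | h
    · exact h
    · have h1 : ∑ l, γ i l = ∑ l, γ i₀ l :=
        le_antisymm (Finset.sum_le_sum fun l _ => h l) (hmin i hi)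
      intro l
      exact ((Finset.sum_eq_sum_iff_of_le fun l _ => h l).1 h1 l (Finset.mem_univ l)).ge
  obtain ⟨σ, q', hσ, hrel'⟩ := exists_ramify 𝒰 hrel.tend hN
  set ρ : (Fin m → ℝ) → Fin m → ℝ := fun y i => σ i * y i ^ N with hρ
  have hv : ∀ i ∈ I, ∃ v : (Fin m → ℝ) → ℝ, AnalyticAt ℝ v 0 ∧ v 0 ≠ 0 ∧
      ∀ᶠ y in 𝓝 (0 : Fin m → ℝ), a i (π (ρ y)) = mon (N • α i) y * v y := fun i hi =>
    NC.comp_ramify hN hσ (h := fun y => a i (π y)) (hu i hi) (hu0 i hi) (hau i hi)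
  choose! v hvan hv0 hva using hv
  refine ⟨fun y => π (ρ y), q', γ i₀, fun i => if i ∈ I then
    fun y => mon ((d - i) • (γ i - γ i₀)) y * v i y else fun _ => 0, hrel.trans hrel', ?_, ?_,
    ?_, ?_, ?_, ?_⟩
  · obtain ⟨αb, ub, hub, hub0, hbe⟩ := hncb
    obtain ⟨vb, h1, h2, h3⟩ := NC.comp_ramify hN hσ (h := fun y => b (π y)) hub hub0 hbe
    exact ⟨_, vb, h1, h2, h3⟩
  · intro h0
    have h1 : α i₀ = 0 := by
      have : N / (d - i₀) ≠ 0 := fun h => by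
        have := hdvd i₀ ((hI _).1 hi₀).1
        rw [h, mul_zero] at this; exact hN this.symm
      exact (smul_eq_zero.1 h0).resolve_left this
    have h2 := (hau i₀ hi₀).self_of_nhds
    dsimp only at h2
    rw [h1, mon_zero, hrel.zero, ha0 _ ((hI _).1 hi₀).1, one_mul] at h2
    exact hu0 i₀ hi₀ h2.symm
  · intro i hi
    dsimp only
    split_ifs with h
    · exact (analyticAt_mon _ 0).mul (hvan i h)
    · exact analyticAt_const
  · intro i hi
    dsimp only
    split_ifs with h
    · filter_upwards [hva i h] with y hy
      rw [hy, ← mul_assoc, ← mon_smul, ← mon_add, ← smul_add, add_tsub_cancel_of_le (hmin i h)]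
      simp only [γ, smul_smul, hdvd i hi]
    · have h0 : ∀ᶠ x in 𝓝 (0 : Fin m → ℝ), a i x = 0 := by
        by_contra hc; exact h ((hI i).2 ⟨hi, hc⟩)
      filter_upwards [(hrel.trans hrel').tendsto_map.eventually h0] with y hy
      simpa using hy
  · refine ⟨i₀, ((hI _).1 hi₀).1, ?_⟩
    simp only [hi₀, if_true, tsub_self, smul_zero, mon_zero, one_mul]
    exact hv0 i₀ hi₀
  · intro i hi h0
    have : i ∉ I := fun h => ((hI i).1 h).2 h0
    simp [this]

end unif
end Milnor

namespace Milnor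
open Topology Filter Set

/-! ### Taylor expansion in the last variable -/

section taylor
variable {E : Type*} [NormedAddCommGroup E] [NormedSpace ℝ E]

/-- Partial derivative in the last variable `z` on `E × ℝ`. -/
noncomputable def dz (h : E × ℝ → ℝ) : E × ℝ → ℝ := fun p => fderiv ℝ h p (0, 1)

theorem analyticAt_dz {h : E × ℝ → ℝ} {p : E × ℝ} (hh : AnalyticAt ℝ h p) :
    AnalyticAt ℝ (dz h) p :=
  ((ContinuousLinearMap.apply ℝ ℝ ((0, 1) : E × ℝ)).analyticAt _).comp hh.fderiv

theorem analyticAt_dz_iter {h : E × ℝ → ℝ} {p : E × ℝ} (hh : AnalyticAt ℝ h p) (k : ℕ) :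
    AnalyticAt ℝ (dz^[k] h) p := by
  induction k with
  | zero => exact hh
  | succ k ih => rw [Function.iterate_succ_apply']; exact analyticAt_dz ih

theorem dz_congr {h g : E × ℝ → ℝ} {p : E × ℝ} (hg : h =ᶠ[𝓝 p] g) : dz h =ᶠ[𝓝 p] dz g := by
  filter_upwards [hg.fderiv (𝕜 := ℝ)] with x hx
  simp only [dz, hx]

/-- The Leibniz rule for `c x + z * q`. -/
theorem dz_iter_of_eq {h q : E × ℝ → ℝ} {c : E → ℝ} (hq : AnalyticAt ℝ q 0)
    (hc : AnalyticAt ℝ c 0) (hh : h =ᶠ[𝓝 0] fun p => c p.1 + p.2 * q p) (k : ℕ) :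
    dz^[k + 1] h =ᶠ[𝓝 0] fun p => p.2 * dz^[k + 1] q p + (k + 1) * dz^[k] q p := by
  induction k with
  | zero =>
    have h1 := dz_congr hh
    have hc' : ∀ᶠ p : E × ℝ in 𝓝 0, AnalyticAt ℝ c p.1 :=
      (continuous_fst.tendsto (0 : E × ℝ)).eventually hc.eventually_analyticAt
    filter_upwards [h1, hq.eventually_analyticAt, hc'] with p hp hqp hcp
    simp only [zero_add, Function.iterate_one, Function.iterate_zero, id]
    rw [hp]
    have d1 : HasFDerivAt (fun p : E × ℝ => c p.1)
        ((fderiv ℝ c p.1).comp (ContinuousLinearMap.fst ℝ E ℝ)) p :=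
      hcp.differentiableAt.hasFDerivAt.comp p hasFDerivAt_fst
    have d2 := (hasFDerivAt_snd (𝕜 := ℝ) (p := p)).mul hqp.differentiableAt.hasFDerivAt
    have d3 := (d1.add d2).fderiv
    simp only [dz]
    have : (fun p : E × ℝ => c p.1 + p.2 * q p) = (fun p : E × ℝ => c p.1) + Prod.snd * q := rfl
    rw [this, d3]
    simp
  | succ k ih =>
    rw [Function.iterate_succ_apply']
    have h1 := dz_congr ih
    filter_upwards [h1, (analyticAt_dz_iter hq k).eventually_analyticAt,
      (analyticAt_dz_iter hq (k + 1)).eventually_analyticAt] with p hp h2 h3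
    rw [hp]
    have d2 := (hasFDerivAt_snd (𝕜 := ℝ) (p := p)).mul h3.differentiableAt.hasFDerivAt
    have d1 := h2.differentiableAt.hasFDerivAt.const_mul ((k : ℝ) + 1)
    have d3 := (d2.add d1).fderiv
    have e1 : fderiv ℝ (dz^[k + 1] q) p (0, 1) = dz^[k + 1 + 1] q p := by
      rw [Function.iterate_succ_apply' dz (k + 1)]; rfl
    have e2 : fderiv ℝ (dz^[k] q) p (0, 1) = dz^[k + 1] q p := by
      rw [Function.iterate_succ_apply' dz k]; rfl
    have e3 : dz (fun p => p.2 * dz^[k + 1] q p + (k + 1) * dz^[k] q p) p =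
        p.2 * fderiv ℝ (dz^[k + 1] q) p (0, 1) + dz^[k + 1] q p
          + (k + 1) * fderiv ℝ (dz^[k] q) p (0, 1) := by
      simp only [dz]
      have : (fun p : E × ℝ => p.2 * dz^[k + 1] q p + (k + 1) * dz^[k] q p) =
        (Prod.snd * dz^[k + 1] q) + fun p => ((k : ℝ) + 1) * dz^[k] q p := rfl
      refine (congrArg (fun L => L ((0 : E), (1 : ℝ))) (Eq.trans (congrArg (fun F => fderiv ℝ F p) this) d3)).trans ?_
      simp [smul_eq_mul]
    rw [e3, e1, e2]
    push_cast
    ring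

theorem analyticAt_restrict {h : E × ℝ → ℝ} (hh : AnalyticAt ℝ h 0) :
    AnalyticAt ℝ (fun x : E => h (x, 0)) 0 :=
  AnalyticAt.fun_comp (f := fun x : E => (x, (0 : ℝ))) hh (analyticAt_id.prod analyticAt_const)

theorem tendsto_mk_zero : Tendsto (fun x : E => (x, (0 : ℝ))) (𝓝 0) (𝓝 0) := by
  have : Continuous fun x : E => (x, (0 : ℝ)) := by fun_prop
  exact this.tendsto 0

/-- Taylor expansion of an analytic germ in the last variable. -/
theorem exists_taylor (d : ℕ) : ∀ {h : E × ℝ → ℝ}, AnalyticAt ℝ h 0 →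
    ∃ (a : ℕ → E → ℝ) (u : E × ℝ → ℝ), (∀ i, AnalyticAt ℝ (a i) 0) ∧ AnalyticAt ℝ u 0 ∧
      (∀ᶠ p in 𝓝 (0 : E × ℝ), h p = ∑ i ∈ Finset.range d, a i p.1 * p.2 ^ i + p.2 ^ d * u p) ∧
      (∀ i < d, ∀ᶠ x in 𝓝 (0 : E), dz^[i] h (x, 0) = i.factorial * a i x) ∧
      dz^[d] h 0 = d.factorial * u 0 := by
  induction d with
  | zero =>
    intro h hh
    exact ⟨fun _ _ => 0, h, fun _ => analyticAt_const, hh, by simp, by simp, by simp⟩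
  | succ d ih =>
    intro h hh
    obtain ⟨q, hq, hhq⟩ := exists_eq_mul_of_vanish hh (ContinuousLinearMap.snd ℝ E ℝ) (0, 1)
    have hhq' : h =ᶠ[𝓝 0] fun p => h (p.1, 0) + p.2 * q p := by
      filter_upwards [hhq] with p hp
      rw [hp]
      congr 2
      ext <;> simp
    have hc := analyticAt_restrict hh
    obtain ⟨a, u, ha, hu, h1, h2, h3⟩ := ih hq
    refine ⟨fun i => Nat.casesOn i (fun x => h (x, 0)) a, u, ?_, hu, ?_, ?_, ?_⟩
    · intro i; cases i with
      | zero => exact hc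
      | succ i => exact ha i
    · filter_upwards [hhq', h1] with p hp hp1
      rw [hp, hp1, Finset.sum_range_succ']
      have : p.2 * ∑ i ∈ Finset.range d, a i p.1 * p.2 ^ i =
          ∑ i ∈ Finset.range d, a i p.1 * p.2 ^ (i + 1) := by
        rw [Finset.mul_sum]
        exact Finset.sum_congr rfl fun i _ => by ring
      change h (p.1, 0) + p.2 * (_ + _) =
        ∑ i ∈ Finset.range d, a i p.1 * p.2 ^ (i + 1) + h (p.1, 0) * p.2 ^ 0 + p.2 ^ (d + 1) * u p
      rw [mul_add, this]
      ring
    · intro i hi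
      cases i with
      | zero => simp
      | succ i =>
        have h4 := tendsto_mk_zero.eventually (dz_iter_of_eq hq hc hhq' i)
        filter_upwards [h4, h2 i (by omega)] with x hx hx2
        rw [hx, hx2, Nat.factorial_succ]
        push_cast; ring
    · have h4 := (dz_iter_of_eq hq hc hhq' d).self_of_nhds
      dsimp only at h4
      rw [h4, h3, Nat.factorial_succ]
      push_cast
      simp
      ring

/-- `h` vanishes to order exactly `d` along the `z`-axis. -/
def OrdZ (h : E × ℝ → ℝ) (d : ℕ) : Prop := (∀ i < d, dz^[i] h 0 = 0) ∧ dz^[d] h 0 ≠ 0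

/-- If `h` is `t ^ n` times a unit on the `z`-axis, its order in `z` is at most `n`. -/
theorem exists_ordZ {h : E × ℝ → ℝ} (hh : AnalyticAt ℝ h 0) {n : ℕ} {g : ℝ → ℝ}
    (hg : ContinuousAt g 0) (hg0 : g 0 ≠ 0) (he : ∀ᶠ t in 𝓝[≠] (0 : ℝ), h (0, t) = t ^ n * g t) :
    ∃ d ≤ n, OrdZ h d := by
  classical
  have hex : ∃ d, d ≤ n ∧ dz^[d] h 0 ≠ 0 := by
    by_contra hcon
    push Not at hcon
    obtain ⟨a, u, ha, hu, h1, h2, h3⟩ := exists_taylor (n + 1) hh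
    have ha0 : ∀ i < n + 1, a i 0 = 0 := by
      intro i hi
      have := (h2 i hi).self_of_nhds
      rw [show ((0 : E), (0 : ℝ)) = 0 from rfl, hcon i (by omega)] at this
      have hf : (i.factorial : ℝ) ≠ 0 := by positivity
      exact (mul_eq_zero.1 this.symm).resolve_left hf
    have hcv : Continuous fun t : ℝ => ((0 : E), t) := by fun_prop
    have ht : Tendsto (fun t : ℝ => ((0 : E), t)) (𝓝[≠] 0) (𝓝 0) :=
      (hcv.tendsto 0).mono_left nhdsWithin_le_nhds
    have h4 : ∀ᶠ t in 𝓝[≠] (0 : ℝ), t * u (0, t) = g t := by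
      filter_upwards [he, ht.eventually h1, self_mem_nhdsWithin] with t e1 e2 e3
      rw [e1, Finset.sum_eq_zero (fun i hi => by
        rw [ha0 i (Finset.mem_range.1 hi), zero_mul]), zero_add, pow_succ, mul_assoc] at e2
      exact (mul_left_cancel₀ (pow_ne_zero n e3) e2).symm
    have h5 : Tendsto (fun t : ℝ => t * u (0, t)) (𝓝[≠] 0) (𝓝 (0 * u 0)) :=
      (tendsto_id.mono_left nhdsWithin_le_nhds).mul (hu.continuousAt.tendsto.comp ht)
    rw [zero_mul] at h5
    exact hg0 (tendsto_nhds_unique (hg.tendsto.mono_left nhdsWithin_le_nhds) (h5.congr' h4))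
  refine ⟨Nat.find hex, (Nat.find_spec hex).1, fun i hi => ?_, (Nat.find_spec hex).2⟩
  have h1 := Nat.find_min hex hi
  have h2 := (Nat.find_spec hex).1
  by_contra h3
  exact h1 ⟨by omega, h3⟩

theorem analyticAt_shift {ψ : E → ℝ} {p : E × ℝ} (hψ : AnalyticAt ℝ ψ p.1) :
    AnalyticAt ℝ (fun p : E × ℝ => (p.1, p.2 + ψ p.1)) p :=
  analyticAt_fst.prod (analyticAt_snd.add (AnalyticAt.fun_comp (f := fun p : E × ℝ => p.1) hψ
    analyticAt_fst))

/-- Differentiation in `z` commutes with the shear `(x, z) ↦ (x, z + ψ x)`. -/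
theorem dz_iter_shift {h : E × ℝ → ℝ} (hh : AnalyticAt ℝ h 0) {ψ : E → ℝ}
    (hψ : AnalyticAt ℝ ψ 0) (hψ0 : ψ 0 = 0) (k : ℕ) :
    dz^[k] (fun p : E × ℝ => h (p.1, p.2 + ψ p.1)) =ᶠ[𝓝 0]
      fun p => dz^[k] h (p.1, p.2 + ψ p.1) := by
  have hτ : Tendsto (fun p : E × ℝ => (p.1, p.2 + ψ p.1)) (𝓝 0) (𝓝 0) := by
    have := (analyticAt_shift (p := (0 : E × ℝ)) hψ).continuousAt.tendsto
    have h0 : ((0 : E × ℝ).1, (0 : E × ℝ).2 + ψ (0 : E × ℝ).1) = 0 := by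
      simp [hψ0]
    rwa [h0] at this
  induction k with
  | zero => exact Eventually.of_forall fun p => rfl
  | succ k ih =>
    rw [Function.iterate_succ_apply']
    have hψ' : ∀ᶠ p : E × ℝ in 𝓝 0, AnalyticAt ℝ ψ p.1 :=
      (continuous_fst.tendsto (0 : E × ℝ)).eventually hψ.eventually_analyticAt
    filter_upwards [dz_congr ih, hψ',
      hτ.eventually (analyticAt_dz_iter hh k).eventually_analyticAt] with p h1 h2 h3
    rw [h1, Function.iterate_succ_apply']
    have d1 : HasFDerivAt (fun p : E × ℝ => ψ p.1)
        ((fderiv ℝ ψ p.1).comp (ContinuousLinearMap.fst ℝ E ℝ)) p :=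
      h2.differentiableAt.hasFDerivAt.comp p hasFDerivAt_fst
    have d2 := (hasFDerivAt_fst (𝕜 := ℝ) (p := p)).prodMk
      ((hasFDerivAt_snd (𝕜 := ℝ) (p := p)).add d1)
    have d3 := (h3.differentiableAt.hasFDerivAt.comp p d2).fderiv
    have e : dz (fun p : E × ℝ => dz^[k] h (p.1, p.2 + ψ p.1)) p = _ :=
      congrArg (fun L => L ((0 : E), (1 : ℝ))) d3
    rw [e]
    simp [dz]

/-- The analytic implicit function theorem for one equation in one unknown. -/
theorem exists_implicit [CompleteSpace E] {g : E × ℝ → ℝ} (hg : AnalyticAt ℝ g 0) (hg0 : g 0 = 0)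
    (hd : dz g 0 ≠ 0) : ∃ ψ : E → ℝ, AnalyticAt ℝ ψ 0 ∧ ψ 0 = 0 ∧
      ∀ᶠ x in 𝓝 (0 : E), g (x, ψ x) = 0 := by
  have hcd : ContDiffAt ℝ ⊤ g 0 := hg.contDiffAt
  have hinv : (fderiv ℝ g 0 ∘L ContinuousLinearMap.inr ℝ E ℝ).IsInvertible := by
    refine ⟨ContinuousLinearEquiv.unitsEquivAut ℝ (Units.mk0 _ hd), ?_⟩
    ext
    simp [dz]
  refine ⟨hcd.implicitFunction (by simp) hinv, ?_, ?_, ?_⟩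
  · exact (hcd.contDiffAt_implicitFunction (by simp) hinv).analyticAt
  · exact hcd.implicitFunction_apply_self (by simp) hinv
  · have := hcd.eventually_apply_implicitFunction (by simp) hinv
    rw [hg0] at this
    exact this

end taylor
end Milnor

namespace Milnor
open Topology Filter Set

/-! ### Blow-up charts -/

section toric
variable {K : Type*} {m : ℕ}

/-- Normal crossings on `ℝ ^ m × ℝ`, with respect to all the `m + 1` coordinates. -/
def NCP (h : (Fin m → ℝ) × ℝ → ℝ) : Prop :=
  ∃ (α : Fin m → ℕ) (k : ℕ) (u : (Fin m → ℝ) × ℝ → ℝ), AnalyticAt ℝ u 0 ∧ u 0 ≠ 0 ∧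
    ∀ᶠ p in 𝓝 (0 : (Fin m → ℝ) × ℝ), h p = mon α p.1 * p.2 ^ k * u p

theorem NCP.congr {g h : (Fin m → ℝ) × ℝ → ℝ} (hg : NCP g) (h' : ∀ᶠ x in 𝓝 0, h x = g x) :
    NCP h := by
  obtain ⟨α, k, u, hu, hu0, he⟩ := hg
  refine ⟨α, k, u, hu, hu0, ?_⟩
  filter_upwards [he, h'] with x h1 h2
  rw [h2, h1]

theorem NCP.mul_unit {g v : (Fin m → ℝ) × ℝ → ℝ} (hg : NCP g) (hv : AnalyticAt ℝ v 0)
    (hv0 : v 0 ≠ 0) : NCP fun p => g p * v p := by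
  obtain ⟨α, k, u, hu, hu0, he⟩ := hg
  refine ⟨α, k, fun p => u p * v p, hu.mul hv, mul_ne_zero hu0 hv0, ?_⟩
  filter_upwards [he] with p hp
  rw [hp]; ring

theorem NCP.of_NC {b : (Fin m → ℝ) → ℝ} (hb : NC b) (k : ℕ) : NCP fun p => p.2 ^ k * b p.1 := by
  obtain ⟨α, u, hu, hu0, he⟩ := hb
  refine ⟨α, k, fun p => u p.1,
    AnalyticAt.fun_comp (f := fun p : (Fin m → ℝ) × ℝ => p.1) hu analyticAt_fst, hu0, ?_⟩
  filter_upwards [(continuous_fst.tendsto (0 : (Fin m → ℝ) × ℝ)).eventually he] with p hp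
  rw [hp]; ring

theorem mon_update (α : Fin m → ℕ) (j : Fin m) (x : Fin m → ℝ) (t : ℝ) :
    mon α (Function.update x j t) = t ^ α j * mon (Function.update α j 0) x := by
  unfold mon
  rw [← Finset.mul_prod_erase _ _ (Finset.mem_univ j),
    ← Finset.mul_prod_erase _ (fun i => x i ^ (Function.update α j 0) i) (Finset.mem_univ j)]
  simp only [Function.update_self, pow_zero, one_mul]
  congr 1
  refine Finset.prod_congr rfl fun i hi => ?_
  have : i ≠ j := Finset.ne_of_mem_erase hi
  simp [this]

theorem mon_split (α : Fin m → ℕ) (j : Fin m) (x : Fin m → ℝ) :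
    mon α x = x j ^ α j * mon (Function.update α j 0) x := by
  conv_lhs => rw [← Function.update_eq_self j x]
  rw [mon_update]

/-- Blow-up chart `x_j = z (y_j + c)`. -/
def chartX (j : Fin m) (c : ℝ) (y : (Fin m → ℝ) × ℝ) : (Fin m → ℝ) × ℝ :=
  (Function.update y.1 j (y.2 * (y.1 j + c)), y.2)

/-- Blow-up chart `z = x_j w`. -/
def chartZ (j : Fin m) (y : (Fin m → ℝ) × ℝ) : (Fin m → ℝ) × ℝ := (y.1, y.1 j * y.2)

theorem analyticAt_coord_fst (j : Fin m) (y : (Fin m → ℝ) × ℝ) :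
    AnalyticAt ℝ (fun y : (Fin m → ℝ) × ℝ => y.1 j) y :=
  AnalyticAt.fun_comp (g := fun x : Fin m → ℝ => x j) (f := fun y : (Fin m → ℝ) × ℝ => y.1)
    (analyticAt_coord j _) analyticAt_fst

theorem analyticAt_chartX (j : Fin m) (c : ℝ) : AnalyticAt ℝ (chartX j c) 0 := by
  refine AnalyticAt.prod (analyticAt_pi_iff.2 fun i => ?_) analyticAt_snd
  by_cases h : i = j
  · subst h
    simp only [Function.update_self]
    exact analyticAt_snd.mul ((analyticAt_coord_fst i 0).add analyticAt_const)
  · simp only [Function.update_of_ne h]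
    exact analyticAt_coord_fst i 0

theorem analyticAt_chartZ (j : Fin m) : AnalyticAt ℝ (chartZ j) 0 :=
  analyticAt_fst.prod ((analyticAt_coord_fst j 0).mul analyticAt_snd)

theorem chartX_zero (j : Fin m) (c : ℝ) : chartX j c 0 = 0 := by
  ext i
  · by_cases h : i = j
    · subst h; simp [chartX]
    · simp [chartX]
  · simp [chartX]

theorem chartZ_zero (j : Fin m) : chartZ j 0 = 0 := by simp [chartZ]

theorem NCP.chartX {h : (Fin m → ℝ) × ℝ → ℝ} (hh : NCP h) (j : Fin m) (c : ℝ) :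
    NCP fun y => h (chartX j c y) := by
  obtain ⟨α, k, u, hu, hu0, he⟩ := hh
  have hu' : AnalyticAt ℝ (fun y => u (Milnor.chartX j c y)) 0 :=
    AnalyticAt.fun_comp (by rwa [chartX_zero]) (analyticAt_chartX j c)
  have ht : Tendsto (Milnor.chartX j c) (𝓝 0) (𝓝 0) := by
    have := (analyticAt_chartX j c).continuousAt.tendsto
    rwa [chartX_zero] at this
  by_cases hc : c = 0
  · refine ⟨α, k + α j, _, hu', by rwa [chartX_zero], ?_⟩
    filter_upwards [ht.eventually he] with y hy
    rw [hy, mon_split α j y.1]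
    simp only [Milnor.chartX, mon_update, hc]
    ring
  · refine ⟨Function.update α j 0, k + α j, fun y => (y.1 j + c) ^ α j * u (Milnor.chartX j c y),
      (((analyticAt_coord_fst j 0).add analyticAt_const).pow _).mul hu', ?_, ?_⟩
    · dsimp only
      rw [chartX_zero]
      exact mul_ne_zero (pow_ne_zero _ (by simpa using hc)) hu0
    filter_upwards [ht.eventually he] with y hy
    rw [hy]
    simp only [Milnor.chartX, mon_update, mul_pow]
    ring

theorem NCP.chartZ {h : (Fin m → ℝ) × ℝ → ℝ} (hh : NCP h) (j : Fin m) :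
    NCP fun y => h (chartZ j y) := by
  obtain ⟨α, k, u, hu, hu0, he⟩ := hh
  have hu' : AnalyticAt ℝ (fun y => u (Milnor.chartZ j y)) 0 :=
    AnalyticAt.fun_comp (by rwa [chartZ_zero]) (analyticAt_chartZ j)
  have ht : Tendsto (Milnor.chartZ j) (𝓝 0) (𝓝 0) := by
    have := (analyticAt_chartZ j).continuousAt.tendsto
    rwa [chartZ_zero] at this
  refine ⟨α + k • Pi.single j 1, k, _, hu', by rwa [chartZ_zero], ?_⟩
  filter_upwards [ht.eventually he] with y hy
  rw [hy, mon_add, mon_smul, mon_single]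
  simp only [Milnor.chartZ]
  ring

/-- Dichotomy along an ultrafilter: either `r = O(s)` or `s = o(r)`. -/
theorem exists_bound_or (𝒰 : Ultrafilter K) (r s : K → ℝ) :
    (∃ C, ∀ᶠ k in (𝒰 : Filter K), |r k| ≤ C * |s k|) ∨
      ((∀ᶠ k in (𝒰 : Filter K), r k ≠ 0) ∧ Tendsto (fun k => s k / r k) 𝒰 (𝓝 0)) := by
  by_cases h : ∃ C, ∀ᶠ k in (𝒰 : Filter K), |r k| ≤ C * |s k|
  · exact Or.inl h
  right
  push Not at h
  have h' : ∀ C, ∀ᶠ k in (𝒰 : Filter K), C * |s k| < |r k| := by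
    intro C
    exact h C
  have hne : ∀ᶠ k in (𝒰 : Filter K), r k ≠ 0 := by
    filter_upwards [h' 0] with k hk h0
    simp [h0] at hk
  refine ⟨hne, ?_⟩
  rw [Metric.tendsto_nhds]
  intro ε hε
  filter_upwards [hne, h' (1 / ε)] with k h1 h2
  rw [dist_zero_right, norm_div, Real.norm_eq_abs, Real.norm_eq_abs,
    div_lt_iff₀ (abs_pos.2 h1)]
  rw [one_div, inv_mul_lt_iff₀ hε] at h2
  exact h2

/-- If `mon β x = o(z)` along the points, then a composite of blow-up charts, through which the
points lift, makes `mon β x` divisible by `z` with quotient vanishing at `0`. Such charts preserve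
normal crossings. The induction is on `|β|`, comparing one coordinate dividing `mon β` with `z`. -/
theorem exists_toric (𝒰 : Ultrafilter K) (N : ℕ) : ∀ β : Fin m → ℕ, ∑ i, β i = N →
    ∀ p : K → (Fin m → ℝ) × ℝ, Tendsto p 𝒰 (𝓝 0) → (∀ᶠ k in (𝒰 : Filter K), (p k).2 ≠ 0) →
    Tendsto (fun k => mon β (p k).1 / (p k).2) 𝒰 (𝓝 0) →
    ∃ (π : (Fin m → ℝ) × ℝ → (Fin m → ℝ) × ℝ) (q : K → (Fin m → ℝ) × ℝ)
      (w : (Fin m → ℝ) × ℝ → ℝ), Rel 𝒰 p π q ∧ (∀ h, NCP h → NCP fun y => h (π y)) ∧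
      AnalyticAt ℝ w 0 ∧ w 0 = 0 ∧ ∀ᶠ y in 𝓝 0, mon β (π y).1 = (π y).2 * w y := by
  induction N with
  | zero =>
    intro β hβ p hp hz hlim
    exfalso
    have hβ0 : β = 0 := by
      funext i; simpa using (Finset.sum_eq_zero_iff.1 hβ) i (Finset.mem_univ i)
    subst hβ0
    have h1 : Tendsto (fun k => (p k).2) 𝒰 (𝓝 0) := (continuous_snd.tendsto 0).comp hp
    have h2 := h1.mul hlim
    rw [zero_mul] at h2
    have h3 : Tendsto (fun _ : K => (1 : ℝ)) 𝒰 (𝓝 0) := by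
      refine h2.congr' ?_
      filter_upwards [hz] with k hk
      rw [mon_zero]; field_simp
    exact one_ne_zero (tendsto_nhds_unique tendsto_const_nhds h3)
  | succ N ih =>
    intro β hβ p hp hz hlim
    obtain ⟨j, -, hj⟩ : ∃ j ∈ Finset.univ, β j ≠ 0 := by
      by_contra hc
      push Not at hc
      rw [Finset.sum_eq_zero hc] at hβ
      omega
    obtain ⟨β', rfl⟩ := exists_single_add hj
    have hβ' : ∑ i, β' i = N := by
      simp [Finset.sum_add_distrib] at hβ; omega
    have hpx : Tendsto (fun k => (p k).1) 𝒰 (𝓝 0) := (continuous_fst.tendsto 0).comp hp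
    have hpz : Tendsto (fun k => (p k).2) 𝒰 (𝓝 0) := (continuous_snd.tendsto 0).comp hp
    rcases exists_bound_or 𝒰 (fun k => (p k).1 j) (fun k => (p k).2) with ⟨C, hC⟩ | ⟨hne, hl⟩
    · obtain ⟨c, hc⟩ := exists_tendsto_of_bounded 𝒰 (r := fun k => (p k).1 j / (p k).2) (C := C) (by
        filter_upwards [hC, hz] with k h1 h2
        rwa [abs_div, div_le_iff₀ (abs_pos.2 h2)])
      have hrel : Rel 𝒰 p (chartX j c)
          (fun k => (Function.update (p k).1 j ((p k).1 j / (p k).2 - c), (p k).2)) := by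
        refine ⟨analyticAt_chartX j c, chartX_zero j c, ?_, ?_⟩
        · refine Tendsto.prodMk_nhds ?_ hpz
          rw [tendsto_pi_nhds] at hpx ⊢
          intro i
          by_cases h : i = j
          · subst h
            simpa using hc.sub_const c
          · simpa [h] using hpx i
        · filter_upwards [hz] with k hk
          ext i
          · by_cases h : i = j
            · subst h; simp [chartX]; field_simp
            · simp [chartX, h]
          · rfl
      have hw : AnalyticAt ℝ (fun y : (Fin m → ℝ) × ℝ => (y.1 j + c) * mon β' (chartX j c y).1) 0 := by
        refine ((analyticAt_coord_fst j 0).add analyticAt_const).mul ?_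
        exact AnalyticAt.fun_comp (g := fun z : (Fin m → ℝ) × ℝ => mon β' z.1)
          (AnalyticAt.fun_comp (g := mon β') (f := fun z : (Fin m → ℝ) × ℝ => z.1)
            (analyticAt_mon β' _) analyticAt_fst) (analyticAt_chartX j c)
      have hmon : ∀ y, mon (Pi.single j 1 + β') (chartX j c y).1 =
          (chartX j c y).2 * ((y.1 j + c) * mon β' (chartX j c y).1) := by
        intro y
        rw [mon_add, mon_single]
        simp only [chartX, Function.update_self]
        ring
      refine ⟨_, _, _, hrel, fun h hh => hh.chartX j c, hw, ?_, Eventually.of_forall hmon⟩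
      refine tendsto_nhds_unique (hw.continuousAt.tendsto.comp hrel.tend) (hlim.congr' ?_)
      filter_upwards [hrel.ev, hz] with k hk hz
      have h1 := hmon (Function.update (p k).1 j ((p k).1 j / (p k).2 - c), (p k).2)
      rw [hk] at h1
      rw [h1, Function.comp, hk]
      field_simp
    · have hrel : Rel 𝒰 p (chartZ j) (fun k => ((p k).1, (p k).2 / (p k).1 j)) := by
        refine ⟨analyticAt_chartZ j, chartZ_zero j, hpx.prodMk_nhds hl, ?_⟩
        filter_upwards [hne] with k hk
        simp only [chartZ]
        ext i
        · rfl
        · simp only; field_simp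
      obtain ⟨π, q, w, h1, h2, h3, h4, h5⟩ := ih β' hβ' _ hrel.tend (by
        filter_upwards [hne, hz] with k h1 h2
        exact div_ne_zero h2 h1) (by
        refine hlim.congr' ?_
        filter_upwards [hne, hz] with k h1 h2
        rw [mon_add, mon_single]
        field_simp)
      refine ⟨_, q, w, hrel.trans h1, fun h hh => h2 _ (hh.chartZ j), h3, h4, ?_⟩
      filter_upwards [h5] with y hy
      simp only [chartZ]
      rw [mon_add, mon_single, hy]; ring

end toric
end Milnor

namespace Milnor
open Topology Filter Set

/-! ### Reduction of the order in the last variable -/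

section Q
variable {K : Type*} {m : ℕ}

open Polynomial in
/-- A polynomial of degree `d` with vanishing second coefficient which is not a pure power has only
roots of multiplicity `< d`. -/
theorem exists_order_lt {d : ℕ} (hd : 1 ≤ d) (a : ℕ → ℝ) {e : ℝ} (he : e ≠ 0) (c : ℝ)
    (h1 : a (d - 1) = 0) (h2 : ∃ i < d, a i ≠ 0) :
    ∃ n < d, ∃ g : ℝ → ℝ, Continuous g ∧ g 0 ≠ 0 ∧
      ∀ t, ∑ i ∈ Finset.range d, a i * (t + c) ^ i + (t + c) ^ d * e = t ^ n * g t := by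
  let P : ℝ[X] := ∑ i ∈ Finset.range d, C (a i) * X ^ i + C e * X ^ d
  have hcoeff : ∀ k, P.coeff k = (if k < d then a k else 0) + if k = d then e else 0 := by
    intro k
    simp [P, coeff_X_pow, finsetSum_coeff]
  have hP0 : P ≠ 0 := by
    intro h
    have := hcoeff d
    simp [h] at this
    exact he this.symm
  have hdeg : P.natDegree = d := by
    refine natDegree_eq_of_le_of_coeff_ne_zero (natDegree_le_iff_coeff_eq_zero.2 fun k hk => ?_) ?_
    · rw [hcoeff, if_neg (by omega), if_neg (by omega), add_zero]
    · rw [hcoeff]; simpa using he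
  have heval : ∀ t, P.eval t = ∑ i ∈ Finset.range d, a i * t ^ i + t ^ d * e := by
    intro t
    simp [P, eval_finsetSum]
    ring
  obtain ⟨R, hR, hndvd⟩ := P.exists_eq_pow_rootMultiplicity_mul_and_not_dvd hP0 c
  set n := P.rootMultiplicity c
  have hR0 : R ≠ 0 := fun h => hP0 (by rw [hR, h, mul_zero])
  have hdeg2 : d = n + R.natDegree := by
    rw [← hdeg]
    conv_lhs => rw [hR]
    rw [natDegree_mul (pow_ne_zero _ (X_sub_C_ne_zero c)) hR0, natDegree_pow, natDegree_X_sub_C,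
      mul_one]
  have hn : n < d := by
    by_contra hcon
    have hRd : R.natDegree = 0 := by omega
    have hnd : n = d := by omega
    obtain ⟨r, hr⟩ := natDegree_eq_zero.1 hRd
    have hr0 : r ≠ 0 := fun h => hR0 (by rw [← hr, h, C_0])
    rw [hnd, ← hr, sub_eq_add_neg, ← C_neg] at hR
    have hc0 : c = 0 := by
      have h3 := hcoeff (d - 1)
      rw [hR, coeff_mul_C, coeff_X_add_C_pow, if_pos (by omega), if_neg (by omega), h1, add_zero,
        show d - (d - 1) = 1 by omega, pow_one] at h3
      have h4 : ((d.choose (d - 1) : ℕ) : ℝ) ≠ 0 := by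
        exact_mod_cast (Nat.choose_pos (by omega)).ne'
      simpa [hr0, h4] using h3
    obtain ⟨i, hi, hai⟩ := h2
    have h3 := hcoeff i
    rw [hR, hc0, if_pos hi, if_neg (by omega), add_zero] at h3
    simp [coeff_X_pow, hi.ne] at h3
    exact hai h3.symm
  refine ⟨n, hn, fun t => R.eval (t + c), by fun_prop, ?_, fun t => ?_⟩
  · rw [dvd_iff_isRoot] at hndvd
    simpa using hndvd
  · rw [← heval, hR]
    simp

/-- The case where `h` is a unit times `z ^ d`: only the factor `b x` remains to be uniformized. -/
theorem exists_ncp_of_pow {𝒰 : Ultrafilter K} (hU : Unif 𝒰 m) {p : K → (Fin m → ℝ) × ℝ}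
    (hp : Tendsto p 𝒰 (𝓝 0)) {h u : (Fin m → ℝ) × ℝ → ℝ} (hu : AnalyticAt ℝ u 0) (hu0 : u 0 ≠ 0)
    {d : ℕ} (he : ∀ᶠ y in 𝓝 0, h y = y.2 ^ d * u y) {b : (Fin m → ℝ) → ℝ}
    (hb : AnalyticAt ℝ b 0) (hb0 : ¬ ∀ᶠ x in 𝓝 (0 : Fin m → ℝ), b x = 0) :
    ∃ (π : (Fin m → ℝ) × ℝ → (Fin m → ℝ) × ℝ) (q : K → (Fin m → ℝ) × ℝ),
      Rel 𝒰 p π q ∧ NCP fun y => h (π y) * b (π y).1 := by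
  obtain ⟨π, q, hrel, hnc⟩ := hU (fun k => (p k).1) ((continuous_fst.tendsto 0).comp hp) b hb hb0
  have hrel' := hrel.prodMap hp
  refine ⟨_, _, hrel', ((NCP.of_NC hnc d).mul_unit (hrel'.comp_analyticAt hu)
    (by rwa [hrel'.zero])).congr ?_⟩
  filter_upwards [hrel'.tendsto_map.eventually he] with y hy
  rw [hy]; ring

/-- Local uniformization on `ℝ ^ m × ℝ` for a germ `h (x, z)` of order `d` in `z`, times a nonzero
germ `b x`. The extra factor `b` collects the monomials split off while `d` decreases. -/
def QStmt (𝒰 : Ultrafilter K) (m d : ℕ) : Prop :=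
  ∀ p : K → (Fin m → ℝ) × ℝ, Tendsto p 𝒰 (𝓝 0) → ∀ h : (Fin m → ℝ) × ℝ → ℝ,
    AnalyticAt ℝ h 0 → OrdZ h d → ∀ b : (Fin m → ℝ) → ℝ, AnalyticAt ℝ b 0 →
    (¬ ∀ᶠ x in 𝓝 (0 : Fin m → ℝ), b x = 0) →
    ∃ (π : (Fin m → ℝ) × ℝ → (Fin m → ℝ) × ℝ) (q : K → (Fin m → ℝ) × ℝ),
      Rel 𝒰 p π q ∧ NCP fun y => h (π y) * b (π y).1

theorem AnalyticAt.comp_fst {b : (Fin m → ℝ) → ℝ} {π : (Fin m → ℝ) × ℝ → (Fin m → ℝ) × ℝ}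
    (hb : AnalyticAt ℝ b 0) (hπ : AnalyticAt ℝ π 0) (hπ0 : π 0 = 0) :
    AnalyticAt ℝ (fun y => b (π y).1) 0 :=
  AnalyticAt.fun_comp (g := fun y : (Fin m → ℝ) × ℝ => b y.1)
    (by
      rw [hπ0]
      exact AnalyticAt.fun_comp (f := fun y : (Fin m → ℝ) × ℝ => y.1) hb analyticAt_fst) hπ

/-- The inductive step when the coefficient of `z ^ (d - 1)` vanishes identically. Once the lower
coefficients are prepared, either the points satisfy `z = O(mon β)`, and rescaling `z` by `mon β`
lowers the order in `z` (`exists_order_lt`), or `mon β = o(z)` along them, and `exists_toric` makes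
`h` a unit times `z ^ d`. -/
theorem qStmt_step {𝒰 : Ultrafilter K} (hU : Unif 𝒰 m) {d : ℕ} (hd : 1 ≤ d)
    (ih : ∀ d' < d, QStmt 𝒰 m d') {p : K → (Fin m → ℝ) × ℝ} (hp : Tendsto p 𝒰 (𝓝 0))
    {h : (Fin m → ℝ) × ℝ → ℝ} (hh : AnalyticAt ℝ h 0) (hord : OrdZ h d)
    (htsch : ∀ᶠ x in 𝓝 (0 : Fin m → ℝ), dz^[d - 1] h (x, 0) = 0) {b : (Fin m → ℝ) → ℝ}
    (hb : AnalyticAt ℝ b 0) (hb0 : ¬ ∀ᶠ x in 𝓝 (0 : Fin m → ℝ), b x = 0) :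
    ∃ (π : (Fin m → ℝ) × ℝ → (Fin m → ℝ) × ℝ) (q : K → (Fin m → ℝ) × ℝ),
      Rel 𝒰 p π q ∧ NCP fun y => h (π y) * b (π y).1 := by
  obtain ⟨a, u, ha, hu, hexp, hcoef, hlead⟩ := exists_taylor d hh
  have hu0 : u 0 ≠ 0 := fun h0 => hord.2 (by rw [hlead, h0, mul_zero])
  have hfac : ∀ i : ℕ, (i.factorial : ℝ) ≠ 0 := fun i => by positivity
  have ha0 : ∀ i < d, a i 0 = 0 := by
    intro i hi
    have h1 := (hcoef i hi).self_of_nhds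
    rw [show ((0 : Fin m → ℝ), (0 : ℝ)) = 0 from rfl, hord.1 i hi] at h1
    exact (mul_eq_zero.1 h1.symm).resolve_left (hfac i)
  have had : ∀ᶠ x in 𝓝 (0 : Fin m → ℝ), a (d - 1) x = 0 := by
    filter_upwards [htsch, hcoef (d - 1) (by omega)] with x h1 h2
    rw [h1] at h2
    exact (mul_eq_zero.1 h2.symm).resolve_left (hfac _)
  by_cases hall : ∀ i < d, ∀ᶠ x in 𝓝 (0 : Fin m → ℝ), a i x = 0
  · refine exists_ncp_of_pow hU hp hu hu0 (d := d) ?_ hb hb0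
    have hall' : ∀ᶠ x in 𝓝 (0 : Fin m → ℝ), ∀ i ∈ Finset.range d, a i x = 0 :=
      (Filter.eventually_all_finset _).2 fun i hi => hall i (Finset.mem_range.1 hi)
    filter_upwards [hexp, (continuous_fst.tendsto (0 : (Fin m → ℝ) × ℝ)).eventually hall']
      with y h1 h2
    rw [h1, Finset.sum_eq_zero (fun i hi => by rw [h2 i hi, zero_mul]), zero_add]
  simp only [not_forall] at hall
  obtain ⟨π₁, q₁, β, a', hrel₁, hncb, hβ, ha', haa', hsharp, hzero⟩ :=
    exists_prep hU (p := fun k => (p k).1) ((continuous_fst.tendsto 0).comp hp) d a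
      (fun i _ => ha i) ha0 (by
        obtain ⟨i, hi, h1⟩ := hall
        exact ⟨i, hi, h1⟩) hb hb0
  have hR₁ := hrel₁.prodMap hp
  set P₁ : (Fin m → ℝ) × ℝ → (Fin m → ℝ) × ℝ := fun y => (π₁ y.1, y.2) with hP₁
  set Q₁ : K → (Fin m → ℝ) × ℝ := fun k => (q₁ k, (p k).2) with hQ₁
  set u₁ : (Fin m → ℝ) × ℝ → ℝ := fun y => u (P₁ y) with hu₁def
  have hu₁ : AnalyticAt ℝ u₁ 0 := hR₁.comp_analyticAt hu
  have hu₁0 : u₁ 0 ≠ 0 := by simp only [hu₁def]; rwa [hR₁.zero]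
  have hexp₁ : ∀ᶠ y in 𝓝 0, h (P₁ y) =
      ∑ i ∈ Finset.range d, mon β y.1 ^ (d - i) * a' i y.1 * y.2 ^ i + y.2 ^ d * u₁ y := by
    have haa : ∀ᶠ x in 𝓝 (0 : Fin m → ℝ), ∀ i ∈ Finset.range d,
        a i (π₁ x) = mon β x ^ (d - i) * a' i x :=
      (Filter.eventually_all_finset _).2 fun i hi => haa' i (Finset.mem_range.1 hi)
    filter_upwards [hR₁.tendsto_map.eventually hexp,
      (continuous_fst.tendsto (0 : (Fin m → ℝ) × ℝ)).eventually haa] with y h1 h2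
    rw [h1]
    congr 1
    exact Finset.sum_congr rfl fun i hi => by rw [← h2 i hi]
  rcases exists_bound_or 𝒰 (fun k => (Q₁ k).2) (fun k => mon β (Q₁ k).1) with ⟨C, hC⟩ | ⟨hne, hlim⟩
  · -- the roots are of size `mon β`: rescale `z` by it
    obtain ⟨c, hc⟩ := exists_tendsto_of_bounded 𝒰 (r := fun k => (Q₁ k).2 / mon β (Q₁ k).1)
      (C := |C|) (by
        filter_upwards [hC] with k hk
        rw [abs_div]
        refine div_le_of_le_mul₀ (abs_nonneg _) (abs_nonneg _) (hk.trans ?_)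
        gcongr
        exact le_abs_self C)
    set σ : (Fin m → ℝ) × ℝ → (Fin m → ℝ) × ℝ := fun y => (y.1, mon β y.1 * (y.2 + c)) with hσ
    have hmonfst : AnalyticAt ℝ (fun y : (Fin m → ℝ) × ℝ => mon β y.1) 0 :=
      AnalyticAt.fun_comp (f := fun y : (Fin m → ℝ) × ℝ => y.1) (analyticAt_mon β _) analyticAt_fst
    have hzc : AnalyticAt ℝ (fun y : (Fin m → ℝ) × ℝ => y.2 + c) 0 :=
      analyticAt_snd.add analyticAt_const
    have hR₂ : Rel 𝒰 Q₁ σ (fun k => ((Q₁ k).1, (Q₁ k).2 / mon β (Q₁ k).1 - c)) := by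
      refine ⟨analyticAt_fst.prod (hmonfst.mul hzc), ?_, ?_, ?_⟩
      · simp [hσ, mon_at_zero hβ]
      · refine Tendsto.prodMk_nhds ((continuous_fst.tendsto 0).comp hR₁.tend) ?_
        simpa using hc.sub_const c
      · filter_upwards [hC] with k hk
        simp only [hσ, sub_add_cancel]
        ext i
        · rfl
        · by_cases h0 : mon β (Q₁ k).1 = 0
          · rw [h0] at hk ⊢
            simp only [abs_zero, mul_zero, abs_nonpos_iff] at hk
            simp [hk]
          · exact mul_div_cancel₀ _ h0
    set h' : (Fin m → ℝ) × ℝ → ℝ := fun y =>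
      ∑ i ∈ Finset.range d, a' i y.1 * (y.2 + c) ^ i + (y.2 + c) ^ d * u₁ (σ y) with hh'def
    have hh' : AnalyticAt ℝ h' 0 := by
      refine AnalyticAt.add (Finset.analyticAt_fun_sum _ fun i hi => ?_)
        ((hzc.pow d).mul (hR₂.comp_analyticAt hu₁))
      exact (AnalyticAt.fun_comp (f := fun y : (Fin m → ℝ) × ℝ => y.1)
        (ha' i (Finset.mem_range.1 hi)) analyticAt_fst).mul (hzc.pow i)
    have hfac₂ : ∀ᶠ y in 𝓝 0, h (P₁ (σ y)) = mon β y.1 ^ d * h' y := by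
      filter_upwards [hR₂.tendsto_map.eventually hexp₁] with y hy
      rw [hy]
      simp only [hh'def, hσ, mul_add, Finset.mul_sum]
      congr 1
      · refine Finset.sum_congr rfl fun i hi => ?_
        have : mon β y.1 ^ d = mon β y.1 ^ (d - i) * mon β y.1 ^ i := by
          rw [← pow_add, Nat.sub_add_cancel (Finset.mem_range.1 hi).le]
        rw [this, ← mul_add, mul_pow]
        ring
      · rw [← mul_add, mul_pow]; ring
    obtain ⟨n, hn, g, hg, hg0, hgt⟩ := exists_order_lt hd (fun i => a' i 0) hu₁0 c
      (hzero (d - 1) (by omega) had) hsharp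
    obtain ⟨d', hd', hord'⟩ := exists_ordZ hh' hg.continuousAt hg0 (n := n)
      (Eventually.of_forall fun t => by
        rw [← hgt t]
        simp only [hh'def, hσ, mon_at_zero hβ, zero_mul]
        rfl)
    have hb₁ : AnalyticAt ℝ (fun x => b (π₁ x)) 0 := hrel₁.comp_analyticAt hb
    obtain ⟨π₃, q₃, hR₃, hnc₃⟩ := ih d' (hd'.trans_lt hn) _ hR₂.tend h' hh' hord'
      (fun x => mon β x ^ d * b (π₁ x)) (((analyticAt_mon β 0).pow d).mul hb₁)
      (not_eventually_mul_zero ((analyticAt_mon β 0).pow d) hb₁ (by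
        have := not_eventually_mon_zero (d • β)
        simpa only [mon_smul] using this) (by
        obtain ⟨αb, ub, hub, hub0, hbe⟩ := hncb
        intro hz
        refine not_eventually_mul_zero (analyticAt_mon αb 0) hub (not_eventually_mon_zero αb)
          (not_eventually_zero_of_ne hub0) ?_
        filter_upwards [hbe, hz] with x h1 h2
        rw [← h1, h2]))
    refine ⟨_, q₃, hR₁.trans (hR₂.trans hR₃), hnc₃.congr ?_⟩
    filter_upwards [hR₃.tendsto_map.eventually hfac₂] with y hy
    rw [hy]
    simp only [hP₁, hσ]
    ring
  · -- `z` dominates `mon β`: after monomial substitutions `mon β` is divisible by `z`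
    obtain ⟨π₂, q₂, w, hR₂, hpres, hw, hw0, hmonw⟩ :=
      exists_toric 𝒰 _ β rfl Q₁ hR₁.tend hne hlim
    set v : (Fin m → ℝ) × ℝ → ℝ := fun y =>
      ∑ i ∈ Finset.range d, w y ^ (d - i) * a' i (π₂ y).1 + u₁ (π₂ y) with hv
    have hvan : AnalyticAt ℝ v 0 := by
      refine AnalyticAt.add (Finset.analyticAt_fun_sum _ fun i hi => ?_) (hR₂.comp_analyticAt hu₁)
      exact (hw.pow _).mul (AnalyticAt.comp_fst (ha' i (Finset.mem_range.1 hi)) hR₂.an hR₂.zero)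
    have hv0 : v 0 ≠ 0 := by
      have : v 0 = u₁ 0 := by
        simp only [hv, hw0, hR₂.zero]
        rw [Finset.sum_eq_zero, zero_add]
        intro i hi
        rw [zero_pow (by have := Finset.mem_range.1 hi; omega), zero_mul]
      rwa [this]
    refine ⟨_, q₂, hR₁.trans hR₂,
      ((hpres _ (NCP.of_NC hncb d)).mul_unit hvan hv0).congr ?_⟩
    filter_upwards [hR₂.tendsto_map.eventually hexp₁, hmonw] with y h1 h2
    have h3 : h (P₁ (π₂ y)) = (π₂ y).2 ^ d * v y := by
      rw [h1]
      simp only [hv, mul_add, Finset.mul_sum, h2, mul_pow]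
      congr 1
      refine Finset.sum_congr rfl fun i hi => ?_
      have : (π₂ y).2 ^ d = (π₂ y).2 ^ (d - i) * (π₂ y).2 ^ i := by
        rw [← pow_add, Nat.sub_add_cancel (Finset.mem_range.1 hi).le]
      rw [this]; ring
    rw [h3]
    simp only [hP₁]
    ring

/-- The Tschirnhaus transformation: the equation `∂_z ^ (d - 1) h = 0` has a solution `z = ψ x` by
the implicit function theorem, and after translation by `ψ` the lemma `qStmt_step` applies. -/
theorem qStmt_all {𝒰 : Ultrafilter K} (hU : Unif 𝒰 m) (d : ℕ) : QStmt 𝒰 m d := by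
  induction d using Nat.strong_induction_on with
  | _ d ih =>
  intro p hp h hh hord b hb hb0
  rcases Nat.eq_zero_or_pos d with rfl | hd
  · exact exists_ncp_of_pow hU hp hh hord.2 (d := 0) (Eventually.of_forall fun y => by simp) hb hb0
  have hsucc : d - 1 + 1 = d := by omega
  obtain ⟨ψ, hψ, hψ0, hψe⟩ := exists_implicit (analyticAt_dz_iter hh (d - 1))
    (hord.1 (d - 1) (by omega)) (by
      have := hord.2
      rw [← hsucc, Function.iterate_succ_apply'] at this
      exact this)
  set τ : (Fin m → ℝ) × ℝ → (Fin m → ℝ) × ℝ := fun y => (y.1, y.2 + ψ y.1) with hτ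
  have hpx : Tendsto (fun k => (p k).1) 𝒰 (𝓝 0) := (continuous_fst.tendsto 0).comp hp
  have hpz : Tendsto (fun k => (p k).2) 𝒰 (𝓝 0) := (continuous_snd.tendsto 0).comp hp
  have hR : Rel 𝒰 p τ (fun k => ((p k).1, (p k).2 - ψ (p k).1)) := by
    refine ⟨analyticAt_shift hψ, by simp [hτ, hψ0], ?_, Eventually.of_forall fun k => by simp [hτ]⟩
    refine hpx.prodMk_nhds ?_
    have := hψ.continuousAt.tendsto
    rw [hψ0] at this
    simpa using hpz.sub (this.comp hpx)
  have hshift := fun k => dz_iter_shift hh hψ hψ0 k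
  have hshift0 : ∀ k, dz^[k] (fun y => h (τ y)) 0 = dz^[k] h 0 := by
    intro k
    have := (hshift k).self_of_nhds
    have h0 : ((0 : (Fin m → ℝ) × ℝ).1, (0 : (Fin m → ℝ) × ℝ).2 + ψ (0 : (Fin m → ℝ) × ℝ).1) =
        (0 : (Fin m → ℝ) × ℝ) := by
      simp [hψ0]
    dsimp only [hτ] at this ⊢
    rwa [h0] at this
  obtain ⟨π, q, hR', hnc⟩ := qStmt_step hU hd ih hR.tend (hR.comp_analyticAt hh)
    ⟨fun i hi => by rw [hshift0]; exact hord.1 i hi, by rw [hshift0]; exact hord.2⟩ (by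
      filter_upwards [tendsto_mk_zero.eventually (hshift (d - 1)), hψe] with x h1 h2
      rw [h1]
      simpa using h2) hb hb0
  exact ⟨_, q, hR.trans hR', hnc⟩

end Q
end Milnor

namespace Milnor
open Topology Filter Set

/-! ### Induction on the dimension -/

section U
variable {K : Type*} {m : ℕ}

/-- A nonzero analytic germ does not vanish identically on some line transverse to `x 0 = 0`. -/
theorem exists_good_direction {h : (Fin (m + 1) → ℝ) → ℝ} (hh : AnalyticAt ℝ h 0)
    (h0 : ¬ ∀ᶠ x in 𝓝 (0 : Fin (m + 1) → ℝ), h x = 0) :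
    ∃ v : Fin (m + 1) → ℝ, v 0 ≠ 0 ∧ ¬ ∀ᶠ s in 𝓝 (0 : ℝ), h (s • v) = 0 := by
  obtain ⟨ρ, hρ, hball⟩ := Metric.eventually_nhds_iff_ball.1 hh.eventually_analyticAt
  have hne := not_eventually_mul_zero hh (analyticAt_coord 0 0) h0 (not_eventually_coord_zero 0)
  obtain ⟨v, hv, hvb⟩ := ((not_eventually.1 hne).and_eventually
    (Metric.ball_mem_nhds (0 : Fin (m + 1) → ℝ) hρ)).exists
  refine ⟨v, right_ne_zero_of_mul hv, fun hz => left_ne_zero_of_mul hv ?_⟩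
  have han : AnalyticOnNhd ℝ (fun s : ℝ => h (s • v)) (Icc 0 1) := by
    intro s hs
    refine AnalyticAt.fun_comp (g := h) (hball _ ?_) (analyticAt_id.smul analyticAt_const)
    simp only [Metric.mem_ball, dist_zero_right, norm_smul] at hvb ⊢
    refine lt_of_le_of_lt (mul_le_of_le_one_left (norm_nonneg _) ?_) hvb
    rw [Real.norm_eq_abs, abs_of_nonneg hs.1]
    exact hs.2
  have := han.eqOn_zero_of_preconnected_of_eventuallyEq_zero isPreconnected_Icc
    (left_mem_Icc.2 zero_le_one) hz (right_mem_Icc.2 zero_le_one)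
  simpa using this

theorem NCP.toNC {h : (Fin m → ℝ) × ℝ → ℝ} (hh : NCP h) :
    NC fun y : Fin (m + 1) → ℝ => h (Fin.tail y, y 0) := by
  obtain ⟨α, k, u, hu, hu0, he⟩ := hh
  have hB : AnalyticAt ℝ (fun y : Fin (m + 1) → ℝ => (Fin.tail y, y 0)) 0 := by
    refine AnalyticAt.prod ?_ (analyticAt_coord 0 0)
    exact AnalyticAt.pi fun i => analyticAt_coord i.succ 0
  have hB0 : ((Fin.tail (0 : Fin (m + 1) → ℝ), (0 : Fin (m + 1) → ℝ) 0)) = 0 := rfl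
  refine ⟨Fin.cons k α, fun y => u (Fin.tail y, y 0), AnalyticAt.fun_comp (g := u) hu hB, hu0, ?_⟩
  have ht := hB.continuousAt.tendsto
  filter_upwards [ht.eventually he] with y hy
  rw [hy]
  simp only [mon, Fin.prod_univ_succ, Fin.tail, Fin.cons_zero, Fin.cons_succ]
  ring

/-- A linear change of coordinates gives the germ a finite order in the last variable, so that
`qStmt_all` applies. -/
theorem unif_succ {𝒰 : Ultrafilter K} (hU : Unif 𝒰 m) : Unif 𝒰 (m + 1) := by
  intro p hp h hh h0
  obtain ⟨v, hv0, hv⟩ := exists_good_direction hh h0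
  set A : (Fin m → ℝ) × ℝ → Fin (m + 1) → ℝ :=
    fun q => (Fin.cons 0 q.1 : Fin (m + 1) → ℝ) + q.2 • v with hA
  have hAan : AnalyticAt ℝ A 0 := by
    refine AnalyticAt.pi fun i => ?_
    refine Fin.cases ?_ (fun j => ?_) i
    · simp only [Pi.add_apply, Fin.cons_zero, Pi.smul_apply, smul_eq_mul]
      exact analyticAt_const.add (analyticAt_snd.mul analyticAt_const)
    · simp only [Pi.add_apply, Fin.cons_succ, Pi.smul_apply, smul_eq_mul]
      exact (AnalyticAt.fun_comp (f := fun y : (Fin m → ℝ) × ℝ => y.1) (analyticAt_coord j _)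
        analyticAt_fst).add (analyticAt_snd.mul analyticAt_const)
  have hA0 : A 0 = 0 := by
    ext i
    refine Fin.cases ?_ (fun j => ?_) i <;> simp [hA]
  have hp0 : ∀ i, Tendsto (fun k => p k i) 𝒰 (𝓝 0) := fun i => (tendsto_pi_nhds.1 hp) i
  have hR₁ : Rel 𝒰 p A (fun k => (fun j => p k j.succ - p k 0 / v 0 * v j.succ, p k 0 / v 0)) := by
    refine ⟨hAan, hA0, ?_, Eventually.of_forall fun k => ?_⟩
    · have hz : Tendsto (fun k => p k 0 / v 0) 𝒰 (𝓝 0) := by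
        simpa using (hp0 0).div_const (v 0)
      refine Tendsto.prodMk_nhds (tendsto_pi_nhds.2 fun j => ?_) hz
      simpa using (hp0 j.succ).sub (hz.mul_const (v j.succ))
    · ext i
      refine Fin.cases ?_ (fun j => ?_) i
      · simp [hA, hv0]
      · simp [hA]
  have hhA := hR₁.comp_analyticAt hh
  have hline : AnalyticAt ℝ (fun t : ℝ => h (t • v)) 0 :=
    AnalyticAt.fun_comp (g := h) (by simpa using hh) (analyticAt_id.smul analyticAt_const)
  obtain ⟨n, g, hg, hg0, hge⟩ := hline.exists_eventuallyEq_pow_smul_nonzero_iff.2 hv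
  obtain ⟨d, -, hord⟩ := exists_ordZ hhA hg.continuousAt hg0 (n := n) (by
    filter_upwards [hge.filter_mono nhdsWithin_le_nhds] with t ht
    have : A (0, t) = t • v := by
      ext i
      refine Fin.cases ?_ (fun j => ?_) i <;> simp [hA]
    rw [this, ht]
    simp)
  obtain ⟨π, q, hR₂, hnc⟩ := qStmt_all hU d _ hR₁.tend _ hhA hord (fun _ => 1) analyticAt_const
    (not_eventually_zero_of_ne one_ne_zero)
  have hR₃ : Rel 𝒰 q (fun y : Fin (m + 1) → ℝ => (Fin.tail y, y 0))
      (fun k => Fin.cons (q k).2 (q k).1) := by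
    refine ⟨?_, rfl, ?_, Eventually.of_forall fun k => by simp⟩
    · refine AnalyticAt.prod ?_ (analyticAt_coord 0 0)
      exact AnalyticAt.pi fun i => analyticAt_coord i.succ 0
    · refine tendsto_pi_nhds.2 fun i => ?_
      refine Fin.cases ?_ (fun j => ?_) i
      · simpa [Function.comp_def] using (continuous_snd.tendsto 0).comp hR₂.tend
      · simpa using tendsto_pi_nhds.1 ((continuous_fst.tendsto 0).comp hR₂.tend) j
  refine ⟨_, _, hR₁.trans (hR₂.trans hR₃), ?_⟩
  simpa using hnc.toNC

/-- Local uniformization of real analytic germs, by induction on the dimension. -/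
theorem unif_all (𝒰 : Ultrafilter K) (m : ℕ) : Unif 𝒰 m := by
  induction m with
  | zero =>
    intro p hp h hh h0
    refine ⟨_, _, Rel.refl hp, 0, h, hh, fun hz => h0 (Eventually.of_forall fun x => ?_),
      Eventually.of_forall fun x => by rw [mon_zero, one_mul]⟩
    rwa [Subsingleton.elim x 0]
  | succ m ih => exact unif_succ ih

end U
end Milnor

namespace Milnor
open Topology Filter Set

/-! ### The curve selection lemma -/

section C
variable {K : Type*}

theorem exists_sign (𝒰 : Ultrafilter K) (r : K → ℝ) :
    ∃ σ : SignType, ∀ᶠ k in (𝒰 : Filter K), SignType.sign (r k) = σ := by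
  have h : ∀ᶠ k in (𝒰 : Filter K), r k < 0 ∨ r k = 0 ∨ 0 < r k :=
    Eventually.of_forall fun k => lt_trichotomy _ _
  rw [Ultrafilter.eventually_or, Ultrafilter.eventually_or] at h
  rcases h with h | h | h
  · exact ⟨_, h.mono fun k hk => sign_neg hk⟩
  · exact ⟨0, h.mono fun k hk => by rw [hk, sign_zero]⟩
  · exact ⟨_, h.mono fun k hk => sign_pos hk⟩

theorem sign_mon {m : ℕ} (α : Fin m → ℕ) (x : Fin m → ℝ) :
    SignType.sign (mon α x) = ∏ i, SignType.sign (x i) ^ α i := by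
  change signHom (mon α x) = ∏ i, signHom (x i) ^ α i
  simp [mon, map_prod, map_pow]

theorem eventually_sign_eq {X : Type*} [TopologicalSpace X] {u : X → ℝ} {x₀ : X}
    (hu : ContinuousAt u x₀) (h0 : u x₀ ≠ 0) :
    ∀ᶠ x in 𝓝 x₀, SignType.sign (u x) = SignType.sign (u x₀) := by
  rcases h0.lt_or_gt with h | h
  · filter_upwards [hu.eventually_lt_const h] with x hx
    rw [sign_neg hx, sign_neg h]
  · filter_upwards [hu.eventually_const_lt h] with x hx
    rw [sign_pos hx, sign_pos h]

/-- After uniformizing the product of the nonzero germs `g i`, all of them are monomials times units;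
the arc is then the image of a half-line in the orthant containing the lifted points. -/
theorem curve_selection_fin {m : ℕ} {ι : Type*} [Fintype ι] (𝒰 : Ultrafilter K)
    {x : K → Fin m → ℝ} (hx : Tendsto x 𝒰 (𝓝 0)) (g : ι → (Fin m → ℝ) → ℝ)
    (hg : ∀ i, AnalyticAt ℝ (g i) 0) :
    ∃ γ : ℝ → Fin m → ℝ, AnalyticAt ℝ γ 0 ∧ γ 0 = 0 ∧ ∀ i, ∀ᶠ k in (𝒰 : Filter K),
      ∀ᶠ t in 𝓝[>] (0 : ℝ), SignType.sign (g i (γ t)) = SignType.sign (g i (x k)) := by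
  classical
  set s : Finset ι := Finset.univ.filter fun i => ¬ ∀ᶠ y in 𝓝 (0 : Fin m → ℝ), g i y = 0 with hs
  obtain ⟨π, q, hR, hnc⟩ := unif_all 𝒰 m x hx (fun y => ∏ i ∈ s, g i y)
    (Finset.analyticAt_fun_prod _ fun i _ => hg i)
    (not_eventually_prod_zero s (fun i _ => hg i) fun i hi => (Finset.mem_filter.1 hi).2)
  choose σ hσ using fun j => exists_sign 𝒰 fun k => q k j
  set w : Fin m → ℝ := fun j => (σ j : ℝ) with hw
  have hline : AnalyticAt ℝ (fun t : ℝ => t • w) 0 := analyticAt_id.smul analyticAt_const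
  have hline0 : Tendsto (fun t : ℝ => t • w) (𝓝[>] 0) (𝓝 0) := by
    have := hline.continuousAt.tendsto
    simp only [zero_smul] at this
    exact this.mono_left nhdsWithin_le_nhds
  refine ⟨fun t => π (t • w), AnalyticAt.fun_comp (g := π) (by simpa using hR.an) hline,
    by simp [hR.zero], fun i => ?_⟩
  by_cases hi : ∀ᶠ y in 𝓝 (0 : Fin m → ℝ), g i y = 0
  · filter_upwards [hx.eventually hi] with k hk
    filter_upwards [(hR.tendsto_map.comp hline0).eventually hi] with t ht
    rw [hk]
    simpa using congrArg SignType.sign ht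
  · obtain ⟨α, u, hu, hu0, he⟩ := NC.of_prod s (fun i _ => hR.comp_analyticAt (hg i)) hnc
      (i := i) (Finset.mem_filter.2 ⟨Finset.mem_univ _, hi⟩)
    have hsu := eventually_sign_eq hu.continuousAt hu0
    filter_upwards [hR.tend.eventually he, hR.tend.eventually hsu, hR.ev,
      eventually_all.2 hσ] with k h1 h2 h3 h4
    filter_upwards [hline0.eventually he, hline0.eventually hsu, self_mem_nhdsWithin]
      with t h5 h6 h7
    rw [← h3, h1, h5, sign_mul, sign_mul, h2, h6, sign_mon, sign_mon]
    congr 1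
    refine Finset.prod_congr rfl fun j _ => ?_
    rw [h4 j]
    congr 1
    rw [Pi.smul_apply, smul_eq_mul, sign_mul, sign_pos h7, one_mul, hw]
    dsimp only
    generalize σ j = a
    cases a <;> simp

/-- **Curve selection lemma.** Along an ultrafilter, points converging to the origin can be replaced
by a real analytic arc issuing from it which realizes the same sign conditions. -/
theorem curve_selection {E ι : Type*} [NormedAddCommGroup E] [NormedSpace ℝ E]
    [FiniteDimensional ℝ E] [Fintype ι] (𝒰 : Ultrafilter K) {x : K → E}
    (hx : Tendsto x 𝒰 (𝓝 0)) (g : ι → E → ℝ) (hg : ∀ i, AnalyticAt ℝ (g i) 0) :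
    ∃ γ : ℝ → E, AnalyticAt ℝ γ 0 ∧ γ 0 = 0 ∧ ∀ i, ∀ᶠ k in (𝒰 : Filter K),
      ∀ᶠ t in 𝓝[>] (0 : ℝ), SignType.sign (g i (γ t)) = SignType.sign (g i (x k)) := by
  let e : E ≃L[ℝ] (Fin (Module.finrank ℝ E) → ℝ) :=
    ContinuousLinearEquiv.ofFinrankEq (by simp)
  have hx' : Tendsto (fun k => e (x k)) 𝒰 (𝓝 0) := by
    have := (e.continuous.tendsto 0).comp hx
    rwa [map_zero] at this
  obtain ⟨γ, hγ, hγ0, hs⟩ := curve_selection_fin 𝒰 hx' (fun i y => g i (e.symm y)) fun i =>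
    AnalyticAt.fun_comp (g := g i) (by simpa using hg i) (e.symm.analyticAt 0)
  refine ⟨fun t => e.symm (γ t), (e.symm.analyticAt _).fun_comp hγ, by simp [hγ0], fun i => ?_⟩
  simpa using hs i

end C
end Milnor

namespace Milnor
open Topology Filter Set

/-! ### Osgood's lemma -/

section Osgood
open MeasureTheory Complex

theorem norm_torusMap_apply {n : ℕ} {r : ℝ} (hr : 0 ≤ r) (θ : Fin n → ℝ) (i : Fin n) :
    ‖torusMap 0 (fun _ => r) θ i‖ = r := by
  simp [torusMap, Complex.norm_exp_ofReal_mul_I, abs_of_nonneg hr]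

theorem continuous_torusMap {n : ℕ} (r : ℝ) :
    Continuous (torusMap (n := n) 0 (fun _ => r)) := by
  unfold torusMap
  fun_prop

theorem torusMap_mem_ball {n : ℕ} {r R : ℝ} (hr : 0 ≤ r) (hrR : r < R) (θ : Fin n → ℝ) :
    torusMap 0 (fun _ => r) θ ∈ Metric.ball (0 : Fin n → ℂ) R := by
  rw [mem_ball_zero_iff, pi_norm_lt_iff (hr.trans_lt hrR)]
  intro i
  rwa [norm_torusMap_apply hr]

theorem sub_ne_zero_of_norm {a b : ℂ} {r : ℝ} (ha : ‖a‖ = r) (hb : ‖b‖ < r) : a - b ≠ 0 := by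
  intro h
  rw [sub_eq_zero.1 h] at ha
  exact hb.ne ha

theorem continuous_torus_integrand {n : ℕ} {r R : ℝ} (hr : 0 < r) (hrR : r < R)
    {f : (Fin n → ℂ) → ℂ} (hf : DifferentiableOn ℂ f (Metric.ball 0 R)) {z : Fin n → ℂ}
    (hz : ∀ i, ‖z i‖ < r) :
    Continuous fun θ => (∏ i, (torusMap 0 (fun _ => r) θ i - z i)⁻¹) *
      f (torusMap 0 (fun _ => r) θ) := by
  refine Continuous.mul (continuous_finsetProd _ fun i _ => Continuous.inv₀ ?_ ?_) ?_
  · exact ((continuous_apply i).comp (continuous_torusMap r)).sub continuous_const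
  · exact fun θ => sub_ne_zero_of_norm (norm_torusMap_apply hr.le θ i) (hz i)
  · exact hf.continuousOn.comp_continuous (continuous_torusMap r) fun θ =>
      torusMap_mem_ball hr.le hrR θ

/-- Cauchy's integral formula on a polydisc. -/
theorem cauchy_torus {r R : ℝ} (hr : 0 < r) (hrR : r < R) : ∀ {n : ℕ} {f : (Fin n → ℂ) → ℂ},
    DifferentiableOn ℂ f (Metric.ball 0 R) → ∀ {z : Fin n → ℂ}, (∀ i, ‖z i‖ < r) →
    torusIntegral (fun ζ => (∏ i, (ζ i - z i)⁻¹) * f ζ) 0 (fun _ => r) =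
      (2 * Real.pi * I) ^ n * f z := by
  intro n
  induction n with
  | zero =>
    intro f hf z hz
    rw [torusIntegral_dim0]
    simp [Subsingleton.elim z 0]
  | succ n ih =>
    intro f hf z hz
    have hInt : TorusIntegrable (fun ζ => (∏ i, (ζ i - z i)⁻¹) * f ζ) 0 (fun _ : Fin (n + 1) => r) :=
      (continuous_torus_integrand hr hrR hf hz).continuousOn.integrableOn_compact isCompact_Icc
    rw [torusIntegral_succ hInt]
    have hcons : ∀ w : Fin n → ℂ, (∀ i, ‖w i‖ < R) → ∀ x : ℂ, ‖x‖ < R →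
        (Fin.cons x w : Fin (n + 1) → ℂ) ∈ Metric.ball (0 : Fin (n + 1) → ℂ) R := by
      intro w hw x hx
      rw [mem_ball_zero_iff, pi_norm_lt_iff (hr.trans hrR)]
      intro i
      refine Fin.cases ?_ (fun j => ?_) i
      · simpa using hx
      · simpa using hw j
    have hstep : ∀ x ∈ Metric.sphere (0 : ℂ) r,
        torusIntegral (fun y : Fin n → ℂ => (∏ i, ((Fin.cons x y : Fin (n + 1) → ℂ) i - z i)⁻¹) *
          f (Fin.cons x y)) ((0 : Fin (n + 1) → ℂ) ∘ Fin.succ)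
          ((fun _ : Fin (n + 1) => r) ∘ Fin.succ) =
        (x - z 0)⁻¹ • ((2 * Real.pi * I) ^ n * f (Fin.cons x (Fin.tail z))) := by
      intro x hx
      have hx' : ‖x‖ < R := by rw [mem_sphere_zero_iff_norm.1 hx]; exact hrR
      have hdiff : DifferentiableOn ℂ (fun y : Fin n → ℂ => f (Fin.cons x y))
          (Metric.ball 0 R) := by
        refine hf.comp (g := f) (f := fun y : Fin n → ℂ => (Fin.cons x y : Fin (n + 1) → ℂ)) ?_ ?_
        · refine differentiableOn_pi.2 fun i => ?_
          refine Fin.cases ?_ (fun j => ?_) i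
          · simp
          · simp only [Fin.cons_succ]
            fun_prop
        · intro y hy
          rw [mem_ball_zero_iff, pi_norm_lt_iff (hr.trans hrR)] at hy
          exact hcons y hy x hx'
      rw [← ih hdiff (z := Fin.tail z) fun i => hz i.succ, smul_eq_mul,
        ← torusIntegral_const_mul]
      simp only [Fin.prod_univ_succ, Fin.cons_zero, Fin.cons_succ, Fin.tail, mul_assoc]
      rfl
    change (circleIntegral _ 0 r) = _
    rw [circleIntegral.integral_congr hr.le hstep]
    have hd1 : DifferentiableOn ℂ (fun x : ℂ =>
        (2 * Real.pi * I) ^ n * f (Fin.cons x (Fin.tail z))) (Metric.ball 0 R) := by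
      refine DifferentiableOn.const_mul ?_ _
      refine hf.comp (g := f) (f := fun x : ℂ => (Fin.cons x (Fin.tail z) : Fin (n + 1) → ℂ)) ?_ ?_
      · refine differentiableOn_pi.2 fun i => ?_
        refine Fin.cases ?_ (fun j => ?_) i
        · simp only [Fin.cons_zero]
          fun_prop
        · simp only [Fin.cons_succ]
          exact differentiableOn_const _
      · intro x hx
        exact hcons _ (fun i => (hz i.succ).trans hrR) x (by simpa using hx)
    rw [circleIntegral_sub_inv_smul_of_differentiable_on_off_countable (s := ∅) countable_empty
      (by simpa using hz 0)
      (hd1.continuousOn.mono (Metric.closedBall_subset_ball hrR))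
      (fun x hx => hd1.differentiableAt (Metric.isOpen_ball.mem_nhds
        (Metric.ball_subset_ball hrR.le hx.1)))]
    rw [Fin.cons_self_tail, smul_eq_mul, pow_succ]
    ring

/-- **Osgood's lemma**: the Cauchy kernel is an analytic function of `z` with values in the Banach
algebra of continuous functions on the (compact) torus, and `f` is its image under a continuous
linear functional. -/
theorem analyticAt_pi_of_differentiableOn {n : ℕ} {R : ℝ} (hR : 0 < R) {f : (Fin n → ℂ) → ℂ}
    (hf : DifferentiableOn ℂ f (Metric.ball 0 R)) : AnalyticAt ℂ f 0 := by
  obtain ⟨r, hr, hrR⟩ := exists_between hR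
  set Q : Set (Fin n → ℝ) := Icc 0 fun _ => 2 * Real.pi with hQ
  have : CompactSpace Q := isCompact_iff_compactSpace.1 isCompact_Icc
  let μ : Measure Q := Measure.comap Subtype.val volume
  have : IsFiniteMeasure μ := by
    refine ⟨?_⟩
    rw [show μ = Measure.comap Subtype.val volume from rfl,
      (MeasurableEmbedding.subtype_coe measurableSet_Icc).comap_apply]
    rw [Set.image_univ, Subtype.range_coe]
    exact isCompact_Icc.measure_lt_top
  have hintg : ∀ g : C(Q, ℂ), Integrable g μ := fun g =>
    g.continuous.integrable_of_hasCompactSupport (HasCompactSupport.of_compactSpace _)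
  let L : C(Q, ℂ) →L[ℂ] ℂ := LinearMap.mkContinuous
    { toFun := fun g => ∫ θ, g θ ∂μ
      map_add' := fun g h => integral_add (hintg g) (hintg h)
      map_smul' := fun c g => integral_const_mul c _ } (μ.real univ) (by
        intro g
        rw [mul_comm]
        exact norm_integral_le_of_norm_le_const (Eventually.of_forall fun θ => g.norm_coe_le_norm θ))
  let a : Fin n → C(Q, ℂ) := fun i =>
    ⟨fun θ => torusMap 0 (fun _ => r) θ.1 i,
      (continuous_apply i).comp ((continuous_torusMap r).comp continuous_subtype_val)⟩
  let W : C(Q, ℂ) := ⟨fun θ => (∏ i, (r : ℂ) * exp (θ.1 i * I) * I) * f (torusMap 0 (fun _ => r) θ.1),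
    (continuous_finsetProd _ fun i _ => (by fun_prop : Continuous fun θ : Fin n → ℝ =>
      (r : ℂ) * exp (θ i * I) * I).comp continuous_subtype_val).mul
      (hf.continuousOn.comp_continuous ((continuous_torusMap r).comp continuous_subtype_val)
        fun θ => torusMap_mem_ball hr.le hrR θ.1)⟩
  let one : C(Q, ℂ) := 1
  have hunit : ∀ i (c : ℂ), ‖c‖ < r → ∃ u : (C(Q, ℂ))ˣ, (u : C(Q, ℂ)) = a i - c • one ∧
      ∀ θ : Q, (u⁻¹ : (C(Q, ℂ))ˣ).1 θ = (torusMap 0 (fun _ => r) θ.1 i - c)⁻¹ := by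
    intro i c hc
    have hne : ∀ θ : Q, torusMap 0 (fun _ => r) θ.1 i - c ≠ 0 := fun θ =>
      sub_ne_zero_of_norm (norm_torusMap_apply hr.le θ.1 i) hc
    let b : C(Q, ℂ) := ⟨fun θ => (torusMap 0 (fun _ => r) θ.1 i - c)⁻¹,
      Continuous.inv₀ ((a i).continuous.sub continuous_const) hne⟩
    refine ⟨⟨a i - c • one, b, ?_, ?_⟩, rfl, fun θ => rfl⟩
    · ext θ
      simpa [a, b, one] using mul_inv_cancel₀ (hne θ)
    · ext θ
      simpa [a, b, one] using inv_mul_cancel₀ (hne θ)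
  have hker : AnalyticAt ℂ (fun z : Fin n → ℂ =>
      ((2 * Real.pi * I : ℂ) ^ n)⁻¹ * L (W * ∏ i, Ring.inverse (a i - z i • one))) 0 := by
    refine analyticAt_const.mul ((L.analyticAt _).fun_comp (analyticAt_const.mul ?_))
    refine Finset.analyticAt_fun_prod _ fun i _ => ?_
    obtain ⟨u, hu, -⟩ := hunit i 0 (by simpa using hr)
    refine AnalyticAt.fun_comp (g := Ring.inverse) (f := fun z : Fin n → ℂ => a i - z i • one) ?_
      (analyticAt_const.sub (AnalyticAt.smul
        ((ContinuousLinearMap.proj (R := ℂ) (φ := fun _ : Fin n => ℂ) i).analyticAt _)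
        analyticAt_const))
    have := analyticAt_inverse (𝕜 := ℂ) u
    rw [hu] at this
    exact this
  refine hker.congr ?_
  filter_upwards [Metric.ball_mem_nhds (0 : Fin n → ℂ) hr] with z hz
  have hz' : ∀ i, ‖z i‖ < r := by
    rwa [mem_ball_zero_iff, pi_norm_lt_iff hr] at hz
  have hc := cauchy_torus hr hrR hf hz'
  have hL : L (W * ∏ i, Ring.inverse (a i - z i • one)) =
      torusIntegral (fun ζ => (∏ i, (ζ i - z i)⁻¹) * f ζ) 0 (fun _ => r) := by
    unfold torusIntegral
    rw [← integral_subtype_comap measurableSet_Icc]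
    change ∫ θ, (W * ∏ i, Ring.inverse (a i - z i • one)) θ ∂μ = _
    refine integral_congr_ae (Eventually.of_forall fun θ => ?_)
    have : ∀ i, (Ring.inverse (a i - z i • one)) θ = (torusMap 0 (fun _ => r) θ.1 i - z i)⁻¹ := by
      intro i
      obtain ⟨u, hu, hu'⟩ := hunit i (z i) (hz' i)
      rw [← hu, Ring.inverse_unit, hu']
    simp only [ContinuousMap.mul_apply, ContinuousMap.prod_apply, this, W, ContinuousMap.coe_mk,
      smul_eq_mul]
    ring
  rw [hL, hc, inv_mul_cancel_left₀]
  simp [Real.pi_ne_zero]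

/-- Osgood's lemma at the origin of Euclidean space. -/
theorem analyticAt_of_differentiableOn {n : ℕ} {U : Set (EuclideanSpace ℂ (Fin n))}
    (hU : IsOpen U) (h0U : (0 : EuclideanSpace ℂ (Fin n)) ∈ U) {f : EuclideanSpace ℂ (Fin n) → ℂ}
    (hf : DifferentiableOn ℂ f U) : AnalyticAt ℂ f 0 := by
  let e : EuclideanSpace ℂ (Fin n) ≃L[ℂ] (Fin n → ℂ) := EuclideanSpace.equiv (Fin n) ℂ
  have hmem : e.symm ⁻¹' U ∈ 𝓝 (0 : Fin n → ℂ) :=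
    e.symm.continuous.continuousAt.preimage_mem_nhds (by simpa using hU.mem_nhds h0U)
  obtain ⟨R, hR, hball⟩ := Metric.mem_nhds_iff.1 hmem
  have h1 : AnalyticAt ℂ (fun y => f (e.symm y)) 0 := by
    refine analyticAt_pi_of_differentiableOn hR ?_
    exact hf.comp (g := f) e.symm.differentiableOn fun y hy => hball hy
  have h2 : AnalyticAt ℂ (fun x => f (e.symm (e x))) 0 :=
    AnalyticAt.fun_comp (g := fun y => f (e.symm y)) (by simpa using h1) (e.analyticAt 0)
  simpa using h2

end Osgood
end Milnor

namespace Milnor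
open Topology Filter Set

/-! ### Milnor's lemma on the gradient -/

section D
open scoped ContDiff ComplexConjugate InnerProductSpace

variable {E : Type*} [NormedAddCommGroup E] [InnerProductSpace ℂ E] [CompleteSpace E]

/-- `‖z‖² ‖∇f‖² - |⟪∇f, z⟫|²`, which measures how far `∇f` is from being a multiple of `z`. -/
noncomputable def kap (f : E → ℂ) (z : E) : ℝ :=
  ‖z‖ ^ 2 * ‖gradient f z‖ ^ 2 - ‖fderiv ℂ f z z‖ ^ 2

/-- `conj f` times the radial derivative of `f`. -/
noncomputable def rad (f : E → ℂ) (z : E) : ℂ := conj (f z) * fderiv ℂ f z z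

theorem inner_gradient (f : E → ℂ) (z v : E) : ⟪gradient f z, v⟫_ℂ = fderiv ℂ f z v := by
  simp [gradient, InnerProductSpace.toDual_symm_apply]

theorem inner_self_c {F : Type*} [NormedAddCommGroup F] [InnerProductSpace ℂ F] (x : F) :
    ⟪x, x⟫_ℂ = (‖x‖ : ℂ) ^ 2 :=
  inner_self_eq_norm_sq_to_K x

theorem analyticAt_of_contDiffAt {F G : Type*} [NormedAddCommGroup F] [NormedSpace ℝ F]
    [NormedAddCommGroup G] [NormedSpace ℝ G] [CompleteSpace G] {g : F → G} {x : F}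
    (h : ContDiffAt ℝ ω g x) : AnalyticAt ℝ g x := by
  rw [← contDiffWithinAt_univ, contDiffWithinAt_omega_iff_analyticWithinAt] at h
  exact analyticWithinAt_univ.1 h

/-- The component of `∇f` orthogonal to `z` (scaled by `‖z‖ ^ 2`) vanishes exactly when `kap f z`
does, for `z ≠ 0`. -/
theorem norm_sq_tangent (f : E → ℂ) (z : E) :
    ‖((‖z‖ ^ 2 : ℝ) : ℂ) • gradient f z - ⟪z, gradient f z⟫_ℂ • z‖ ^ 2 = ‖z‖ ^ 2 * kap f z := by
  have h1 : ‖fderiv ℂ f z z‖ ^ 2 = ‖⟪z, gradient f z⟫_ℂ‖ ^ 2 := by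
    rw [← inner_gradient, norm_inner_symm]
  have h2 : ⟪gradient f z, z⟫_ℂ = conj ⟪z, gradient f z⟫_ℂ := (inner_conj_symm _ _).symm
  have key : ((‖((‖z‖ ^ 2 : ℝ) : ℂ) • gradient f z - ⟪z, gradient f z⟫_ℂ • z‖ ^ 2 : ℝ) : ℂ) =
      ((‖z‖ ^ 2 * kap f z : ℝ) : ℂ) := by
    push_cast
    rw [← inner_self_c]
    simp only [inner_sub_left, inner_sub_right, inner_smul_left, inner_smul_right, kap, h1, h2]
    have h3 : ((‖⟪z, gradient f z⟫_ℂ‖ ^ 2 : ℝ) : ℂ) =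
        conj ⟪z, gradient f z⟫_ℂ * ⟪z, gradient f z⟫_ℂ := by
      rw [Complex.conj_mul']; norm_cast
    push_cast at h3 ⊢
    rw [h3, inner_self_c, inner_self_c]
    simp only [map_pow, Complex.conj_ofReal]
    ring
  exact_mod_cast key

theorem kap_nonneg (f : E → ℂ) (z : E) : 0 ≤ kap f z := by
  unfold kap
  rw [sub_nonneg, ← mul_pow, ← inner_gradient, mul_comm]
  gcongr
  exact norm_inner_le_norm _ _

theorem contDiffAt_gradient {f : E → ℂ} {z : E} (hf : AnalyticAt ℂ f z) :
    ContDiffAt ℝ ω (gradient f) z := by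
  let T : (E →L[ℂ] ℂ) →L[ℝ] E :=
    { toFun := fun ℓ => (InnerProductSpace.toDual ℂ E).symm ℓ
      map_add' := fun a b => map_add _ a b
      map_smul' := fun r a => by
        have h : r • a = (r : ℂ) • a := rfl
        rw [h, map_smulₛₗ]
        simp
      cont := (InnerProductSpace.toDual ℂ E).symm.continuous }
  have h1 : ContDiffAt ℝ ω (fderiv ℂ f) z := (hf.fderiv.restrictScalars (𝕜 := ℝ)).contDiffAt
  exact T.contDiff.contDiffAt.comp z h1

theorem contDiffAt_real {F : Type*} [NormedAddCommGroup F] [NormedSpace ℂ F] {f : F → ℂ} {z : F}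
    (hf : AnalyticAt ℂ f z) : ContDiffAt ℝ ω f z :=
  (hf.restrictScalars (𝕜 := ℝ)).contDiffAt

theorem contDiffAt_radial {F : Type*} [NormedAddCommGroup F] [NormedSpace ℂ F] {f : F → ℂ} {z : F}
    (hf : AnalyticAt ℂ f z) :
    ContDiffAt ℝ ω (fun z => fderiv ℂ f z z) z :=
  (hf.fderiv.contDiffAt.clm_apply contDiffAt_id).restrict_scalars ℝ

theorem contDiffAt_conj {F : Type*} [NormedAddCommGroup F] [NormedSpace ℝ F] {f : F → ℂ} {z : F}
    (hf : ContDiffAt ℝ ω f z) : ContDiffAt ℝ ω (fun z => conj (f z)) z :=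
  Complex.conjCLE.contDiff.contDiffAt.comp z hf

theorem contDiffAt_rad {f : E → ℂ} {z : E} (hf : AnalyticAt ℂ f z) :
    ContDiffAt ℝ ω (rad f) z :=
  (contDiffAt_conj (contDiffAt_real hf)).mul (contDiffAt_radial hf)

theorem contDiffAt_normSq {F : Type*} [NormedAddCommGroup F] [InnerProductSpace ℂ F]
    {G : Type*} [NormedAddCommGroup G] [NormedSpace ℝ G] {g : G → F} {z : G}
    (hg : ContDiffAt ℝ ω g z) : ContDiffAt ℝ ω (fun z => ‖g z‖ ^ 2) z :=
  hg.norm_sq ℂ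

theorem contDiffAt_kap {f : E → ℂ} {z : E} (hf : AnalyticAt ℂ f z) :
    ContDiffAt ℝ ω (kap f) z :=
  ((contDiffAt_normSq contDiffAt_id).mul (contDiffAt_normSq (contDiffAt_gradient hf))).sub
    (contDiffAt_normSq (contDiffAt_radial hf))

theorem contDiffAt_re {F : Type*} [NormedAddCommGroup F] [NormedSpace ℝ F] {f : F → ℂ} {z : F}
    (hf : ContDiffAt ℝ ω f z) : ContDiffAt ℝ ω (fun z => (f z).re) z :=
  Complex.reCLM.contDiff.contDiffAt.comp z hf

theorem contDiffAt_im {F : Type*} [NormedAddCommGroup F] [NormedSpace ℝ F] {f : F → ℂ} {z : F}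
    (hf : ContDiffAt ℝ ω f z) : ContDiffAt ℝ ω (fun z => (f z).im) z :=
  Complex.imCLM.contDiff.contDiffAt.comp z hf

/-- Where `∇f` is a multiple of `z`, derivatives of `f` are determined by the radial one. -/
theorem fderiv_of_kap_nonpos {f : E → ℂ} {z : E} (h : kap f z ≤ 0) (v : E) :
    ((‖z‖ ^ 2 : ℝ) : ℂ) * fderiv ℂ f z v = fderiv ℂ f z z * ⟪z, v⟫_ℂ := by
  have h1 := norm_sq_tangent f z
  have h2 : ((‖z‖ ^ 2 : ℝ) : ℂ) • gradient f z - ⟪z, gradient f z⟫_ℂ • z = 0 := by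
    rw [← norm_eq_zero, ← sq_eq_zero_iff]
    exact le_antisymm (h1.le.trans (mul_nonpos_of_nonneg_of_nonpos (sq_nonneg _) h)) (sq_nonneg _)
  have h3 := congrArg (fun x => ⟪x, v⟫_ℂ) (sub_eq_zero.1 h2)
  simp only [inner_smul_left, inner_gradient, Complex.conj_ofReal, inner_conj_symm] at h3
  exact h3

/-- An analytic arc vanishing at `0` but not identically is `t ^ (p + 1) • A t` with `A 0 ≠ 0`. -/
theorem exists_arc_order {F : Type*} [NormedAddCommGroup F] [NormedSpace ℝ F] {g : ℝ → F}
    (hg : AnalyticAt ℝ g 0) (h0 : g 0 = 0) (hne : ∀ᶠ t in 𝓝[>] (0 : ℝ), g t ≠ 0) :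
    ∃ (p : ℕ) (A : ℝ → F), AnalyticAt ℝ A 0 ∧ A 0 ≠ 0 ∧
      ∀ᶠ t in 𝓝 (0 : ℝ), g t = t ^ (p + 1) • A t := by
  obtain ⟨p, A, hA, hA0, he⟩ := hg.exists_eventuallyEq_pow_smul_nonzero_iff.2 fun hz => by
    obtain ⟨t, h1, h2⟩ := (hne.and (hz.filter_mono nhdsWithin_le_nhds)).exists
    exact h1 h2
  rcases p with _ | p
  · have := he.self_of_nhds
    simp [h0] at this
    exact absurd this.symm hA0
  · exact ⟨p, A, hA, hA0, by simpa using he⟩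

theorem hasDerivAt_arc {F : Type*} [NormedAddCommGroup F] [NormedSpace ℝ F] [CompleteSpace F]
    {g A : ℝ → F} {p : ℕ}
    (hA : AnalyticAt ℝ A 0) (he : ∀ᶠ t in 𝓝 (0 : ℝ), g t = t ^ (p + 1) • A t) :
    ∀ᶠ t in 𝓝 (0 : ℝ), HasDerivAt g (t ^ p • ((p + 1 : ℝ) • A t + t • deriv A t)) t := by
  filter_upwards [he.eventually_nhds, hA.eventually_analyticAt] with t h1 h2
  have h3 := (hasDerivAt_pow (p + 1) t).smul h2.differentiableAt.hasDerivAt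
  refine (h3.congr_of_eventuallyEq h1).congr_deriv ?_
  simp only [Nat.add_sub_cancel, smul_add, smul_smul]
  rw [add_comm]
  push_cast
  congr 2
  ring

/-- Milnor's lemma: near the origin, where `f ≠ 0`, if `∇f` is a complex multiple of `z` then
the logarithmic radial derivative of `f` has argument in `(-π/4, π/4)`. -/
theorem milnor_lemma [FiniteDimensional ℂ E] {f : E → ℂ} (hf : AnalyticAt ℂ f 0) (hf0 : f 0 = 0) :
    ∃ ρ > 0, ∀ z : E, ‖z‖ < ρ → f z ≠ 0 → 0 < kap f z ∨ |(rad f z).im| < (rad f z).re := by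
  -- Otherwise curve selection gives an analytic arc `γ` at `0` along which `f ≠ 0`, `kap f ≤ 0` and
  -- `rad f` lies outside the open cone `|Im| < Re`.
  by_contra hcon
  push Not at hcon
  choose x hxn hxf hxk hxr using fun k : ℕ => hcon (1 / ((k : ℝ) + 1)) (by positivity)
  have hx : Tendsto x (hyperfilter ℕ) (𝓝 0) := by
    refine Tendsto.mono_left ?_ Nat.hyperfilter_le_atTop
    refine squeeze_zero_norm (fun k => (hxn k).le) tendsto_one_div_add_atTop_nhds_zero_nat
  let g : Fin 4 → E → ℝ := ![fun z => ‖f z‖ ^ 2, kap f, fun z => (rad f z).re - (rad f z).im,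
    fun z => (rad f z).re + (rad f z).im]
  have hr := contDiffAt_rad hf
  have hg : ∀ i, AnalyticAt ℝ (g i) 0 := by
    intro i
    refine analyticAt_of_contDiffAt ?_
    fin_cases i
    · exact contDiffAt_normSq (contDiffAt_real hf)
    · exact contDiffAt_kap hf
    · exact (contDiffAt_re hr).sub (contDiffAt_im hr)
    · exact (contDiffAt_re hr).add (contDiffAt_im hr)
  obtain ⟨γ, hγ, hγ0, hs⟩ := curve_selection (hyperfilter ℕ) hx g hg
  obtain ⟨k, hk⟩ := (eventually_all.2 hs).exists
  have hsig := eventually_all.2 hk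
  have hmono : ∀ {a b : ℝ}, SignType.sign a = SignType.sign b → b ≤ 0 → a ≤ 0 := by
    intro a b hab hb
    by_contra ha
    rw [sign_pos (not_le.1 ha)] at hab
    exact hb.not_gt (sign_eq_one_iff.1 hab.symm)
  have hne : ∀ᶠ t in 𝓝[>] (0 : ℝ), f (γ t) ≠ 0 := by
    filter_upwards [hsig] with t ht h0
    have h1 : SignType.sign (‖f (γ t)‖ ^ 2) = SignType.sign (‖f (x k)‖ ^ 2) := ht 0
    have h2 : 0 < ‖f (x k)‖ ^ 2 := by have := norm_pos_iff.2 (hxf k); positivity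
    rw [sign_pos h2, h0] at h1
    simp at h1
  have hkap : ∀ᶠ t in 𝓝[>] (0 : ℝ), kap f (γ t) ≤ 0 := by
    filter_upwards [hsig] with t ht
    exact hmono (ht 1) (hxk k)
  have hrad : ∀ᶠ t in 𝓝[>] (0 : ℝ), (rad f (γ t)).re ≤ |(rad f (γ t)).im| := by
    filter_upwards [hsig] with t ht
    rcases le_abs.1 (hxr k) with h | h
    · have := hmono (a := (rad f (γ t)).re - (rad f (γ t)).im) (b := (rad f (x k)).re - (rad f (x k)).im)
        (ht 2) (by linarith)
      exact le_abs.2 (Or.inl (by linarith))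
    · have := hmono (a := (rad f (γ t)).re + (rad f (γ t)).im) (b := (rad f (x k)).re + (rad f (x k)).im)
        (ht 3) (by linarith)
      exact le_abs.2 (Or.inr (by linarith))
  have hfan : AnalyticAt ℝ f (γ 0) := by rw [hγ0]; exact hf.restrictScalars
  obtain ⟨p, A, hA, hA0, hFe⟩ := exists_arc_order (g := fun t => f (γ t)) (hfan.fun_comp hγ)
    (by simp [hγ0, hf0]) hne
  obtain ⟨q, a, ha, ha0, hγe⟩ := exists_arc_order hγ hγ0
    (hne.mono fun t ht h0 => ht (by rw [h0, hf0]))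
  have hF' := hasDerivAt_arc hA hFe
  have hγ' := hasDerivAt_arc ha hγe
  have hγt : Tendsto γ (𝓝 0) (𝓝 0) := by
    have := hγ.continuousAt.tendsto
    rwa [hγ0] at this
  -- Differentiating `f ∘ γ` and using that `∇f` is a multiple of `γ t`, the quotient `N / M` equals
  -- `rad f (γ t) / t ^ (2 (p + 1))`; its limit at `0` is a positive real number.
  set N : ℝ → ℂ := fun t => ((‖a t‖ ^ 2 : ℝ) : ℂ) * ((p + 1 : ℝ) • A t + t • deriv A t) *
    conj (A t) with hN
  set M : ℝ → ℂ := fun t => ⟪a t, (q + 1 : ℝ) • a t + t • deriv a t⟫_ℂ with hM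
  have hNM : ∀ᶠ t in 𝓝[>] (0 : ℝ), rad f (γ t) * M t = ((t ^ (2 * (p + 1)) : ℝ) : ℂ) * N t := by
    filter_upwards [hkap, self_mem_nhdsWithin, hFe.filter_mono nhdsWithin_le_nhds,
      hγe.filter_mono nhdsWithin_le_nhds, hF'.filter_mono nhdsWithin_le_nhds,
      hγ'.filter_mono nhdsWithin_le_nhds,
      (hγt.eventually hf.eventually_analyticAt).filter_mono nhdsWithin_le_nhds]
      with t h1 h2 h3 h4 h5 h6 h7
    have ht : (0 : ℝ) < t := h2
    have h8 : fderiv ℂ f (γ t) (t ^ q • ((q + 1 : ℝ) • a t + t • deriv a t)) =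
        t ^ p • ((p + 1 : ℝ) • A t + t • deriv A t) :=
      (((h7.differentiableAt.hasFDerivAt.restrictScalars ℝ).comp_hasDerivAt t h6)).unique h5
    have h9 := fderiv_of_kap_nonpos h1 (t ^ q • ((q + 1 : ℝ) • a t + t • deriv a t))
    rw [h8] at h9
    have h10 : ‖γ t‖ ^ 2 = t ^ (2 * (q + 1)) * ‖a t‖ ^ 2 := by
      rw [h4, norm_smul, mul_pow, Real.norm_eq_abs, sq_abs]
      ring
    have h11 : ⟪γ t, t ^ q • ((q + 1 : ℝ) • a t + t • deriv a t)⟫_ℂ =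
        ((t ^ (2 * q + 1) : ℝ) : ℂ) * M t := by
      rw [h4, hM]
      simp only [← Complex.coe_smul, inner_smul_left, inner_smul_right, Complex.conj_ofReal]
      push_cast
      ring
    rw [h10, h11] at h9
    have h12 : conj (f (γ t)) = ((t ^ (p + 1) : ℝ) : ℂ) * conj (A t) := by
      rw [h3, Complex.real_smul, map_mul, Complex.conj_ofReal]
    have h13 : ((t ^ (2 * q + 1) : ℝ) : ℂ) ≠ 0 := by
      exact_mod_cast (pow_pos ht _).ne'
    refine mul_left_cancel₀ h13 ?_
    calc ((t ^ (2 * q + 1) : ℝ) : ℂ) * (rad f (γ t) * M t)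
        = conj (f (γ t)) * (fderiv ℂ f (γ t) (γ t) * (((t ^ (2 * q + 1) : ℝ) : ℂ) * M t)) := by
          simp only [rad]; ring
      _ = _ := by
          rw [← h9, h12, hN, Complex.real_smul]
          push_cast
          ring
  have hMc : ContinuousAt M 0 := by
    have h1 := ha.continuousAt
    have h2 := ha.deriv.continuousAt
    exact h1.inner ((h1.const_smul (q + 1 : ℝ)).add (continuousAt_id.smul h2))
  have hNc : ContinuousAt N 0 := by
    have h1 := hA.continuousAt
    have h2 := hA.deriv.continuousAt
    refine ContinuousAt.mul (ContinuousAt.mul ?_ ?_) (Complex.continuous_conj.continuousAt.comp h1)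
    · exact Complex.continuous_ofReal.continuousAt.comp (ha.continuousAt.norm.pow 2)
    · exact (h1.const_smul (p + 1 : ℝ)).add (continuousAt_id.smul h2)
  have hapos : 0 < ‖a 0‖ := norm_pos_iff.2 ha0
  have hApos : 0 < ‖A 0‖ := norm_pos_iff.2 hA0
  have hM0 : M 0 = (((q + 1) * ‖a 0‖ ^ 2 : ℝ) : ℂ) := by
    have h : M 0 = ⟪a 0, ((q + 1 : ℝ) : ℂ) • a 0⟫_ℂ := by
      simp only [hM, zero_smul, add_zero, Complex.coe_smul]
    rw [h, inner_smul_right, inner_self_c]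
    push_cast
    ring
  have hM0' : M 0 ≠ 0 := by
    rw [hM0]
    exact_mod_cast (by positivity : (0 : ℝ) < (q + 1) * ‖a 0‖ ^ 2).ne'
  have hN0 : N 0 = ((‖a 0‖ ^ 2 * ((p + 1) * ‖A 0‖ ^ 2) : ℝ) : ℂ) := by
    simp only [hN, zero_smul, add_zero]
    rw [Complex.real_smul, mul_assoc, mul_assoc, Complex.mul_conj']
    push_cast
    ring
  set R : ℝ → ℂ := fun t => N t / M t with hR
  have hRc : ContinuousAt R 0 := hNc.div hMc hM0'
  have hR0 : R 0 = ((‖a 0‖ ^ 2 * ((p + 1) * ‖A 0‖ ^ 2) / ((q + 1) * ‖a 0‖ ^ 2) : ℝ) : ℂ) := by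
    simp only [hR]
    rw [hM0, hN0]
    push_cast
    rfl
  have hev : ∀ᶠ t in 𝓝 (0 : ℝ), |(R t).im| < (R t).re := by
    refine ContinuousAt.eventually_lt ?_ ?_ ?_
    · exact (Complex.continuous_im.continuousAt.comp hRc).abs
    · exact Complex.continuous_re.continuousAt.comp hRc
    · rw [hR0, Complex.ofReal_im, Complex.ofReal_re, abs_zero]
      positivity
  obtain ⟨t, h1, h2, h3, h4, h5⟩ := (hNM.and (hrad.and
    ((hev.filter_mono nhdsWithin_le_nhds).and
      (((hMc.eventually_ne hM0').filter_mono nhdsWithin_le_nhds).and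
        eventually_mem_nhdsWithin)))).exists
  have h6 : rad f (γ t) = ((t ^ (2 * (p + 1)) : ℝ) : ℂ) * R t := by
    simp only [hR]
    rw [← mul_div_assoc, ← h1, mul_div_cancel_right₀ _ h4]
  have h7 : 0 < t ^ (2 * (p + 1)) := pow_pos h5 _
  rw [h6, Complex.re_ofReal_mul, Complex.im_ofReal_mul, abs_mul, abs_of_pos h7] at h2
  exact absurd (mul_lt_mul_of_pos_left h3 h7) (not_lt.2 h2)

end D
end Milnor

namespace Milnor
open Topology Filter Set

/-! ### Flows of bounded Lipschitz vector fields -/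

section E1
open scoped NNReal

variable {E : Type*} [NormedAddCommGroup E] [NormedSpace ℝ E]

theorem integralCurve_unique {X : E → E} {K : ℝ≥0} (hK : LipschitzWith K X) {T : ℝ} {γ δ : ℝ → E}
    (hT : 0 < T)
    (hγ : ∀ t ∈ Ioo (-T) T, HasDerivAt γ (X (γ t)) t)
    (hδ : ∀ t ∈ Ioo (-T) T, HasDerivAt δ (X (δ t)) t) (h0 : γ 0 = δ 0) :
    EqOn γ δ (Ioo (-T) T) :=
  ODE_solution_unique_of_mem_Ioo (v := fun _ => X) (s := fun _ => univ) (K := K)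
    (fun _ _ => hK.lipschitzOnWith) (t₀ := 0) ⟨by linarith, hT⟩
    (fun t ht => ⟨hγ t ht, mem_univ _⟩) (fun t ht => ⟨hδ t ht, mem_univ _⟩) h0

/-- Integral curves of a bounded Lipschitz field exist for all times: Picard-Lindelöf applies on
every interval `(-T, T)`, and the solutions glue by uniqueness. -/
theorem exists_integralCurve [CompleteSpace E] {X : E → E} {K L : ℝ≥0} (hK : LipschitzWith K X)
    (hL : ∀ x, ‖X x‖ ≤ L) (x : E) :
    ∃ γ : ℝ → E, γ 0 = x ∧ ∀ t, HasDerivAt γ (X (γ t)) t := by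
  have h1 : ∀ T : ℝ, 0 < T → ∃ α : ℝ → E, α 0 = x ∧
      ∀ t ∈ Ioo (-T) T, HasDerivAt α (X (α t)) t := by
    intro T hT
    have hPL : IsPicardLindelof (fun _ => X) (tmin := -T) (tmax := T) ⟨0, by simp [hT.le]⟩ x
        (L * ⟨T, hT.le⟩) 0 L K := by
      refine IsPicardLindelof.of_time_independent (fun y _ => hL y) hK.lipschitzOnWith ?_
      have h : ((L * ⟨T, hT.le⟩ : ℝ≥0) : ℝ) = L * T := rfl
      simp [h]
    obtain ⟨α, h0, hα⟩ := hPL.exists_eq_forall_mem_Icc_hasDerivWithinAt₀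
    exact ⟨α, h0, fun t ht => (hα t (Ioo_subset_Icc_self ht)).hasDerivAt
      (Icc_mem_nhds ht.1 ht.2)⟩
  choose! α hα0 hα using h1
  have hag : ∀ S T : ℝ, 0 < S → S ≤ T → EqOn (α S) (α T) (Ioo (-S) S) := by
    intro S T hS hST
    refine integralCurve_unique hK hS (hα S hS) (fun t ht => hα T (by linarith) t ?_) ?_
    · exact ⟨by linarith [ht.1], by linarith [ht.2]⟩
    · rw [hα0 S hS, hα0 T (by linarith)]
  have hpos : ∀ t : ℝ, 0 < |t| + 1 := fun t => by positivity
  refine ⟨fun t => α (|t| + 1) t, by simpa using hα0 1 one_pos, fun t => ?_⟩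
  have hp2 : 0 < |t| + 2 := by positivity
  have hmem : ∀ s : ℝ, s ∈ Ioo (-(|s| + 1)) (|s| + 1) := fun s =>
    ⟨by linarith [neg_abs_le s], by linarith [le_abs_self s]⟩
  have hev : (fun s => α (|s| + 1) s) =ᶠ[𝓝 t] α (|t| + 2) := by
    have : ∀ᶠ s in 𝓝 t, |s| < |t| + 1 := continuous_abs.continuousAt.eventually_lt_const (by simp)
    filter_upwards [this] with s hs
    exact hag _ _ (hpos s) (by linarith) (hmem s)
  have := hα (|t| + 2) hp2 t ⟨by linarith [neg_abs_le t], by linarith [le_abs_self t]⟩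
  rw [← hev.self_of_nhds] at this
  exact this.congr_of_eventuallyEq hev

/-- Grönwall's estimate for two integral curves. -/
theorem dist_integralCurve_le {X : E → E} {K : ℝ≥0} (hK : LipschitzWith K X) {γ δ : ℝ → E}
    (hγ : ∀ t, HasDerivAt γ (X (γ t)) t) (hδ : ∀ t, HasDerivAt δ (X (δ t)) t) (t : ℝ) :
    dist (γ t) (δ t) ≤ dist (γ 0) (δ 0) * Real.exp (K * |t|) := by
  have main : ∀ {X : E → E} {γ δ : ℝ → E}, LipschitzWith K X →
      (∀ t, HasDerivAt γ (X (γ t)) t) → (∀ t, HasDerivAt δ (X (δ t)) t) →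
      ∀ t, 0 ≤ t → dist (γ t) (δ t) ≤ dist (γ 0) (δ 0) * Real.exp (K * t) := by
    intro X γ δ hK hγ hδ t ht
    have := dist_le_of_trajectories_ODE (v := fun _ => X) (a := 0) (b := t) (f := γ) (g := δ)
      (fun _ => hK)
      (fun s _ => (hγ s).continuousAt.continuousWithinAt) (fun s _ => (hγ s).hasDerivWithinAt)
      (fun s _ => (hδ s).continuousAt.continuousWithinAt) (fun s _ => (hδ s).hasDerivWithinAt)
      le_rfl t ⟨ht, le_rfl⟩
    simpa using this
  rcases le_total 0 t with ht | ht
  · rw [abs_of_nonneg ht]; exact main hK hγ hδ t ht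
  · rw [abs_of_nonpos ht]
    have hrev : ∀ {γ : ℝ → E}, (∀ t, HasDerivAt γ (X (γ t)) t) →
        ∀ t, HasDerivAt (fun s => γ (-s)) (-X (γ (-t))) t := by
      intro γ h t
      have := (h (-t)).scomp t (hasDerivAt_neg t)
      simpa [Function.comp_def] using this
    have := main (X := fun z => -X z) (γ := fun s => γ (-s)) (δ := fun s => δ (-s))
      hK.neg (hrev hγ) (hrev hδ) (-t) (by linarith)
    simpa using this

/-- A bounded Lipschitz vector field has a continuous global flow. -/
theorem exists_flow [CompleteSpace E] {X : E → E} {K L : ℝ≥0} (hK : LipschitzWith K X)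
    (hL : ∀ x, ‖X x‖ ≤ L) :
    ∃ Φ : ℝ → E → E, (∀ x, Φ 0 x = x) ∧ (∀ x t, HasDerivAt (fun s => Φ s x) (X (Φ t x)) t) ∧
      Continuous (fun q : ℝ × E => Φ q.1 q.2) ∧ ∀ s t x, Φ s (Φ t x) = Φ (s + t) x := by
  choose γ h0 hγ using exists_integralCurve hK hL
  refine ⟨fun t x => γ x t, h0, hγ, ?_, ?_⟩
  · rw [continuous_iff_continuousAt]
    rintro ⟨t, x⟩
    have hg : Tendsto (fun q : ℝ × E => dist q.2 x * Real.exp (K * |q.1|) + dist (γ x q.1) (γ x t))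
        (𝓝 (t, x)) (𝓝 0) := by
      have hc : ContinuousAt (fun q : ℝ × E => γ x q.1) (t, x) :=
        ContinuousAt.comp (f := Prod.fst) (g := γ x) (hγ x t).continuousAt continuousAt_fst
      have hc2 : ContinuousAt (fun q : ℝ × E =>
          dist q.2 x * Real.exp (K * |q.1|) + dist (γ x q.1) (γ x t)) (t, x) := by
        refine ContinuousAt.add (by fun_prop) (hc.dist continuousAt_const)
      simpa [ContinuousAt] using hc2
    refine tendsto_iff_dist_tendsto_zero.2 (squeeze_zero (fun _ => dist_nonneg) (fun q => ?_) hg)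
    refine (dist_triangle _ (γ x q.1) _).trans (add_le_add_left ?_ _)
    simpa [h0] using dist_integralCurve_le hK (hγ q.2) (hγ x) q.1
  · intro s t x
    have h1 : ∀ u, HasDerivAt (fun u => γ x (u + t)) (X (γ x (u + t))) u := fun u => by
      simpa using (hγ x (u + t)).comp_add_const u t
    exact integralCurve_unique hK (T := |s| + 1) (by positivity) (fun u _ => hγ (γ x t) u)
      (fun u _ => h1 u) (by simp [h0])
      ⟨by linarith [neg_abs_le s], by linarith [le_abs_self s]⟩

end E1
end Milnor

namespace Milnor
open Topology Filter Set

/-! ### The lifting vector field -/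

section E2
open scoped ContDiff ComplexConjugate InnerProductSpace

variable {E : Type*} [NormedAddCommGroup E] [InnerProductSpace ℂ E] [CompleteSpace E]

/-- A smooth nonnegative cutoff, positive exactly where `|Im s| < Re s`, `s = rad f z`. -/
noncomputable def cone (f : E → ℂ) (z : E) : ℝ :=
  Real.smoothTransition (rad f z).re *
    Real.smoothTransition ((rad f z).re ^ 2 - (rad f z).im ^ 2)

theorem cone_nonneg (f : E → ℂ) (z : E) : 0 ≤ cone f z :=
  mul_nonneg (Real.smoothTransition.nonneg _) (Real.smoothTransition.nonneg _)

theorem cone_pos {f : E → ℂ} {z : E} (h : |(rad f z).im| < (rad f z).re) : 0 < cone f z := by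
  refine mul_pos (Real.smoothTransition.pos_of_pos ((abs_nonneg _).trans_lt h))
    (Real.smoothTransition.pos_of_pos ?_)
  have := sq_lt_sq' (by linarith [abs_nonneg (rad f z).im]) h
  rw [sq_abs] at this
  linarith

theorem cone_mul_abs_im_le (f : E → ℂ) (z : E) :
    cone f z * |(rad f z).im| ≤ cone f z * (rad f z).re := by
  rcases (cone_nonneg f z).eq_or_lt with h | h
  · simp [← h]
  · refine mul_le_mul_of_nonneg_left ?_ h.le
    have h1 : 0 < (rad f z).re := by
      by_contra h1
      rw [cone, Real.smoothTransition.zero_of_nonpos (not_lt.1 h1)] at h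
      simp at h
    have h2 : 0 < (rad f z).re ^ 2 - (rad f z).im ^ 2 := by
      by_contra h2
      rw [cone, Real.smoothTransition.zero_of_nonpos (not_lt.1 h2)] at h
      simp at h
    exact abs_le_of_sq_le_sq (by linarith) h1.le

/-- The denominator of the lifting field: positive as soon as one of the two alternatives of
`milnor_lemma` holds. -/
noncomputable def den (f : E → ℂ) (z : E) : ℝ := cone f z * (rad f z).re + kap f z

/-- A vector field tangent to the spheres along which `f` turns at unit angular speed. It combines
`i z`, which serves where the logarithmic radial derivative of `f` is close to the positive axis,
with the component of `∇f` orthogonal to `z`, which serves where `kap f z > 0`. -/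
noncomputable def fld (f : E → ℂ) (z : E) : E :=
  (Complex.I * ((den f z)⁻¹ : ℝ)) • (((‖f z‖ ^ 2 * cone f z : ℝ) : ℂ) • z +
    f z • (((‖z‖ ^ 2 : ℝ) : ℂ) • gradient f z - ⟪z, gradient f z⟫_ℂ • z))

theorem cone_mul_re_nonneg (f : E → ℂ) (z : E) : 0 ≤ cone f z * (rad f z).re :=
  (mul_nonneg (cone_nonneg f z) (abs_nonneg _)).trans (cone_mul_abs_im_le f z)

theorem den_pos {f : E → ℂ} {z : E} (h : 0 < kap f z ∨ |(rad f z).im| < (rad f z).re) :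
    0 < den f z := by
  unfold den
  rcases h with h | h
  · linarith [cone_mul_re_nonneg f z]
  · have := mul_pos (cone_pos h) ((abs_nonneg _).trans_lt h)
    linarith [kap_nonneg f z]

/-- Along `fld`, the logarithmic derivative of `f` is `i` plus a real number, which is at most `1` in
absolute value by `abs_cone_im_div_den_le`. -/
theorem fderiv_fld {f : E → ℂ} {z : E} (h : 0 < den f z) :
    fderiv ℂ f z (fld f z) =
      f z * (Complex.I + (-(cone f z * (rad f z).im / den f z) : ℝ)) := by
  have hG : fderiv ℂ f z (gradient f z) = (‖gradient f z‖ : ℂ) ^ 2 := by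
    rw [← inner_gradient, inner_self_c]
  have hz : ⟪z, gradient f z⟫_ℂ * fderiv ℂ f z z = (‖fderiv ℂ f z z‖ : ℂ) ^ 2 := by
    rw [← inner_conj_symm, inner_gradient, Complex.conj_mul']
  have hr : (‖f z‖ : ℂ) ^ 2 * fderiv ℂ f z z = f z * rad f z := by
    rw [rad, ← Complex.mul_conj']; ring
  have hd : (den f z : ℂ) ≠ 0 := by exact_mod_cast h.ne'
  have hden : (den f z : ℂ) = cone f z * (rad f z).re +
      ((‖z‖ : ℂ) ^ 2 * (‖gradient f z‖ : ℂ) ^ 2 - (‖fderiv ℂ f z z‖ : ℂ) ^ 2) := by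
    rw [den, kap]; push_cast; ring
  have hs : rad f z = (rad f z).re + (rad f z).im * Complex.I := (Complex.re_add_im _).symm
  have key : fderiv ℂ f z (fld f z) * den f z = Complex.I * (f z) *
      (cone f z * rad f z + ((‖z‖ : ℂ) ^ 2 * (‖gradient f z‖ : ℂ) ^ 2 -
        (‖fderiv ℂ f z z‖ : ℂ) ^ 2)) := by
    simp only [fld, map_smul, map_add, map_sub, smul_eq_mul, hG, hz]
    push_cast
    field_simp
    linear_combination (cone f z : ℂ) * hr
  rw [← mul_left_inj' hd, key]
  push_cast
  field_simp
  rw [hden]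
  linear_combination (Complex.I * cone f z * f z) * hs + cone f z * f z * (rad f z).im * Complex.I_sq

theorem abs_cone_im_div_den_le {f : E → ℂ} {z : E} (h : 0 < den f z) :
    |-(cone f z * (rad f z).im / den f z)| ≤ 1 := by
  rw [abs_neg, abs_div, abs_mul, abs_of_nonneg (cone_nonneg f z), abs_of_pos h, div_le_one h]
  exact (cone_mul_abs_im_le f z).trans (by unfold den; linarith [kap_nonneg f z])

/-- The field `fld` is tangent to the spheres centred at the origin. -/
theorem inner_fld (f : E → ℂ) (z : E) : (⟪z, fld f z⟫_ℂ).re = 0 := by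
  have : ⟪z, fld f z⟫_ℂ = Complex.I * (((den f z)⁻¹ * (‖f z‖ ^ 2 * cone f z * ‖z‖ ^ 2) : ℝ) : ℂ) := by
    simp only [fld, inner_smul_right, inner_add_right, inner_sub_right, inner_self_c]
    push_cast
    ring
  rw [this, Complex.I_mul_re, Complex.ofReal_im, neg_zero]

theorem contDiffAt_cone {f : E → ℂ} {z : E} (hf : AnalyticAt ℂ f z) :
    ContDiffAt ℝ 1 (cone f) z := by
  have h1 := (contDiffAt_re (contDiffAt_rad hf)).of_le (n := ω) (m := 1) (by simp)
  have h2 := (contDiffAt_im (contDiffAt_rad hf)).of_le (n := ω) (m := 1) (by simp)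
  exact ((Real.smoothTransition.contDiff.contDiffAt (n := 1)).comp z h1).mul
    ((Real.smoothTransition.contDiff.contDiffAt (n := 1)).comp z ((h1.pow 2).sub (h2.pow 2)))

theorem contDiffAt_den {f : E → ℂ} {z : E} (hf : AnalyticAt ℂ f z) :
    ContDiffAt ℝ 1 (den f) z := by
  have h1 := (contDiffAt_re (contDiffAt_rad hf)).of_le (n := ω) (m := 1) (by simp)
  exact ((contDiffAt_cone hf).mul h1).add ((contDiffAt_kap hf).of_le (by simp))

theorem contDiffAt_ofReal {g : E → ℝ} {z : E} (hg : ContDiffAt ℝ 1 g z) :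
    ContDiffAt ℝ 1 (fun x => (g x : ℂ)) z :=
  Complex.ofRealCLM.contDiff.contDiffAt.comp z hg

theorem contDiffAt_fld {f : E → ℂ} {z : E} (hf : AnalyticAt ℂ f z) (h : 0 < den f z) :
    ContDiffAt ℝ 1 (fld f) z := by
  have hG : ContDiffAt ℝ 1 (gradient f) z := (contDiffAt_gradient hf).of_le (by simp)
  have hfr : ContDiffAt ℝ 1 f z := (contDiffAt_real hf).of_le (by simp)
  have hn : ContDiffAt ℝ 1 (fun x : E => ((‖x‖ ^ 2 : ℝ))) z :=
    (contDiffAt_normSq contDiffAt_id).of_le (n := ω) (by simp)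
  have hfn : ContDiffAt ℝ 1 (fun x : E => ((‖f x‖ ^ 2 : ℝ))) z :=
    (contDiffAt_normSq (contDiffAt_real hf)).of_le (n := ω) (by simp)
  have hin : ContDiffAt ℝ 1 (fun x => ⟪x, gradient f x⟫_ℂ) z := contDiffAt_id.inner ℂ hG
  have hden := contDiffAt_ofReal ((contDiffAt_den hf).inv h.ne')
  have hc := contDiffAt_ofReal (hfn.mul (contDiffAt_cone hf))
  unfold fld
  exact (contDiffAt_const.mul hden).smul ((hc.smul contDiffAt_id).add
    (hfr.smul (((contDiffAt_ofReal hn).smul hG).sub (hin.smul contDiffAt_id))))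

end E2
end Milnor

namespace Milnor
open Topology Filter Set

/-! ### The cut-off flow -/

section E3
open scoped ContDiff ComplexConjugate InnerProductSpace NNReal

/-- A smooth cutoff equal to `1` on a compact set and compactly supported in an open one. -/
theorem exists_cutoff {E : Type*} [NormedAddCommGroup E] [NormedSpace ℝ E] [FiniteDimensional ℝ E]
    {K Ω : Set E} (hK : IsCompact K) (hΩ : IsOpen Ω) (h : K ⊆ Ω) :
    ∃ χ : E → ℝ, ContDiff ℝ 1 χ ∧ HasCompactSupport χ ∧ tsupport χ ⊆ Ω ∧ (∀ x ∈ K, χ x = 1) ∧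
      ∀ x, χ x ∈ Icc (0 : ℝ) 1 := by
  obtain ⟨K', hK', h1, h2⟩ := exists_compact_between hK hΩ h
  have : ProperSpace E := FiniteDimensional.proper ℝ E
  obtain ⟨χ, h0, h1', hI⟩ := exists_contMDiffMap_zero_one_of_isClosed (n := 1)
    (modelWithCornersSelf ℝ E) (s := (interior K')ᶜ) (t := K) isOpen_interior.isClosed_compl
    hK.isClosed (disjoint_left.2 fun x hx hx' => hx (h1 hx'))
  have hs : tsupport χ ⊆ K' := by
    refine closure_minimal (fun x hx => ?_) hK'.isClosed
    by_contra hx'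
    exact hx (h0 (fun h => hx' (interior_subset h)))
  exact ⟨χ, χ.contMDiff.contDiff, hK'.of_isClosed_subset (isClosed_tsupport _) hs, hs.trans h2,
    fun x hx => h1' hx, hI⟩

/-- Solution of the scalar linear equation `dg/dt = c g`. -/
theorem hasDerivAt_phase {g c : ℝ → ℂ} (hc : Continuous c) (hg : ∀ t, HasDerivAt g (g t * c t) t)
    (t : ℝ) : g t = g 0 * Complex.exp (∫ s in (0 : ℝ)..t, c s) := by
  have hC : ∀ t, HasDerivAt (fun t => ∫ s in (0 : ℝ)..t, c s) (c t) t := fun t =>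
    hc.integral_hasStrictDerivAt 0 t |>.hasDerivAt
  have hd : ∀ t, HasDerivAt (fun t => g t * Complex.exp (-∫ s in (0 : ℝ)..t, c s)) 0 t := by
    intro t
    convert! (hg t).mul (hC t).neg.cexp using 1
    ring
  have := is_const_of_deriv_eq_zero (fun t => (hd t).differentiableAt) (fun t => (hd t).deriv) t 0
  simp only [intervalIntegral.integral_same, neg_zero, Complex.exp_zero, mul_one] at this
  rw [← this, mul_assoc, ← Complex.exp_add]
  simp

variable {E : Type*} [NormedAddCommGroup E] [InnerProductSpace ℂ E] [FiniteDimensional ℂ E]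

/-- Flow of the field `fld`, cut off away from the compact set `‖x‖ = ε`, `|f x| ≥ η e ^ (-8)`. Since
`log |f|` varies at speed at most `1` along it, trajectories starting in `|f| ≥ η` do not feel the
cutoff for `|t| < 8`. The last clause is uniqueness: it makes the flows for different `η` agree. -/
theorem exists_lift_flow [CompleteSpace E] {f : E → ℂ} {R : ℝ}
    (han : ∀ z, ‖z‖ < R → AnalyticAt ℂ f z)
    (hden : ∀ z, ‖z‖ < R → f z ≠ 0 → 0 < den f z) {ε : ℝ} (hε : ε < R) {η : ℝ} (hη : 0 < η) :
    ∃ Φ : ℝ → E → E, Continuous (fun q : ℝ × E => Φ q.1 q.2) ∧ (∀ x, Φ 0 x = x) ∧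
      (∀ s t x, Φ s (Φ t x) = Φ (s + t) x) ∧
      (∀ x, ‖x‖ = ε → η ≤ ‖f x‖ → ∀ t, |t| < 8 → HasDerivAt (fun s => Φ s x) (fld f (Φ t x)) t ∧
        ‖Φ t x‖ = ε ∧ ‖f x‖ * Real.exp (-8) ≤ ‖f (Φ t x)‖ ∧
        f (Φ t x) / ‖f (Φ t x)‖ = Complex.exp (t * Complex.I) * (f x / ‖f x‖)) ∧
      (∀ γ : ℝ → E, (∀ t, |t| < 8 → HasDerivAt γ (fld f (γ t)) t ∧ ‖γ t‖ = ε ∧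
        η * Real.exp (-8) ≤ ‖f (γ t)‖) → ∀ t, |t| < 8 → γ t = Φ t (γ 0)) := by
  have : FiniteDimensional ℝ E := FiniteDimensional.complexToReal E
  have : ProperSpace E := FiniteDimensional.proper ℝ E
  have hfc : ContinuousOn f (Metric.ball 0 R) := fun z hz =>
    (han z (by simpa using hz)).continuousAt.continuousWithinAt
  have hK : IsCompact (Metric.sphere (0 : E) ε ∩ f ⁻¹' {w | η * Real.exp (-8) ≤ ‖w‖}) := by
    refine (isCompact_sphere _ _).of_isClosed_subset ?_ inter_subset_left
    refine ContinuousOn.preimage_isClosed_of_isClosed (hfc.mono fun z hz => ?_)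
      Metric.isClosed_sphere (isClosed_le continuous_const continuous_norm)
    simp at hz ⊢; linarith
  have hΩ : IsOpen (Metric.ball (0 : E) R ∩ f ⁻¹' {0}ᶜ) :=
    hfc.isOpen_inter_preimage Metric.isOpen_ball isOpen_compl_singleton
  have hηe : 0 < η * Real.exp (-8) := by positivity
  obtain ⟨χ, hχ, hχc, hχs, hχ1, hχI⟩ := exists_cutoff hK hΩ (by
    rintro z ⟨hz1, hz2⟩
    refine ⟨by simp at hz1 ⊢; linarith, ?_⟩
    simp only [mem_preimage, mem_compl_iff, mem_singleton_iff]
    intro h0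
    simp [h0] at hz2
    linarith [Real.exp_pos (-8)])
  have hmem : ∀ z ∈ tsupport χ, AnalyticAt ℂ f z ∧ 0 < den f z := fun z hz =>
    have hz' : ‖z‖ < R ∧ f z ≠ 0 := by simpa using hχs hz
    ⟨han z hz'.1, hden z hz'.1 hz'.2⟩
  let X : E → E := fun z => χ z • fld f z
  let c : E → ℂ := fun z => χ z * (Complex.I + (-(cone f z * (rad f z).im / den f z) : ℝ))
  have hev : ∀ z ∉ tsupport χ, χ =ᶠ[𝓝 z] 0 := fun z hz => notMem_tsupport_iff_eventuallyEq.1 hz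
  have hX : ContDiff ℝ 1 X := contDiff_iff_contDiffAt.2 fun z => by
    by_cases hz : z ∈ tsupport χ
    · exact hχ.contDiffAt.smul (contDiffAt_fld (hmem z hz).1 (hmem z hz).2)
    · refine (contDiffAt_const (c := (0 : E))).congr_of_eventuallyEq ?_
      filter_upwards [hev z hz] with y hy
      simp [X, hy]
  have hc : Continuous c := continuous_iff_continuousAt.2 fun z => by
    by_cases hz : z ∈ tsupport χ
    · obtain ⟨ha, hd⟩ := hmem z hz
      have h1 := (contDiffAt_cone ha).continuousAt
      have h2 := (contDiffAt_im (contDiffAt_rad ha)).continuousAt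
      have h3 := (contDiffAt_den ha).continuousAt
      exact (Complex.continuous_ofReal.continuousAt.comp hχ.continuous.continuousAt).mul
        (continuousAt_const.add (Complex.continuous_ofReal.continuousAt.comp
          ((h1.mul h2).div h3 hd.ne').neg))
    · refine (continuousAt_const (y := (0 : ℂ))).congr ?_
      filter_upwards [hev z hz] with y hy
      simp [c, hy]
  have hXs : HasCompactSupport X := hχc.smul_right
  obtain ⟨K, hKX⟩ := hX.lipschitzWith_of_hasCompactSupport hXs one_ne_zero
  obtain ⟨L, hL⟩ := hXs.exists_bound_of_continuous hX.continuous
  have hDX : ∀ z, fderiv ℂ f z (X z) = f z * c z := by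
    intro z
    by_cases hz : z ∈ tsupport χ
    · have : X z = (χ z : ℂ) • fld f z := (Complex.coe_smul _ _).symm
      rw [this, map_smul, fderiv_fld (hmem z hz).2, smul_eq_mul]
      simp only [c]; ring
    · have := (hev z hz).self_of_nhds
      simp [X, c, this]
  have hIX : ∀ z, (⟪z, X z⟫_ℂ).re = 0 := by
    intro z
    have : X z = (χ z : ℂ) • fld f z := (Complex.coe_smul _ _).symm
    rw [this, inner_smul_right, Complex.re_ofReal_mul, inner_fld, mul_zero]
  have hcre : ∀ z, |(c z).re| ≤ 1 := by
    intro z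
    by_cases hz : z ∈ tsupport χ
    · have : (c z).re = χ z * (-(cone f z * (rad f z).im / den f z)) := by
        simp only [c, Complex.re_ofReal_mul, Complex.add_re, Complex.I_re, Complex.ofReal_re,
          zero_add]
      rw [this, abs_mul, abs_of_nonneg (hχI z).1]
      exact mul_le_one₀ (hχI z).2 (abs_nonneg _) (abs_cone_im_div_den_le (hmem z hz).2)
    · have := (hev z hz).self_of_nhds
      simp [c, this]
  obtain ⟨Φ, h0, hΦ, hΦc, hgrp⟩ := exists_flow hKX (L := L.toNNReal) fun x =>
    (hL x).trans (Real.le_coe_toNNReal L)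
  have hnorm : ∀ x t, ‖Φ t x‖ = ‖x‖ := by
    intro x t
    have hd : ∀ t, HasDerivAt (fun t => RCLike.re ⟪Φ t x, Φ t x⟫_ℂ) 0 t := by
      intro t
      have h1 := ((hΦ x t).inner ℂ (hΦ x t))
      have h2 := (Complex.reCLM.hasFDerivAt.comp_hasDerivAt t h1)
      convert! h2 using 1
      have h3 : (⟪X (Φ t x), Φ t x⟫_ℂ).re = 0 := by
        rw [← inner_conj_symm, Complex.conj_re]; exact hIX _
      simp [hIX, h3]
    have := is_const_of_deriv_eq_zero (fun t => (hd t).differentiableAt) (fun t => (hd t).deriv) t 0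
    simp only [inner_self_eq_norm_sq, h0] at this
    exact (pow_left_inj₀ (norm_nonneg _) (norm_nonneg _) two_ne_zero).1 this
  have hcont : ∀ x, Continuous fun t => Φ t x := fun x =>
    hΦc.comp (continuous_id.prodMk continuous_const)
  refine ⟨Φ, hΦc, h0, hgrp, ?_, ?_⟩
  · intro x hx hfx
    have hg : ∀ t, HasDerivAt (fun t => f (Φ t x)) (f (Φ t x) * c (Φ t x)) t := by
      intro t
      rw [← hDX]
      have h1 : HasFDerivAt f (fderiv ℂ f (Φ t x)) (Φ t x) :=
        (han _ (by rw [hnorm, hx]; exact hε)).differentiableAt.hasFDerivAt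
      exact (h1.restrictScalars ℝ).comp_hasDerivAt t (hΦ x t)
    have hcc : Continuous fun t => c (Φ t x) := hc.comp (hcont x)
    have hsol := hasDerivAt_phase hcc hg
    have hCre : ∀ t, |t| < 8 → |(∫ s in (0 : ℝ)..t, c (Φ s x)).re| ≤ 8 := by
      intro t ht
      have h1 : (∫ s in (0 : ℝ)..t, c (Φ s x)).re = ∫ s in (0 : ℝ)..t, (c (Φ s x)).re :=
        (Complex.reCLM.intervalIntegral_comp_comm (hcc.intervalIntegrable 0 t)).symm
      have h2 := intervalIntegral.norm_integral_le_of_norm_le_const (a := 0) (b := t)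
        (f := fun s => (c (Φ s x)).re) (C := 1) (fun s _ => hcre _)
      rw [h1]
      simp at h2
      linarith
    have hnf : ∀ t, ‖f (Φ t x)‖ = ‖f x‖ * Real.exp (∫ s in (0 : ℝ)..t, c (Φ s x)).re := by
      intro t
      rw [hsol t, norm_mul, Complex.norm_exp, h0]
    have hlow : ∀ t, |t| < 8 → ‖f x‖ * Real.exp (-8) ≤ ‖f (Φ t x)‖ := by
      intro t ht
      rw [hnf]
      gcongr
      exact (abs_le.1 (hCre t ht)).1
    have hχt : ∀ t, |t| < 8 → χ (Φ t x) = 1 := by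
      intro t ht
      refine hχ1 _ ⟨by simp [hnorm, hx], le_trans ?_ (hlow t ht)⟩
      gcongr
    have hfx0 : 0 < ‖f x‖ := hη.trans_le hfx
    intro t ht
    refine ⟨?_, by rw [hnorm, hx], hlow t ht, ?_⟩
    · simpa [X, hχt t ht] using hΦ x t
    · have him : (∫ s in (0 : ℝ)..t, c (Φ s x)).im = t := by
        have h1 : (∫ s in (0 : ℝ)..t, c (Φ s x)).im = ∫ s in (0 : ℝ)..t, (c (Φ s x)).im :=
          (Complex.imCLM.intervalIntegral_comp_comm (hcc.intervalIntegrable 0 t)).symm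
        have h2 : ∫ s in (0 : ℝ)..t, (c (Φ s x)).im = ∫ s in (0 : ℝ)..t, (1 : ℝ) := by
          refine intervalIntegral.integral_congr fun s hs => ?_
          have hs8 : |s| < 8 := by
            have := abs_sub_left_of_mem_uIcc hs
            simp at this
            linarith
          simp only [c, hχt s hs8, Complex.ofReal_one, one_mul, Complex.add_im, Complex.I_im,
            Complex.ofReal_im, add_zero]
        rw [h1, h2]; simp
      have he : Complex.exp (∫ s in (0 : ℝ)..t, c (Φ s x)) =
          (Real.exp (∫ s in (0 : ℝ)..t, c (Φ s x)).re : ℝ) * Complex.exp (t * Complex.I) := by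
        rw [Complex.ofReal_exp, ← Complex.exp_add]
        congr 1
        conv_lhs => rw [← Complex.re_add_im (∫ s in (0 : ℝ)..t, c (Φ s x)), him]
      have hx0 : (‖f x‖ : ℂ) ≠ 0 := by exact_mod_cast hfx0.ne'
      have hE0 : ((Real.exp (∫ s in (0 : ℝ)..t, c (Φ s x)).re : ℝ) : ℂ) ≠ 0 := by
        exact_mod_cast (Real.exp_pos _).ne'
      rw [hnf t, hsol t, h0, he, Complex.ofReal_mul]
      field_simp
  · intro γ hγ t ht
    refine integralCurve_unique hKX (T := 8) (by norm_num) (fun s hs => ?_)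
      (fun s _ => hΦ (γ 0) s) (h0 _).symm (abs_lt.1 ht)
    obtain ⟨h1, h2, h3⟩ := hγ s (abs_lt.2 hs)
    have : χ (γ s) = 1 := hχ1 _ ⟨by simpa using h2, h3⟩
    simpa [X, this] using h1

end E3
end Milnor

namespace Milnor
open Topology Filter Set

/-! ### The flow on the sphere, and branches of the argument -/

section F1

variable {E : Type*} [NormedAddCommGroup E] [InnerProductSpace ℂ E] [FiniteDimensional ℂ E]

/-- The flow of `fld` on the sphere minus the zero set of `f`, for times `|t| < 8`. The bound `8`
only has to exceed `2 π`, so as to reach every point of the circle. -/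
theorem exists_milnor_flow [CompleteSpace E] {f : E → ℂ} {R : ℝ}
    (han : ∀ z, ‖z‖ < R → AnalyticAt ℂ f z)
    (hden : ∀ z, ‖z‖ < R → f z ≠ 0 → 0 < den f z) {ε : ℝ} (hε : ε < R) :
    ∃ Ψ : ℝ → E → E,
      (∀ x, ‖x‖ = ε → f x ≠ 0 → ∀ t, |t| < 8 → ‖Ψ t x‖ = ε ∧ f (Ψ t x) ≠ 0 ∧
        f (Ψ t x) / ‖f (Ψ t x)‖ = Complex.exp (t * Complex.I) * (f x / ‖f x‖) ∧
        Ψ (-t) (Ψ t x) = x) ∧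
      ContinuousOn (fun q : ℝ × E => Ψ q.1 q.2)
        {q | |q.1| < 8 ∧ ‖q.2‖ = ε ∧ f q.2 ≠ 0} := by
  have hex := fun (η : ℝ) (hη : 0 < η) => exists_lift_flow han hden hε hη
  choose! Φ hc h0 hgrp hprop huniq using hex
  have hpos : ∀ {x}, f x ≠ 0 → 0 < ‖f x‖ := fun h => norm_pos_iff.2 h
  -- the flow starting at `x` does not depend on the cutoff level `η ≤ ‖f x‖`
  have hcons : ∀ x, ‖x‖ = ε → f x ≠ 0 → ∀ η, 0 < η → η ≤ ‖f x‖ → ∀ t, |t| < 8 →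
      Φ ‖f x‖ t x = Φ η t x := by
    intro x hx hfx η hη hle t ht
    have := huniq η hη (fun s => Φ ‖f x‖ s x) (fun s hs => by
      obtain ⟨h1, h2, h3, -⟩ := hprop _ (hpos hfx) x hx le_rfl s hs
      exact ⟨h1, h2, (mul_le_mul_of_nonneg_right hle (Real.exp_pos _).le).trans h3⟩) t ht
    simpa [h0 _ (hpos hfx)] using this
  refine ⟨fun t x => Φ ‖f x‖ t x, ?_, ?_⟩
  · intro x hx hfx t ht
    obtain ⟨-, h2, h3, h4⟩ := hprop _ (hpos hfx) x hx le_rfl t ht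
    have hη : 0 < ‖f x‖ * Real.exp (-8) := mul_pos (hpos hfx) (Real.exp_pos _)
    have hne : f (Φ ‖f x‖ t x) ≠ 0 := norm_pos_iff.1 (hη.trans_le h3)
    refine ⟨h2, hne, h4, ?_⟩
    have hle : ‖f x‖ * Real.exp (-8) ≤ ‖f x‖ :=
      mul_le_of_le_one_right (norm_nonneg _) (Real.exp_le_one_iff.2 (by norm_num))
    dsimp only
    rw [hcons _ h2 hne _ hη h3 (-t) (by simpa using ht), hcons x hx hfx _ hη hle t ht,
      hgrp _ hη, neg_add_cancel, h0 _ hη]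
  · rintro ⟨t, x⟩ ⟨ht, hx, hfx⟩
    simp only at ht hx hfx
    have hη : 0 < ‖f x‖ / 2 := by linarith [hpos hfx]
    refine (hc _ hη).continuousWithinAt.congr_of_eventuallyEq ?_ ?_
    · have hfcont : ContinuousAt (fun q : ℝ × E => ‖f q.2‖) (t, x) := by
        have : ContinuousAt f x := (han x (by rw [hx]; exact hε)).continuousAt
        exact (ContinuousAt.comp (f := Prod.snd) (g := f) this continuousAt_snd).norm
      have hev : ∀ᶠ q : ℝ × E in 𝓝 (t, x), ‖f x‖ / 2 < ‖f q.2‖ :=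
        hfcont.eventually_const_lt (by dsimp only; linarith [hpos hfx])
      filter_upwards [nhdsWithin_le_nhds hev, self_mem_nhdsWithin] with q hq hq'
      exact hcons q.2 hq'.2.1 hq'.2.2 _ hη hq.le q.1 hq'.1
    · exact hcons x hx hfx _ hη (by linarith [hpos hfx]) t ht

/-- The argument of `w` on the branch through `b`, continuous away from `-b`. -/
noncomputable def branch (b w : ℂ) : ℝ := Complex.arg b + Complex.arg (w / b)

theorem exp_branch {b w : ℂ} (hb : ‖b‖ = 1) (hw : ‖w‖ = 1) :
    Complex.exp (branch b w * Complex.I) = w := by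
  have hb0 : b ≠ 0 := norm_pos_iff.1 (by rw [hb]; exact one_pos)
  have h1 := Complex.norm_mul_exp_arg_mul_I b
  have h2 := Complex.norm_mul_exp_arg_mul_I (w / b)
  rw [hb, Complex.ofReal_one, one_mul] at h1
  rw [norm_div, hb, hw, div_one, Complex.ofReal_one, one_mul] at h2
  rw [branch, Complex.ofReal_add, add_mul, Complex.exp_add, h1, h2, mul_div_cancel₀ _ hb0]

theorem abs_branch_lt (b w : ℂ) : |branch b w| < 8 := by
  have h1 := Complex.abs_arg_le_pi b
  have h2 := Complex.abs_arg_le_pi (w / b)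
  have h3 := abs_add_le (Complex.arg b) (Complex.arg (w / b))
  unfold branch
  linarith [Real.pi_lt_four]

theorem continuousOn_branch (b : ℂ) : ContinuousOn (branch b) {w | w / b ∈ Complex.slitPlane} := by
  intro w hw
  have : ContinuousAt (fun w => w / b) w := by fun_prop
  exact (continuousAt_const.add
    (ContinuousAt.comp (f := fun w => w / b) (Complex.continuousAt_arg hw) this)).continuousWithinAt

end F1
end Milnor

namespace Milnor
open Topology Filter Set

/-! ### Local trivializations -/

section F2

/-- A flow along which the phase of `f` turns at unit speed trivializes the Milnor map `φ` over the
circle minus `-b`, by `x ↦ (φ x, Ψ (-θ) x)`, where `θ` is the argument of `φ x` on the branch through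
`b`. The fibre is `φ ⁻¹ (1)`. -/
theorem isLocTrivFib_of_flow {E : Type} [NormedAddCommGroup E] {f : E → ℂ} {ε : ℝ}
    {S : Set E} (hS : ∀ x, x ∈ S ↔ ‖x‖ = ε ∧ f x ≠ 0) (hf : ContinuousOn f S)
    {φ : S → Metric.sphere (0 : ℂ) 1} (hφ : ∀ x, (φ x : ℂ) = f x.1 / ‖f x.1‖)
    {Ψ : ℝ → E → E}
    (hΨ : ∀ x, ‖x‖ = ε → f x ≠ 0 → ∀ t, |t| < 8 → ‖Ψ t x‖ = ε ∧ f (Ψ t x) ≠ 0 ∧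
        f (Ψ t x) / ‖f (Ψ t x)‖ = Complex.exp (t * Complex.I) * (f x / ‖f x‖) ∧
        Ψ (-t) (Ψ t x) = x)
    (hΨc : ContinuousOn (fun q : ℝ × E => Ψ q.1 q.2) {q | |q.1| < 8 ∧ ‖q.2‖ = ε ∧ f q.2 ≠ 0}) :
    IsLocTrivFib φ := by
  have hφc : Continuous φ := by
    refine Continuous.subtype_mk (f := fun x => (φ x : ℂ)) ?_ _
    have h1 : Continuous fun x : S => f x.1 := hf.domRestrict
    have h2 : ∀ x : S, (‖f x.1‖ : ℂ) ≠ 0 := fun x => by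
      simpa using ((hS x.1).1 x.2).2
    simp only [hφ]
    exact h1.div (Complex.continuous_ofReal.comp h1.norm) h2
  have hmem : ∀ (x : S) (t : ℝ), |t| < 8 → Ψ t x ∈ S := fun x t ht =>
    (hS _).2 ⟨(hΨ x ((hS _).1 x.2).1 ((hS _).1 x.2).2 t ht).1,
      (hΨ x ((hS _).1 x.2).1 ((hS _).1 x.2).2 t ht).2.1⟩
  have hinv : ∀ (x : S) (t : ℝ), |t| < 8 → Ψ (-t) (Ψ t x) = x := fun x t ht =>
    (hΨ x ((hS _).1 x.2).1 ((hS _).1 x.2).2 t ht).2.2.2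
  have hph : ∀ (x : S) (t : ℝ) (ht : |t| < 8),
      (φ ⟨Ψ t x, hmem x t ht⟩ : ℂ) = Complex.exp (t * Complex.I) * φ x := fun x t ht => by
    rw [hφ, hφ]
    exact (hΨ x ((hS _).1 x.2).1 ((hS _).1 x.2).2 t ht).2.2.1
  have hnorm : ∀ w : Metric.sphere (0 : ℂ) 1, ‖(w : ℂ)‖ = 1 := fun w => by simp
  refine ⟨{y : S // (φ y : ℂ) = 1}, inferInstance, hφc, fun b => ?_⟩
  have hb := hnorm b
  have hb0 : (b : ℂ) ≠ 0 := norm_pos_iff.1 (by rw [hb]; exact one_pos)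
  have hlt : ∀ w : ℂ, |-branch b w| < 8 := fun w => by simpa using abs_branch_lt b w
  have hfib : ∀ z : S, (φ ⟨Ψ (-branch b (φ z)) z, hmem z _ (hlt _)⟩ : ℂ) = 1 := fun z => by
    have h1 := exp_branch hb (hnorm (φ z))
    rw [hph z _ (hlt _)]
    generalize branch b (φ z) = θ at h1 ⊢
    rw [← h1, ← Complex.exp_add]
    simp
  have hbase : ∀ (w : Metric.sphere (0 : ℂ) 1) (y : S), (φ y : ℂ) = 1 →
      φ ⟨Ψ (branch b w) y, hmem y _ (abs_branch_lt b w)⟩ = w := fun w y hy => by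
    apply Subtype.ext
    rw [hph y _ (abs_branch_lt b w), hy, mul_one, exp_branch hb (hnorm w)]
  let W : Set (Metric.sphere (0 : ℂ) 1) := {w | (w : ℂ) / b ∈ Complex.slitPlane}
  have hWopen : IsOpen W := by
    have : Continuous fun w : Metric.sphere (0 : ℂ) 1 => (w : ℂ) / b :=
      continuous_subtype_val.div_const _
    exact Complex.isOpen_slitPlane.preimage this
  have hbr : Continuous fun w : W => branch b (w.1 : ℂ) :=
    (continuousOn_branch b).comp_continuous (continuous_subtype_val.comp continuous_subtype_val)
      fun w => w.2
  refine ⟨W, hWopen, by simp [W, hb0], ?_, ?_⟩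
  · exact
    { toFun := fun z => (⟨φ z.1, z.2⟩, ⟨⟨Ψ (-branch b (φ z.1)) z.1, hmem z.1 _ (hlt _)⟩, hfib z.1⟩)
      invFun := fun q => ⟨⟨Ψ (branch b q.1.1) q.2.1, hmem q.2.1 _ (abs_branch_lt b _)⟩, by
        rw [mem_preimage, hbase q.1.1 q.2.1 q.2.2]; exact q.1.2⟩
      left_inv := fun z => by
        apply Subtype.ext
        apply Subtype.ext
        have := hinv z.1 _ (hlt (φ z.1))
        simpa using this
      right_inv := fun q => by
        have h1 := hbase q.1.1 q.2.1 q.2.2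
        refine Prod.ext (Subtype.ext h1) (Subtype.ext (Subtype.ext ?_))
        dsimp only
        rw [h1]
        exact hinv q.2.1 _ (abs_branch_lt b _)
      continuous_toFun := by
        have hz : Continuous fun z : (φ ⁻¹' W) => (⟨φ z.1, z.2⟩ : W) :=
          (hφc.comp continuous_subtype_val).subtype_mk _
        refine hz.prodMk (Continuous.subtype_mk (Continuous.subtype_mk ?_ _) _)
        refine hΨc.comp_continuous (f := fun z : (φ ⁻¹' W) => (-branch b (φ z.1), (z.1.1 : E)))
          ((hbr.comp hz).neg.prodMk (continuous_subtype_val.comp continuous_subtype_val)) ?_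
        exact fun z => ⟨hlt _, (hS _).1 z.1.2⟩
      continuous_invFun := by
        refine Continuous.subtype_mk (Continuous.subtype_mk ?_ _) _
        refine hΨc.comp_continuous
          (f := fun q : W × {y : S // (φ y : ℂ) = 1} => (branch b q.1.1, (q.2.1.1 : E)))
          ((hbr.comp continuous_fst).prodMk (continuous_subtype_val.comp
            (continuous_subtype_val.comp continuous_snd))) ?_
        exact fun q => ⟨abs_branch_lt b _, (hS _).1 q.2.1.2⟩ }
  · exact fun z => rfl

end F2
end Milnor

/-! ### The Milnor fibration -/

theorem stmt_3 (n : ℕ) (hn : 1 ≤ n)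
    (U : Set (EuclideanSpace ℂ (Fin n))) (hU : IsOpen U)
    (h0U : (0 : EuclideanSpace ℂ (Fin n)) ∈ U)
    (f : EuclideanSpace ℂ (Fin n) → ℂ) (hf : DifferentiableOn ℂ f U) (hf0 : f 0 = 0)
    (hfnz : ∀ W ∈ nhds (0 : EuclideanSpace ℂ (Fin n)), ∃ x ∈ W ∩ U, f x ≠ 0) :
    ∃ ε₀ > (0 : ℝ), Metric.closedBall (0 : EuclideanSpace ℂ (Fin n)) ε₀ ⊆ U ∧
      ∀ ε : ℝ, 0 < ε → ε ≤ ε₀ →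
      ∃ φ : (Metric.sphere (0 : EuclideanSpace ℂ (Fin n)) ε \ {x ∈ U | f x = 0} : Set _) →
          Metric.sphere (0 : ℂ) 1,
        (∀ x, (φ x : ℂ) =
            f (x.1 : EuclideanSpace ℂ (Fin n)) / ‖f (x.1 : EuclideanSpace ℂ (Fin n))‖) ∧
        IsLocTrivFib φ := by
  have ha : AnalyticAt ℂ f 0 := Milnor.analyticAt_of_differentiableOn hU h0U hf
  obtain ⟨ρ, hρ, hmil⟩ := Milnor.milnor_lemma ha hf0
  obtain ⟨r₁, hr₁, han⟩ := Metric.eventually_nhds_iff_ball.1 ha.eventually_analyticAt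
  obtain ⟨r₂, hr₂, hUr⟩ := Metric.isOpen_iff.1 hU 0 h0U
  obtain ⟨R, hR, hRρ, hR₁, hR₂⟩ : ∃ R > 0, R ≤ ρ ∧ R ≤ r₁ ∧ R ≤ r₂ :=
    ⟨min ρ (min r₁ r₂), lt_min hρ (lt_min hr₁ hr₂), min_le_left _ _,
      (min_le_right _ _).trans (min_le_left _ _), (min_le_right _ _).trans (min_le_right _ _)⟩
  have han' : ∀ z, ‖z‖ < R → AnalyticAt ℂ f z := fun z hz => han z (by simp; linarith)
  have hden : ∀ z, ‖z‖ < R → f z ≠ 0 → 0 < Milnor.den f z := fun z hz hfz =>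
    Milnor.den_pos (hmil z (by linarith) hfz)
  have hRU : ∀ z : EuclideanSpace ℂ (Fin n), ‖z‖ < R → z ∈ U := fun z hz =>
    hUr (by simp; linarith)
  refine ⟨R / 2, by positivity, fun z hz => hRU z ?_, fun ε hε hεR => ?_⟩
  · simp at hz; linarith
  have hεR' : ε < R := by linarith
  obtain ⟨Ψ, hΨ, hΨc⟩ := Milnor.exists_milnor_flow han' hden hεR'
  have hS : ∀ x, x ∈ (Metric.sphere (0 : EuclideanSpace ℂ (Fin n)) ε \ {x ∈ U | f x = 0}) ↔
      ‖x‖ = ε ∧ f x ≠ 0 := by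
    intro x
    simp only [Set.mem_sdiff, mem_sphere_zero_iff_norm, Set.mem_ofPred_eq, not_and]
    exact ⟨fun h => ⟨h.1, h.2 (hRU x (by rw [h.1]; exact hεR'))⟩, fun h => ⟨h.1, fun _ => h.2⟩⟩
  refine ⟨fun x => ⟨f x.1 / ‖f x.1‖, ?_⟩, fun x => rfl,
    Milnor.isLocTrivFib_of_flow hS (fun x hx => ?_) (fun x => rfl) hΨ hΨc⟩
  · have := ((hS _).1 x.2).2
    simp [this]
  · exact (han' x (by rw [((hS x).1 hx).1]; exact hεR')).continuousAt.continuousWithinAt
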